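/- arXiv:0902.4589 — 3 statements merged into one kernel-verified Lean document; each statement's English description precedes it below -/
import Mathlib

section
/- For every positive integer m ≥ 4, the maximum of γ(K), as K runs through all non-simplicial polyhedral cones with exactly m extreme rays (i.e., all K ∈ P(m,n) with 3 ≤ n < m), equals m² − 3m + 3 if m is even and m² − 3m + 2 if m is odd. That is: every K-primitive matrix A on such a cone K satisfies γ(A) ≤ m² − 3m + 3 (m even) resp. γ(A) ≤ m² − 3m + 2 (m odd), and these bounds are attained by some such K and K-primitive A. -/
open Matrix Set Real

noncomputable section

/-- A proper cone in `ℝ^n`: a closed convex cone that is pointed and full. -/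
def IsProperCone {n : ℕ} (K : Set (Fin n → ℝ)) : Prop :=
  IsClosed K ∧ (∀ x ∈ K, ∀ y ∈ K, x + y ∈ K) ∧
    (∀ (c : ℝ), 0 ≤ c → ∀ x ∈ K, c • x ∈ K) ∧
    K ∩ (-K) = {0} ∧ (interior K).Nonempty

/-- The positive hull (cone generated by) finitely many vectors. -/
def ConeGen {n m : ℕ} (y : Fin m → Fin n → ℝ) : Set (Fin n → ℝ) :=
  {x | ∃ c : Fin m → ℝ, (∀ j, 0 ≤ c j) ∧ x = ∑ j, c j • y j}

/-- A polyhedral cone: a proper cone that is the positive hull of finitely many vectors. -/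
def IsPolyhedralCone {n : ℕ} (K : Set (Fin n → ℝ)) : Prop :=
  IsProperCone K ∧ ∃ (m : ℕ) (y : Fin m → Fin n → ℝ), K = ConeGen y

/-- `A` is `K`-nonnegative: `A K ⊆ K`. -/
def KNonneg {n : ℕ} (K : Set (Fin n → ℝ)) (A : Matrix (Fin n) (Fin n) ℝ) : Prop :=
  ∀ x ∈ K, A.mulVec x ∈ K

/-- `A` is `K`-positive: `A` maps `K \ {0}` into the interior of `K`. -/
def KPositive {n : ℕ} (K : Set (Fin n → ℝ)) (A : Matrix (Fin n) (Fin n) ℝ) : Prop :=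
  ∀ x ∈ K, x ≠ 0 → A.mulVec x ∈ interior K

/-- `A` is `K`-primitive: `A` is `K`-nonnegative and some power of `A` is `K`-positive. -/
def KPrimitive {n : ℕ} (K : Set (Fin n → ℝ)) (A : Matrix (Fin n) (Fin n) ℝ) : Prop :=
  KNonneg K A ∧ ∃ k : ℕ, 0 < k ∧ KPositive K (A ^ k)

/-- The exponent `γ(A)` of a `K`-primitive matrix: the least `k ≥ 1` with `A^k` `K`-positive. -/
def expnt {n : ℕ} (K : Set (Fin n → ℝ)) (A : Matrix (Fin n) (Fin n) ℝ) : ℕ :=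
  sInf {k : ℕ | 0 < k ∧ KPositive K (A ^ k)}

/-- `x` is an extreme vector of `K`. -/
def IsExtremeVec {n : ℕ} (K : Set (Fin n → ℝ)) (x : Fin n → ℝ) : Prop :=
  x ∈ K ∧ x ≠ 0 ∧ ∀ y ∈ K, ∀ z ∈ K, x = y + z →
    (∃ a : ℝ, 0 ≤ a ∧ y = a • x) ∧ (∃ b : ℝ, 0 ≤ b ∧ z = b • x)

/-- The set of extreme rays of `K`. -/
def ExtremeRays {n : ℕ} (K : Set (Fin n → ℝ)) : Set (Set (Fin n → ℝ)) :=
  {R | ∃ x, IsExtremeVec K x ∧ R = {y | ∃ c : ℝ, 0 ≤ c ∧ y = c • x}}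

/-- `K ∈ P(m,n)`: an `n`-dimensional polyhedral cone in `ℝ^n` with exactly `m` extreme rays.
(A proper cone in `ℝ^n` has nonempty interior, hence is automatically `n`-dimensional.) -/
def MemP {n : ℕ} (m : ℕ) (K : Set (Fin n → ℝ)) : Prop :=
  IsPolyhedralCone K ∧ (ExtremeRays K).ncard = m

/-- A face of a cone `K`. -/
def IsFace {n : ℕ} (K F : Set (Fin n → ℝ)) : Prop :=
  0 ∈ F ∧ F ⊆ K ∧ (∀ x ∈ F, ∀ y ∈ F, x + y ∈ F) ∧
    (∀ (c : ℝ), 0 ≤ c → ∀ x ∈ F, c • x ∈ F) ∧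
    ∀ x ∈ F, ∀ y ∈ K, x - y ∈ K → y ∈ F

/-- `A` is `K`-irreducible: `A` is `K`-nonnegative and leaves invariant no nontrivial face. -/
def KIrreducible {n : ℕ} (K : Set (Fin n → ℝ)) (A : Matrix (Fin n) (Fin n) ℝ) : Prop :=
  KNonneg K A ∧ ∀ F : Set (Fin n → ℝ), IsFace K F → (∀ x ∈ F, A.mulVec x ∈ F) →
    F = ({0} : Set (Fin n → ℝ)) ∨ F = K

namespace MaxExp

/-- `y` dominates a positive multiple of `z` in the order of `K`. -/
def Dom {n : ℕ} (K : Set (Fin n → ℝ)) (y z : Fin n → ℝ) : Prop :=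
  ∃ c : ℝ, 0 < c ∧ y - c • z ∈ K

section basic
variable {n : ℕ} {K : Set (Fin n → ℝ)}

theorem K_add (hK : IsProperCone K) {x y : Fin n → ℝ} (hx : x ∈ K) (hy : y ∈ K) : x + y ∈ K :=
  hK.2.1 x hx y hy

theorem K_smul (hK : IsProperCone K) {c : ℝ} (hc : 0 ≤ c) {x : Fin n → ℝ} (hx : x ∈ K) :
    c • x ∈ K := hK.2.2.1 c hc x hx

theorem K_zero (hK : IsProperCone K) : (0 : Fin n → ℝ) ∈ K := by
  have : (0 : Fin n → ℝ) ∈ K ∩ (-K) := by rw [hK.2.2.2.1]; rfl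
  exact this.1

theorem K_pointed (hK : IsProperCone K) {x : Fin n → ℝ} (hx : x ∈ K) (hx' : -x ∈ K) : x = 0 := by
  have : x ∈ K ∩ (-K) := ⟨hx, hx'⟩
  rw [hK.2.2.2.1] at this; exact this

theorem K_sum (hK : IsProperCone K) {ι : Type*} (s : Finset ι) (f : ι → Fin n → ℝ)
    (h : ∀ i ∈ s, f i ∈ K) : ∑ i ∈ s, f i ∈ K := by
  classical
  induction s using Finset.induction_on with
  | empty => simpa using K_zero hK
  | insert a s ha ih =>
    rw [Finset.sum_insert ha]
    exact K_add hK (h a (by simp)) (ih fun i hi => h i (by simp [hi]))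

/-- If a sum of elements of `K` vanishes then every term vanishes. -/
theorem K_sum_zero (hK : IsProperCone K) {ι : Type*} (s : Finset ι) (f : ι → Fin n → ℝ)
    (h : ∀ i ∈ s, f i ∈ K) (h0 : ∑ i ∈ s, f i = 0) : ∀ i ∈ s, f i = 0 := by
  classical
  intro i hi
  apply K_pointed hK (h i hi)
  rw [← Finset.add_sum_erase s f hi] at h0
  rw [neg_eq_of_add_eq_zero_right h0]
  exact K_sum hK _ _ fun j hj => h j (Finset.mem_of_mem_erase hj)

theorem int_add (hK : IsProperCone K) {u y : Fin n → ℝ} (hu : u ∈ interior K) (hy : y ∈ K) :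
    u + y ∈ interior K := by
  rw [mem_interior] at hu ⊢
  obtain ⟨t, ht, hto, hut⟩ := hu
  refine ⟨(fun x => x - y) ⁻¹' t, ?_, hto.preimage (by fun_prop), by simpa using hut⟩
  intro x hx
  have := K_add hK (ht hx) hy
  simpa using this

theorem int_smul (hK : IsProperCone K) {u : Fin n → ℝ} (hu : u ∈ interior K) {c : ℝ}
    (hc : 0 < c) : c • u ∈ interior K := by
  rw [mem_interior] at hu ⊢
  obtain ⟨t, ht, hto, hut⟩ := hu
  refine ⟨(fun x => c⁻¹ • x) ⁻¹' t, ?_, hto.preimage (by fun_prop), ?_⟩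
  · intro x hx
    have := K_smul hK hc.le (ht hx)
    simpa [smul_smul, hc.ne'] using this
  · simpa [smul_smul, hc.ne'] using hut

theorem int_dom {u : Fin n → ℝ} (hu : u ∈ interior K) (z : Fin n → ℝ) : Dom K u z := by
  have hc : Filter.Tendsto (fun c : ℝ => u - c • z) (nhds 0) (nhds u) := by
    have : Continuous (fun c : ℝ => u - c • z) := by fun_prop
    simpa using this.tendsto 0
  have h1 := hc.eventually (mem_interior_iff_mem_nhds.1 hu)
  have h2 : ∀ᶠ c : ℝ in nhdsWithin 0 (Set.Ioi 0), u - c • z ∈ K := nhdsWithin_le_nhds h1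
  have h3 : ∀ᶠ c : ℝ in nhdsWithin 0 (Set.Ioi 0), 0 < c := self_mem_nhdsWithin
  obtain ⟨c, h4, h5⟩ := (h2.and h3).exists
  exact ⟨c, h5, h4⟩

theorem Dom.int (hK : IsProperCone K) {y u : Fin n → ℝ} (h : Dom K y u) (hu : u ∈ interior K) :
    y ∈ interior K := by
  obtain ⟨c, hc, h⟩ := h
  have := int_add hK (int_smul hK hu hc) h
  simpa using this

theorem Dom.trans (hK : IsProperCone K) {x y z : Fin n → ℝ} (h : Dom K x y) (h' : Dom K y z) :
    Dom K x z := by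
  obtain ⟨c, hc, h⟩ := h
  obtain ⟨d, hd, h'⟩ := h'
  refine ⟨c * d, by positivity, ?_⟩
  have := K_add hK h (K_smul hK hc.le h')
  convert this using 1
  rw [smul_sub, smul_smul]; abel

theorem Dom.refl (hK : IsProperCone K) (x : Fin n → ℝ) : Dom K x x :=
  ⟨1, one_pos, by simpa using K_zero hK⟩

theorem Dom.add_left (hK : IsProperCone K) {x y z : Fin n → ℝ} (h : Dom K x z) (hy : y ∈ K) :
    Dom K (x + y) z := by
  obtain ⟨c, hc, h⟩ := h
  refine ⟨c, hc, ?_⟩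
  have := K_add hK h hy
  convert this using 1; abel

theorem Dom.smul_right (hK : IsProperCone K) {x z : Fin n → ℝ} (h : Dom K x z) {a : ℝ}
    (hx : x ∈ K) (ha : 0 ≤ a) : Dom K x (a • z) := by
  obtain ⟨c, hc, h⟩ := h
  rcases ha.eq_or_lt with rfl | ha
  · exact ⟨1, one_pos, by simpa using hx⟩
  · refine ⟨c / a, by positivity, ?_⟩
    rw [smul_smul, div_mul_cancel₀ _ ha.ne']; exact h

theorem Dom.add_right (hK : IsProperCone K) {x y z : Fin n → ℝ} (h : Dom K x y)
    (h' : Dom K x z) (hx : x ∈ K) (hy : y ∈ K) (hz : z ∈ K) : Dom K x (y + z) := by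
  obtain ⟨c, hc, h⟩ := h
  obtain ⟨d, hd, h'⟩ := h'
  refine ⟨c * d / (c + d), by positivity, ?_⟩
  have := K_add hK (K_smul hK (c := d / (c + d)) (by positivity) h)
    (K_smul hK (c := c / (c + d)) (by positivity) h')
  convert this using 1
  ext i
  simp only [Pi.sub_apply, Pi.add_apply, Pi.smul_apply, smul_eq_mul]
  field_simp
  ring

theorem Dom.sum_right (hK : IsProperCone K) {ι : Type*} (s : Finset ι) (f : ι → Fin n → ℝ)
    {x : Fin n → ℝ} (hx : x ∈ K) (hf : ∀ i ∈ s, f i ∈ K) (h : ∀ i ∈ s, Dom K x (f i)) :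
    Dom K x (∑ i ∈ s, f i) := by
  classical
  induction s using Finset.induction_on with
  | empty => exact ⟨1, one_pos, by simpa using hx⟩
  | insert a s ha ih =>
    rw [Finset.sum_insert ha]
    exact (h a (by simp)).add_right hK (ih (fun i hi => hf i (by simp [hi]))
      (fun i hi => h i (by simp [hi]))) hx (hf a (by simp))
      (K_sum hK _ _ fun i hi => hf i (by simp [hi]))

variable {A : Matrix (Fin n) (Fin n) ℝ}

theorem pow_mem (hA : KNonneg K A) (k : ℕ) {x : Fin n → ℝ} (hx : x ∈ K) : A ^ k *ᵥ x ∈ K := by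
  induction k with
  | zero => simpa using hx
  | succ k ih =>
    rw [pow_succ', ← Matrix.mulVec_mulVec]; exact hA _ ih

theorem Dom.pow (hA : KNonneg K A) (k : ℕ) {x y : Fin n → ℝ} (h : Dom K x y) :
    Dom K (A ^ k *ᵥ x) (A ^ k *ᵥ y) := by
  obtain ⟨c, hc, h⟩ := h
  refine ⟨c, hc, ?_⟩
  rw [← Matrix.mulVec_smul, ← Matrix.mulVec_sub]
  exact pow_mem hA k h

theorem pow_add_mulVec (A : Matrix (Fin n) (Fin n) ℝ) (k l : ℕ) (x : Fin n → ℝ) :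
    A ^ (k + l) *ᵥ x = A ^ k *ᵥ (A ^ l *ᵥ x) := by
  rw [pow_add, Matrix.mulVec_mulVec]

/-- Composition of domination along powers. -/
theorem Dom.comp (hK : IsProperCone K) (hA : KNonneg K A) {k l : ℕ} {x y z : Fin n → ℝ}
    (h : Dom K (A ^ k *ᵥ x) y) (h' : Dom K (A ^ l *ᵥ y) z) : Dom K (A ^ (k + l) *ᵥ x) z := by
  rw [add_comm, pow_add_mulVec]
  exact (h.pow hA l).trans hK h'

theorem Dom.iter (hK : IsProperCone K) (hA : KNonneg K A) {s : ℕ} {x : Fin n → ℝ}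
    (h : Dom K (A ^ s *ᵥ x) x) (k : ℕ) : Dom K (A ^ (s * k) *ᵥ x) x := by
  induction k with
  | zero => simpa using Dom.refl hK x
  | succ k ih => rw [mul_add, mul_one]; exact ih.comp hK hA h

theorem Kpos_ne (hn : 0 < n) (hK : IsProperCone K) {u : Fin n → ℝ} (hu : u ∈ interior K) :
    u ≠ 0 := by
  rintro rfl
  obtain ⟨c, hc, h⟩ := int_dom hu (fun _ => (1 : ℝ))
  obtain ⟨d, hd, h'⟩ := int_dom hu (fun _ => (-1 : ℝ))
  have h1 := K_smul hK (inv_pos.2 hc).le h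
  have h2 := K_smul hK (inv_pos.2 hd).le h'
  have h3 := K_pointed hK h2 (by
    convert h1 using 1
    ext i; simp [hc.ne', hd.ne'])
  have := congrFun h3 ⟨0, hn⟩
  simp [hd.ne'] at this

theorem prim_int (hK : IsProperCone K) (hA : KPrimitive K A) (hn : 0 < n)
    {u : Fin n → ℝ} (hu : u ∈ interior K) : A *ᵥ u ∈ interior K := by
  obtain ⟨hA, p, hp, hpos⟩ := hA
  have h1 := hpos u (interior_subset hu) (Kpos_ne hn hK hu)
  obtain ⟨q, rfl⟩ : ∃ q, p = 1 + q := ⟨p - 1, by omega⟩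
  rw [pow_add_mulVec] at h1
  have := (int_dom hu (A ^ q *ᵥ u)).pow hA 1
  have := this.int hK h1
  simpa using this

theorem prim_pow_int (hK : IsProperCone K) (hA : KPrimitive K A) (hn : 0 < n)
    {u : Fin n → ℝ} (hu : u ∈ interior K) (k : ℕ) : A ^ k *ᵥ u ∈ interior K := by
  induction k with
  | zero => simpa using hu
  | succ k ih =>
    rw [pow_succ', ← Matrix.mulVec_mulVec]; exact prim_int hK hA hn ih

theorem prim_large (hK : IsProperCone K) (hA : KPrimitive K A) (hn : 0 < n) :
    ∃ p, 0 < p ∧ ∀ q, p ≤ q → ∀ x ∈ K, x ≠ 0 → A ^ q *ᵥ x ∈ interior K := by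
  obtain ⟨p, hp, hpos⟩ := hA.2
  refine ⟨p, hp, fun q hq x hx hx0 => ?_⟩
  obtain ⟨r, rfl⟩ := Nat.exists_eq_add_of_le hq
  rw [add_comm, pow_add_mulVec]
  exact prim_pow_int hK hA hn (hpos x hx hx0) r

/-- An eigenvector in `K` of a power of a primitive matrix is interior. -/
theorem eig_int (hK : IsProperCone K) (hA : KPrimitive K A) (hn : 0 < n) {s : ℕ} (hs : 0 < s)
    {x : Fin n → ℝ} (hx : x ∈ K) (hx0 : x ≠ 0) {c : ℝ} (hc : 0 ≤ c)
    (h : A ^ s *ᵥ x = c • x) : x ∈ interior K := by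
  obtain ⟨p, hp, hpos⟩ := prim_large hK hA hn
  have h1 : ∀ k, A ^ (s * k) *ᵥ x = c ^ k • x := by
    intro k
    induction k with
    | zero => simp
    | succ k ih =>
      rw [mul_add, mul_one, pow_add_mulVec, h, Matrix.mulVec_smul, ih, smul_smul, pow_succ']
  have h2 := hpos (s * p) (by nlinarith) x hx hx0
  rw [h1] at h2
  have hcp : 0 < c ^ p := by
    rcases (pow_nonneg hc p).eq_or_lt with h0 | h0
    · rw [← h0, zero_smul] at h2; exact absurd rfl (Kpos_ne hn hK h2)
    · exact h0
  have := int_smul hK h2 (inv_pos.2 hcp)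
  rwa [smul_smul, inv_mul_cancel₀ hcp.ne', one_smul] at this

/-- Circuit lemma. -/
theorem circuit (hK : IsProperCone K) (hA : KPrimitive K A) (hn : 0 < n) {s : ℕ} (hs : 0 < s)
    {z : Fin n → ℝ} (hz : z ∈ K) (hz0 : z ≠ 0) (h : Dom K (A ^ s *ᵥ z) z) :
    A ^ (s * (n - 1)) *ᵥ z ∈ interior K := by
  obtain ⟨p, hp, hpos⟩ := prim_large hK hA hn
  have hdom : ∀ j, j < n → Dom K (A ^ (s * (n - 1)) *ᵥ z) (A ^ (s * j) *ᵥ z) := by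
    intro j hj
    obtain ⟨r, hr⟩ := Nat.exists_eq_add_of_le (show j ≤ n - 1 by omega)
    rw [hr, mul_add, pow_add_mulVec]
    exact (h.iter hK hA.1 r).pow hA.1 (s * j)
  set y := A ^ (s * (n - 1)) *ᵥ z with hy
  have hyK : y ∈ K := pow_mem hA.1 _ hz
  have hB : (A ^ s) ^ p = ∑ j ∈ Finset.range n,
      ((Polynomial.X ^ p %ₘ (A ^ s).charpoly).coeff j) • (A ^ s) ^ j := by
    rw [Matrix.pow_eq_aeval_mod_charpoly, Polynomial.aeval_eq_sum_range' (n := n)]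
    by_cases h0 : Polynomial.X ^ p %ₘ (A ^ s).charpoly = 0
    · rw [h0]; simpa using hn
    · rw [Polynomial.natDegree_lt_iff_degree_lt h0]
      have := Polynomial.degree_modByMonic_lt (Polynomial.X ^ p : Polynomial ℝ)
        (A ^ s).charpoly_monic
      rw [Matrix.charpoly_degree_eq_dim, Fintype.card_fin] at this
      exact this
  set a := fun j => (Polynomial.X ^ p %ₘ (A ^ s).charpoly).coeff j
  have hsum : A ^ (s * p) *ᵥ z = ∑ j ∈ Finset.range n, a j • (A ^ (s * j) *ᵥ z) := by
    rw [pow_mul, hB, Matrix.sum_mulVec]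
    refine Finset.sum_congr rfl fun j _ => ?_
    rw [Matrix.smul_mulVec, pow_mul]
  have h_int := hpos (s * p) (by nlinarith) z hz hz0
  have hd : Dom K y (A ^ (s * p) *ᵥ z) := by
    have h1 : Dom K y (∑ j ∈ Finset.range n, |a j| • (A ^ (s * j) *ᵥ z)) := by
      refine Dom.sum_right hK _ _ hyK (fun j _ => K_smul hK (abs_nonneg _) (pow_mem hA.1 _ hz)) ?_
      intro j hj
      exact (hdom j (Finset.mem_range.1 hj)).smul_right hK hyK (abs_nonneg _)
    obtain ⟨c, hc, h1⟩ := h1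
    refine ⟨c, hc, ?_⟩
    have h2 : ∑ j ∈ Finset.range n, (|a j| - a j) • (A ^ (s * j) *ᵥ z) ∈ K :=
      K_sum hK _ _ fun j _ => K_smul hK (sub_nonneg.2 (le_abs_self _)) (pow_mem hA.1 _ hz)
    have := K_add hK h1 (K_smul hK hc.le h2)
    rw [hsum]
    convert this using 1
    simp only [sub_smul, Finset.sum_sub_distrib, smul_sub]
    abel
  exact hd.int hK h_int

theorem gen_mem {m : ℕ} (x : Fin m → Fin n → ℝ) (i : Fin m) : x i ∈ ConeGen x := by
  refine ⟨Pi.single i 1, fun j => ?_, ?_⟩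
  · by_cases h : j = i
    · subst h; simp
    · simp [h]
  · rw [Finset.sum_eq_single i]
    · simp
    · intro b _ hb; simp [hb]
    · simp

theorem gen_dom (hK : IsProperCone K) {m : ℕ} {x : Fin m → Fin n → ℝ} (hx : K = ConeGen x)
    {w : Fin n → ℝ} (hw : w ∈ K) (h : ∀ i, Dom K w (x i)) : w ∈ interior K := by
  obtain ⟨u, hu⟩ := hK.2.2.2.2
  have h1 : u ∈ ConeGen x := hx ▸ interior_subset hu
  obtain ⟨c, hc, hcu⟩ := h1
  have hxK : ∀ i, x i ∈ K := fun i => hx ▸ gen_mem x i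
  have : Dom K w u := by
    rw [hcu]
    exact Dom.sum_right hK _ _ hw (fun i _ => K_smul hK (hc i) (hxK i))
      fun i _ => (h i).smul_right hK hw (hc i)
  exact this.int hK hu

theorem gen_pos (hK : IsProperCone K) {m : ℕ} {x : Fin m → Fin n → ℝ} (hx : K = ConeGen x)
    {B : Matrix (Fin n) (Fin n) ℝ} (h : ∀ i, B *ᵥ x i ∈ interior K) : KPositive K B := by
  intro y hy hy0
  have h1 : y ∈ ConeGen x := hx ▸ hy
  obtain ⟨c, hc, rfl⟩ := h1
  obtain ⟨i, hi⟩ : ∃ i, 0 < c i := by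
    by_contra! hcon
    exact hy0 (Finset.sum_eq_zero fun i _ => by rw [le_antisymm (hcon i) (hc i), zero_smul])
  have h2 : B *ᵥ (∑ j, c j • x j) = ∑ j, c j • (B *ᵥ x j) := by
    rw [Matrix.mulVec_sum]; simp [Matrix.mulVec_smul]
  rw [show B.mulVec (∑ j, c j • x j) = _ from h2, ← Finset.add_sum_erase _ _ (Finset.mem_univ i)]
  exact int_add hK (int_smul hK (h i) hi)
    (K_sum hK _ _ fun j _ => K_smul hK (hc j) (interior_subset (h j)))

end basic

section gens
variable {n : ℕ} {K : Set (Fin n → ℝ)}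

theorem gen_subset (hK : IsProperCone K) {m : ℕ} {y : Fin m → Fin n → ℝ} (hy : ∀ i, y i ∈ K) :
    ConeGen y ⊆ K := by
  rintro _ ⟨c, hc, rfl⟩
  exact K_sum hK _ _ fun i _ => K_smul hK (hc i) (hy i)

theorem gen_sum_mem {m : ℕ} (y : Fin m → Fin n → ℝ) {ι : Type*} (s : Finset ι)
    (f : ι → Fin n → ℝ) (h : ∀ i ∈ s, f i ∈ ConeGen y) : ∑ i ∈ s, f i ∈ ConeGen y := by
  classical
  induction s using Finset.induction_on with
  | empty => exact ⟨0, by simp, by simp⟩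
  | insert a s ha ih =>
    rw [Finset.sum_insert ha]
    obtain ⟨c, hc, h1⟩ := h a (by simp)
    obtain ⟨d, hd, h2⟩ := ih fun i hi => h i (by simp [hi])
    refine ⟨c + d, fun j => add_nonneg (hc j) (hd j), ?_⟩
    rw [h1, h2]
    simp [add_smul, Finset.sum_add_distrib]

theorem gen_smul_mem {m : ℕ} (y : Fin m → Fin n → ℝ) {c : ℝ} (hc : 0 ≤ c) {x : Fin n → ℝ}
    (hx : x ∈ ConeGen y) : c • x ∈ ConeGen y := by
  obtain ⟨d, hd, rfl⟩ := hx
  refine ⟨fun j => c * d j, fun j => mul_nonneg hc (hd j), ?_⟩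
  simp [Finset.smul_sum, smul_smul]

theorem gen_eq (hK : IsProperCone K) {m k : ℕ} {x : Fin m → Fin n → ℝ} {y : Fin k → Fin n → ℝ}
    (hx : K = ConeGen x) (hy : ∀ i, y i ∈ K) (h : ∀ l, x l ∈ ConeGen y) : K = ConeGen y := by
  apply Set.Subset.antisymm _ (gen_subset hK hy)
  intro w hw
  have h1 : w ∈ ConeGen x := hx ▸ hw
  obtain ⟨c, hc, rfl⟩ := h1
  exact gen_sum_mem _ _ _ fun i _ => gen_smul_mem _ (hc i) (h i)

theorem gen_rep (hK : IsProperCone K) {m : ℕ} {x : Fin m → Fin n → ℝ} (hx : K = ConeGen x)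
    {w : Fin n → ℝ} (hw : w ∈ K) :
    ∃ c : Fin m → ℝ, (∀ j, 0 ≤ c j) ∧ w = ∑ j, c j • x j ∧ ∀ l, c l ≠ 0 → Dom K w (x l) := by
  have h1 : w ∈ ConeGen x := hx ▸ hw
  obtain ⟨c, hc, h⟩ := h1
  refine ⟨c, hc, h, fun l hl => ⟨c l, lt_of_le_of_ne (hc l) (Ne.symm hl), ?_⟩⟩
  rw [h, ← Finset.add_sum_erase _ _ (Finset.mem_univ l), add_sub_cancel_left]
  exact K_sum hK _ _ fun j _ => K_smul hK (hc j) (hx ▸ gen_mem x j)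

theorem exists_gen {m : ℕ} (hm : 0 < m) (h : MemP m K) :
    ∃ x : Fin m → Fin n → ℝ, K = ConeGen x ∧ ∀ i, x i ≠ 0 := by
  classical
  obtain ⟨⟨hK, hgen⟩, hcard⟩ := h
  -- a minimal generating family
  have hmin : ∃ y : Fin (Nat.find hgen) → Fin n → ℝ, K = ConeGen y := Nat.find_spec hgen
  have hlt : ∀ k < Nat.find hgen, ¬ ∃ y : Fin k → Fin n → ℝ, K = ConeGen y :=
    fun k hk => Nat.find_min hgen hk
  generalize Nat.find hgen = k at hmin hlt
  obtain ⟨y, hy⟩ := hmin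
  have hyK : ∀ i, y i ∈ K := fun i => hy ▸ gen_mem y i
  have hext : ∀ i, IsExtremeVec K (y i) := by
    intro i
    obtain ⟨k, rfl⟩ : ∃ k', k = k' + 1 := ⟨k - 1, by have := i.pos; omega⟩
    have hred : y i ∉ ConeGen (fun j => y (i.succAbove j)) := by
      intro hmem
      refine hlt k (by omega) ⟨fun j => y (i.succAbove j), gen_eq hK hy (fun j => hyK _) ?_⟩
      intro l
      by_cases hl : l = i
      · rw [hl]; exact hmem
      · obtain ⟨j, rfl⟩ := Fin.exists_succAbove_eq hl
        exact gen_mem (fun j => y (i.succAbove j)) j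
    have hi0 : y i ≠ 0 := by
      intro h0
      exact hred ⟨0, by simp, by simp [h0]⟩
    refine ⟨hyK i, hi0, ?_⟩
    intro u hu w hw huw
    have hu' : u ∈ ConeGen y := hy ▸ hu
    have hw' : w ∈ ConeGen y := hy ▸ hw
    obtain ⟨c, hc, hcu⟩ := hu'
    obtain ⟨d, hd, hdw⟩ := hw'
    rw [Fin.sum_univ_succAbove _ i] at hcu hdw
    have hrest : (1 - c i - d i) • y i
        = ∑ j, (c (i.succAbove j) + d (i.succAbove j)) • y (i.succAbove j) := by
      simp only [add_smul, Finset.sum_add_distrib, sub_smul, one_smul]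
      have : y i = (c i • y i + ∑ j, c (i.succAbove j) • y (i.succAbove j)) +
        (d i • y i + ∑ j, d (i.succAbove j) • y (i.succAbove j)) := by
          rw [← hcu, ← hdw]; exact huw
      nth_rewrite 1 [this]
      abel
    have hterm : ∀ j ∈ Finset.univ,
        (c (i.succAbove j) + d (i.succAbove j)) • y (i.succAbove j) ∈ K :=
      fun j _ => K_smul hK (add_nonneg (hc _) (hd _)) (hyK _)
    rcases lt_trichotomy (c i + d i) 1 with hlt' | heq | hgt
    · exfalso
      apply hred
      have h1 : 0 < 1 - c i - d i := by linarith
      have h2 : y i = (1 - c i - d i)⁻¹ • ((1 - c i - d i) • y i) := by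
        rw [smul_smul, inv_mul_cancel₀ h1.ne', one_smul]
      rw [h2, hrest]
      exact gen_smul_mem _ (inv_pos.2 h1).le ⟨_, fun j => add_nonneg (hc _) (hd _), rfl⟩
    · have h1 : 1 - c i - d i = 0 := by linarith
      rw [h1, zero_smul] at hrest
      have hz := K_sum_zero hK _ _ hterm hrest.symm
      have hz' : ∀ j, c (i.succAbove j) • y (i.succAbove j) = 0 ∧
          d (i.succAbove j) • y (i.succAbove j) = 0 := by
        intro j
        have h2 := hz j (Finset.mem_univ _)
        rw [add_smul] at h2
        have h3 : c (i.succAbove j) • y (i.succAbove j) = 0 := by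
          apply K_pointed hK (K_smul hK (hc _) (hyK _))
          rw [neg_eq_of_add_eq_zero_right h2]
          exact K_smul hK (hd _) (hyK _)
        rw [h3, zero_add] at h2
        exact ⟨h3, h2⟩
      refine ⟨⟨c i, hc i, ?_⟩, ⟨d i, hd i, ?_⟩⟩
      · rw [hcu, Finset.sum_eq_zero fun j _ => (hz' j).1, add_zero]
      · rw [hdw, Finset.sum_eq_zero fun j _ => (hz' j).2, add_zero]
    · exfalso
      apply hi0
      have h1 : 0 < c i + d i - 1 := by linarith
      apply K_pointed hK (hyK i)
      have h2 : -y i = (c i + d i - 1)⁻¹ • ((1 - c i - d i) • y i) := by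
        rw [smul_smul, show (1 - c i - d i) = -(c i + d i - 1) by ring, mul_neg,
          inv_mul_cancel₀ h1.ne', neg_smul, one_smul]
      rw [h2, hrest]
      exact K_smul hK (inv_pos.2 h1).le (K_sum hK _ _ hterm)
  have hfin : (ExtremeRays K).Finite := Set.finite_of_ncard_pos (by omega)
  have : Fintype (ExtremeRays K) := hfin.fintype
  have hc2 : Fintype.card (ExtremeRays K) = m := by
    rw [← hcard, ← Nat.card_coe_set_eq, Nat.card_eq_fintype_card]
  let e := (Fintype.equivFinOfCardEq hc2).symm
  have hR : ∀ R : ExtremeRays K, ∃ x, IsExtremeVec K x ∧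
      R.1 = {y | ∃ c : ℝ, 0 ≤ c ∧ y = c • x} := fun R => R.2
  choose r hr1 hr2 using hR
  refine ⟨fun i => r (e i), ?_, fun i => (hr1 (e i)).2.1⟩
  refine gen_eq hK hy (fun i => (hr1 (e i)).1) ?_
  intro l
  let R : ExtremeRays K := ⟨_, y l, hext l, rfl⟩
  have h1 : y l ∈ R.1 := ⟨1, zero_le_one, by simp⟩
  rw [hr2 R] at h1
  obtain ⟨c, hc, h1⟩ := h1
  rw [h1]
  have h3 := gen_mem (fun i => r (e i)) (e.symm R)
  simp only [Equiv.apply_symm_apply] at h3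
  exact gen_smul_mem _ hc h3

end gens

section wielandt
variable {n : ℕ} {K : Set (Fin n → ℝ)} {A : Matrix (Fin n) (Fin n) ℝ}

theorem arith_star {m k p s : ℕ} (hk : 2 ≤ k) (h : p + s ≤ m)
    (hgt : (m - 1) * k < p + s * k) : p + s = m ∧ p ≤ 1 := by
  have hs : m - 1 ≤ s := by
    by_contra hlt
    have h1 : s + 2 ≤ m := by omega
    obtain ⟨d, rfl⟩ := Nat.exists_eq_add_of_le h1
    have h2 : s + 2 + d - 1 = s + (1 + d) := by omega
    rw [h2, add_mul] at hgt
    have h3 : (1 + d) * 2 ≤ (1 + d) * k := Nat.mul_le_mul_left _ hk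
    omega
  have h1 : s = m - 1 ∨ s = m := by omega
  rcases h1 with rfl | rfl
  · omega
  · omega

/-- If some generator is not mapped to the interior by `A ^ ((m-1)(n-1))`, then `A` acts as in
the Wielandt digraph. -/
theorem wielandt {m : ℕ} (hK : IsProperCone K) (hA : KPrimitive K A) (hn : 3 ≤ n) (hm : 3 ≤ m)
    {x : Fin m → Fin n → ℝ} (hx : K = ConeGen x) (hx0 : ∀ i, x i ≠ 0) (i : Fin m)
    (hbad : A ^ ((m - 1) * (n - 1)) *ᵥ x i ∉ interior K) :
    ∃ b c : ℝ, 0 < b ∧ 0 < c ∧ A ^ m *ᵥ x i = b • x i + c • (A *ᵥ x i) ∧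
      K = ConeGen (fun a : Fin m => A ^ (a : ℕ) *ᵥ x i) := by
  have hn0 : 0 < n := by omega
  have hxK : ∀ j, x j ∈ K := fun j => hx ▸ gen_mem x j
  have hAne : ∀ y ∈ K, y ≠ 0 → A *ᵥ y ≠ 0 := by
    intro y hy hy0 h0
    obtain ⟨p, hp, hpos⟩ := hA.2
    have h1 := Kpos_ne hn0 hK (hpos y hy hy0)
    obtain ⟨q, rfl⟩ : ∃ q, p = q + 1 := ⟨p - 1, by omega⟩
    apply h1
    change A ^ (q + 1) *ᵥ y = 0
    rw [pow_add_mulVec, pow_one, h0, Matrix.mulVec_zero]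
  have hAKne : ∀ k, ∀ y ∈ K, y ≠ 0 → A ^ k *ᵥ y ≠ 0 := by
    intro k y hy hy0
    induction k with
    | zero => simpa using hy0
    | succ k ih =>
      rw [pow_succ', ← Matrix.mulVec_mulVec]
      exact hAne _ (pow_mem hA.1 k hy) ih
  -- time bound
  have hbad' : ∀ N, N ≤ (m - 1) * (n - 1) → A ^ N *ᵥ x i ∉ interior K := by
    intro N hN h_int
    obtain ⟨r, hr⟩ := Nat.exists_eq_add_of_le hN
    apply hbad
    rw [hr, add_comm, pow_add_mulVec]
    exact prim_pow_int hK hA hn0 h_int r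
  have hN1 : 1 ≤ (m - 1) * (n - 1) := Nat.mul_pos (by omega) (by omega)
  -- the basic principle
  have star : ∀ p s j, 0 < s → p + s ≤ m → Dom K (A ^ p *ᵥ x i) (x j) →
      Dom K (A ^ s *ᵥ x j) (x j) → p + s = m ∧ p ≤ 1 := by
    intro p s j hs hps h1 h2
    apply arith_star (k := n - 1) (by omega) hps
    by_contra hle
    apply hbad' (p + s * (n - 1)) (by omega)
    have h3 := circuit hK hA hn0 hs (hxK j) (hx0 j) h2
    rw [add_comm, pow_add_mulVec]
    exact (h1.pow hA.1 _).int hK h3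
  -- successor function and base walk
  have hsucc : ∀ j, ∃ l, Dom K (A ^ 1 *ᵥ x j) (x l) := by
    intro j
    obtain ⟨c, hc, h, hd⟩ := gen_rep hK hx (pow_mem hA.1 1 (hxK j))
    by_contra! hcon
    apply hAKne 1 _ (hxK j) (hx0 j)
    rw [h]
    refine Finset.sum_eq_zero fun l _ => ?_
    by_cases hl : c l = 0
    · rw [hl, zero_smul]
    · exact absurd (hd l hl) (hcon l)
  choose f hf using hsucc
  obtain ⟨v, hv0, hvs⟩ : ∃ v : ℕ → Fin m, v 0 = i ∧ ∀ t, v (t + 1) = f (v t) :=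
    ⟨fun t => f^[t] i, rfl, fun t => Function.iterate_succ_apply' f t i⟩
  have hwalk : ∀ r t, Dom K (A ^ t *ᵥ x (v r)) (x (v (r + t))) := by
    intro r t
    induction t with
    | zero => simpa using Dom.refl hK _
    | succ t ih =>
      refine ih.comp hK hA.1 ?_
      rw [← add_assoc, hvs]; exact hf _
  have hwalk0 : ∀ t, Dom K (A ^ t *ᵥ x i) (x (v t)) := by
    intro t
    have := hwalk 0 t
    rwa [hv0, zero_add] at this
  have hinj : Function.Injective (fun a : Fin m => v a) := by
    have key : ∀ a b : ℕ, a < b → b < m → v a ≠ v b := by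
      intro a b hab hb heq
      have h1 := hwalk a (b - a)
      rw [show a + (b - a) = b by omega, ← heq] at h1
      have := star a (b - a) (v a) (by omega) (by omega) (hwalk0 a) h1
      omega
    intro a b hab
    rcases lt_trichotomy (a : ℕ) b with h | h | h
    · exact absurd hab (key a b h b.2)
    · exact Fin.ext h
    · exact absurd hab.symm (key b a h a.2)
  have hsurj : ∀ j, ∃ a, a < m ∧ v a = j := by
    intro j
    obtain ⟨a, ha⟩ := (Finite.injective_iff_surjective.1 hinj) j
    exact ⟨a, a.2, ha⟩
  have hlast : ∀ d, d < m → Dom K (A ^ 1 *ᵥ x (v (m - 1))) (x (v d)) → d ≤ 1 := by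
    intro d hd h
    have h1 := (hwalk d (m - 1 - d)).comp hK hA.1
      (by rw [show d + (m - 1 - d) = m - 1 by omega]; exact h)
    exact (star d (m - 1 - d + 1) (v d) (by omega) (by omega) (hwalk0 d) h1).2
  have hforw : ∀ a b, a + 1 < m → b < m → Dom K (A ^ 1 *ᵥ x (v a)) (x (v b)) → a < b := by
    intro a b ha hb h
    by_contra hle
    have h1 := (hwalk b (a - b)).comp hK hA.1
      (by rw [show b + (a - b) = a by omega]; exact h)
    have := star b (a - b + 1) (v b) (by omega) (by omega) (hwalk0 b) h1
    omega
  have hchord : ∀ d a b, d ≤ a → a + 1 < b → b < m →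
      Dom K (A ^ 1 *ᵥ x (v (m - 1))) (x (v d)) → ¬ Dom K (A ^ 1 *ᵥ x (v a)) (x (v b)) := by
    intro d a b hda hab hb hl h
    have h1 := (hwalk d (a - d)).comp hK hA.1
      (by rw [show d + (a - d) = a by omega]; exact h)
    have h2 := h1.comp hK hA.1 (hwalk b (m - 1 - b))
    rw [show b + (m - 1 - b) = m - 1 by omega] at h2
    have h3 := h2.comp hK hA.1 hl
    have := star d _ (v d) (by omega) (by omega) (hwalk0 d) h3
    omega
  -- single out-edge
  have hsingle : ∀ j l0, (∀ l, Dom K (A ^ 1 *ᵥ x j) (x l) → l = l0) →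
      ∃ c : ℝ, 0 < c ∧ A *ᵥ x j = c • x l0 := by
    intro j l0 h
    obtain ⟨c, hc, hw, hd⟩ := gen_rep hK hx (pow_mem hA.1 1 (hxK j))
    have h1 : A *ᵥ x j = c l0 • x l0 := by
      rw [pow_one] at hw
      rw [hw]
      apply Finset.sum_eq_single l0
      · intro l _ hl
        by_cases h0 : c l = 0
        · rw [h0, zero_smul]
        · exact absurd (h l (hd l h0)) hl
      · simp
    refine ⟨c l0, lt_of_le_of_ne (hc _) ?_, h1⟩
    intro h0
    rw [← h0, zero_smul] at h1
    exact hAne _ (hxK j) (hx0 j) h1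
  obtain ⟨d, hd, hvd⟩ := hsurj (f (v (m - 1)))
  have hdl : Dom K (A ^ 1 *ᵥ x (v (m - 1))) (x (v d)) := by rw [hvd]; exact hf _
  have hd1 := hlast d hd hdl
  have hmid : ∀ a, 1 ≤ a → a + 1 < m → ∃ c : ℝ, 0 < c ∧ A *ᵥ x (v a) = c • x (v (a + 1)) := by
    intro a ha1 ha
    apply hsingle
    intro l hl
    obtain ⟨b, hb, rfl⟩ := hsurj l
    have h1 := hforw a b ha hb hl
    by_cases h2 : b = a + 1
    · rw [h2]
    · exact absurd hl (hchord d a b (by omega) (by omega) hb hdl)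
  have hv1int : x (v 1) ∉ interior K := by
    intro h
    have h1 := (hwalk0 1).int hK h
    exact hbad' 1 hN1 h1
  -- the last row
  obtain ⟨b, c, hb, hc, hbc, hb'⟩ : ∃ b c : ℝ, 0 ≤ b ∧ 0 ≤ c ∧
      A *ᵥ x (v (m - 1)) = b • x i + c • x (v 1) ∧
      (b ≠ 0 → Dom K (A ^ 1 *ᵥ x (v (m - 1))) (x (v 0))) := by
    obtain ⟨c, hc, hw, hd⟩ := gen_rep hK hx (pow_mem hA.1 1 (hxK (v (m - 1))))
    have hne : v 0 ≠ v 1 := by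
      intro h
      have := @hinj ⟨0, by omega⟩ ⟨1, by omega⟩ h
      simp at this
    refine ⟨c (v 0), c (v 1), hc _, hc _, ?_, fun h => hd _ h⟩
    rw [pow_one] at hw
    rw [hw, ← hv0]
    apply Finset.sum_eq_add (v 0) (v 1) hne
    · intro l _ hl
      by_cases h0 : c l = 0
      · rw [h0, zero_smul]
      · obtain ⟨b, hb, rfl⟩ := hsurj l
        have := hlast b hb (hd _ h0)
        exfalso
        have : b = 0 ∨ b = 1 := by omega
        rcases this with rfl | rfl
        · exact hl.1 rfl
        · exact hl.2 rfl
    · simp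
    · simp
  have hchain : ∀ a, a + 1 < m → ∃ c : ℝ, 0 < c ∧ A ^ a *ᵥ x (v 1) = c • x (v (a + 1)) := by
    intro a
    induction a with
    | zero => intro _; exact ⟨1, one_pos, by simp⟩
    | succ a ih =>
      intro ha
      obtain ⟨c, hc, h⟩ := ih (by omega)
      obtain ⟨d, hd, h'⟩ := hmid (a + 1) (by omega) (by omega)
      refine ⟨c * d, by positivity, ?_⟩
      rw [pow_succ', ← Matrix.mulVec_mulVec, h, Matrix.mulVec_smul, h', smul_smul]
  have hbne : b ≠ 0 := by
    intro h0
    obtain ⟨e, he, h1⟩ := hchain (m - 2) (by omega)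
    rw [show m - 2 + 1 = m - 1 by omega] at h1
    apply hv1int
    refine eig_int hK hA hn0 (s := m - 2 + 1) (by omega) (hxK _) (hx0 _)
      (c := e * c) (by positivity) ?_
    rw [pow_succ', ← Matrix.mulVec_mulVec, h1, Matrix.mulVec_smul, hbc, h0, zero_smul, zero_add,
      smul_smul]
  have hbpos : 0 < b := lt_of_le_of_ne hb (Ne.symm hbne)
  have hfirst : ∃ c : ℝ, 0 < c ∧ A *ᵥ x i = c • x (v 1) := by
    apply hsingle
    intro l hl
    obtain ⟨e, he, rfl⟩ := hsurj l
    rw [← hv0] at hl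
    have h1 := hforw 0 e (by omega) he hl
    by_cases h2 : e = 1
    · rw [h2]
    · exact absurd hl (hchord 0 0 e (by omega) (by omega) he (hb' hbne))
  obtain ⟨g, hg, hg1⟩ := hfirst
  have hall : ∀ a, a < m → ∃ c : ℝ, 0 < c ∧ A ^ a *ᵥ x i = c • x (v a) := by
    intro a ha
    rcases Nat.eq_zero_or_pos a with rfl | hpos
    · exact ⟨1, one_pos, by simp [hv0]⟩
    · obtain ⟨e, he, h1⟩ := hchain (a - 1) (by omega)
      rw [show a - 1 + 1 = a by omega] at h1
      refine ⟨g * e, by positivity, ?_⟩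
      rw [show a = a - 1 + 1 by omega, pow_succ, ← Matrix.mulVec_mulVec, hg1, Matrix.mulVec_smul,
        h1, smul_smul, show a - 1 + 1 = a by omega]
  obtain ⟨e, he, hlastpow⟩ := hall (m - 1) (by omega)
  have hAm : A ^ m *ᵥ x i = (e * b) • x i + (e * c) • x (v 1) := by
    rw [show m = m - 1 + 1 by omega, pow_succ', ← Matrix.mulVec_mulVec, hlastpow,
      Matrix.mulVec_smul, hbc, smul_add, smul_smul, smul_smul]
  have hcne : c ≠ 0 := by
    intro h0
    rw [h0, mul_zero, zero_smul, add_zero] at hAm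
    have := eig_int hK hA hn0 (s := m) (by omega) (hxK i) (hx0 i) (c := e * b) (by positivity) hAm
    exact hbad' 0 (by omega) (by simpa using this)
  have hcpos : 0 < c := lt_of_le_of_ne hc (Ne.symm hcne)
  refine ⟨e * b, e * c / g, by positivity, by positivity, ?_, ?_⟩
  · rw [hAm, hg1, smul_smul, div_mul_cancel₀ _ hg.ne']
  · refine gen_eq hK hx (fun a => pow_mem hA.1 _ (hxK i)) ?_
    intro l
    obtain ⟨a, ha, rfl⟩ := hsurj l
    obtain ⟨t, ht, h1⟩ := hall a ha
    have h2 : x (v a) = t⁻¹ • (A ^ a *ᵥ x i) := by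
      rw [h1, smul_smul, inv_mul_cancel₀ ht.ne', one_smul]
    rw [h2]
    exact gen_smul_mem _ (inv_pos.2 ht).le
      (gen_mem (fun a : Fin m => A ^ (a : ℕ) *ᵥ x i) ⟨a, ha⟩)

end wielandt

section wdata
variable {n : ℕ} {K : Set (Fin n → ℝ)} {A : Matrix (Fin n) (Fin n) ℝ}

theorem W1 (hK : IsProperCone K) (hA : KNonneg K A) {m : ℕ} {z : Fin n → ℝ}
    (hz : z ∈ K) {b c : ℝ} (hb : 0 < b) (hc : 0 < c)
    (h : A ^ m *ᵥ z = b • z + c • (A *ᵥ z)) : Dom K (A ^ m *ᵥ z) z := by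
  refine ⟨b, hb, ?_⟩
  rw [h, add_sub_cancel_left]
  exact K_smul hK hc.le (hA z hz)

theorem W2 (hK : IsProperCone K) {m : ℕ} (hm : 1 ≤ m) {z : Fin n → ℝ}
    (hz : z ∈ K) {b c : ℝ} (hb : 0 < b) (hc : 0 < c)
    (h : A ^ m *ᵥ z = b • z + c • (A *ᵥ z)) : Dom K (A ^ (m - 1) *ᵥ (A *ᵥ z)) (A *ᵥ z) := by
  refine ⟨c, hc, ?_⟩
  rw [Matrix.mulVec_mulVec, ← pow_succ, show m - 1 + 1 = m by omega, h, add_sub_cancel_right]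
  exact K_smul hK hb.le hz

/-- Walk from `z` to `A ^ j z` with prescribed numbers of both kinds of circuits. -/
theorem W3 (hK : IsProperCone K) (hA : KNonneg K A) {m : ℕ} (hm : 1 ≤ m) {z : Fin n → ℝ}
    (hz : z ∈ K) {b c : ℝ} (hb : 0 < b) (hc : 0 < c)
    (h : A ^ m *ᵥ z = b • z + c • (A *ᵥ z)) (p q j : ℕ) :
    Dom K (A ^ (m * p + 1 + (m - 1) * q + j) *ᵥ z) (A ^ (1 + j) *ᵥ z) := by
  have h1 := (W1 hK hA hz hb hc h).iter hK hA p
  have h2 : Dom K (A ^ 1 *ᵥ z) (A *ᵥ z) := by rw [pow_one]; exact Dom.refl hK _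
  have h3 := (W2 hK hm hz hb hc h).iter hK hA q
  have h4 : Dom K (A ^ j *ᵥ (A *ᵥ z)) (A ^ (1 + j) *ᵥ z) := by
    rw [add_comm 1 j, pow_add_mulVec, pow_one]; exact Dom.refl hK _
  exact ((h1.comp hK hA h2).comp hK hA h3).comp hK hA h4

theorem arith_walk {n j : ℕ} (h2 : 2 ≤ j) (hj : j ≤ n) :
    n * (n - 1) = (n + 1) * (n - j) + 1 + (n + 1 - 1) * (j - 2) + (j - 1) := by
  obtain ⟨a, rfl⟩ := Nat.exists_eq_add_of_le hj
  obtain ⟨e, rfl⟩ := Nat.exists_eq_add_of_le h2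
  simp only [show 2 + e + a - 1 = 1 + e + a by omega, show 2 + e + a - (2 + e) = a by omega,
    show 2 + e + a + 1 - 1 = 2 + e + a by omega, show 2 + e - 2 = e by omega,
    show 2 + e - 1 = 1 + e by omega]
  ring

theorem odd_case (hK : IsProperCone K) (hA : KPrimitive K A) (hn : 3 ≤ n) (hev : Even n)
    {z : Fin n → ℝ} (hz : z ∈ K) (hz0 : z ≠ 0) {b c : ℝ} (hb : 0 < b) (hc : 0 < c)
    (h : A ^ (n + 1) *ᵥ z = b • z + c • (A *ᵥ z))
    (hgen : K = ConeGen (fun a : Fin (n + 1) => A ^ (a : ℕ) *ᵥ z)) :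
    A ^ (n * (n - 1)) *ᵥ z ∈ interior K := by
  have hyK : ∀ j, A ^ j *ᵥ z ∈ K := fun j => pow_mem hA.1 j hz
  set r : ℕ → ℝ := fun j => A.charpoly.coeff j with hr
  have hdeg : A.charpoly.natDegree = n := by
    rw [Matrix.charpoly_natDegree_eq_dim, Fintype.card_fin]
  have hrn : r n = 1 := by
    have := A.charpoly_monic
    rw [Polynomial.Monic, Polynomial.leadingCoeff, hdeg] at this
    exact this
  have hrel : ∑ j ∈ Finset.range (n + 1), r j • (A ^ j *ᵥ z) = 0 := by
    have h1 := Matrix.aeval_self_charpoly A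
    rw [Polynomial.aeval_eq_sum_range, hdeg] at h1
    have h2 := congrArg (fun B => B *ᵥ z) h1
    simpa [Matrix.sum_mulVec, Matrix.smul_mulVec] using h2
  have hAn : A ^ n *ᵥ z = - ∑ j ∈ Finset.range n, r j • (A ^ j *ᵥ z) := by
    rw [Finset.sum_range_succ, hrn, one_smul] at hrel
    rw [eq_neg_iff_add_eq_zero, add_comm]; exact hrel
  -- linear independence
  have hli : LinearIndependent ℝ (fun j : Fin n => A ^ (j : ℕ) *ᵥ z) := by
    apply linearIndependent_of_top_le_span_of_card_eq_finrank _ (by simp)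
    set W := Submodule.span ℝ (Set.range fun j : Fin n => A ^ (j : ℕ) *ᵥ z) with hW
    have hmem : ∀ j, j < n → A ^ j *ᵥ z ∈ W := fun j hj =>
      Submodule.subset_span ⟨⟨j, hj⟩, rfl⟩
    have hKW : K ⊆ W := by
      rw [hgen]
      rintro _ ⟨d, hd, rfl⟩
      refine W.sum_mem fun j _ => W.smul_mem _ ?_
      rcases Nat.lt_succ_iff_lt_or_eq.1 j.2 with hj | hj
      · exact hmem _ hj
      · change A ^ (j : ℕ) *ᵥ z ∈ W
        rw [hj, hAn]
        exact W.neg_mem (W.sum_mem fun j hj => W.smul_mem _ (hmem j (Finset.mem_range.1 hj)))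
    have : W = ⊤ := Submodule.eq_top_of_nonempty_interior' W
      (hK.2.2.2.2.mono (interior_mono hKW))
    rw [this]
  set l := r (n - 1) with hl
  set g : ℕ → ℝ := fun j => (if j = 0 then 0 else r (j - 1)) - l * r j
    + ((if j = 0 then b else 0) + (if j = 1 then c else 0)) with hg
  have hgsum : ∑ j ∈ Finset.range n, g j • (A ^ j *ᵥ z) = 0 := by
    have e1 : ∑ j ∈ Finset.range n, (if j = 0 then 0 else r (j - 1)) • (A ^ j *ᵥ z)
        = ∑ j ∈ Finset.range (n - 1), r j • (A ^ (j + 1) *ᵥ z) := by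
      obtain ⟨k, rfl⟩ : ∃ k, n = k + 1 := ⟨n - 1, by omega⟩
      rw [Finset.sum_range_succ']
      simp
    have e2 : ∑ j ∈ Finset.range n, (l * r j) • (A ^ j *ᵥ z) = - (l • (A ^ n *ᵥ z)) := by
      rw [hAn, smul_neg, neg_neg, Finset.smul_sum]
      simp [smul_smul]
    have e3 : ∑ j ∈ Finset.range n, (if j = 0 then b else 0) • (A ^ j *ᵥ z) = b • z := by
      rw [Finset.sum_eq_single 0]
      · simp
      · intro j _ hj; simp [hj]
      · intro h; simp at h; omega
    have e4 : ∑ j ∈ Finset.range n, (if j = 1 then c else 0) • (A ^ j *ᵥ z) = c • (A *ᵥ z) := by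
      rw [Finset.sum_eq_single 1]
      · simp
      · intro j _ hj; simp [hj]
      · intro h; simp at h; omega
    have e5 : ∑ j ∈ Finset.range (n - 1), r j • (A ^ (j + 1) *ᵥ z) + l • (A ^ n *ᵥ z)
        + A ^ (n + 1) *ᵥ z = 0 := by
      have h1 := congrArg (fun y => A *ᵥ y) hrel
      simp only [Matrix.mulVec_sum, Matrix.mulVec_zero, Matrix.mulVec_smul] at h1
      simp only [Matrix.mulVec_mulVec, ← pow_succ'] at h1
      rw [Finset.sum_range_succ, hrn, one_smul] at h1
      rw [← h1]
      congr 1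
      obtain ⟨k, rfl⟩ : ∃ k, n = k + 1 := ⟨n - 1, by omega⟩
      rw [Finset.sum_range_succ]
      simp [hl]
    rw [h] at e5
    simp only [hg, add_smul, sub_smul, Finset.sum_add_distrib, Finset.sum_sub_distrib]
    rw [e1, e2, e3, e4, sub_neg_eq_add]
    exact e5
  have hg0 : ∀ j, j < n → g j = 0 := by
    intro j hj
    rw [Fintype.linearIndependent_iff] at hli
    exact hli (fun i => g i) (by rw [← hgsum, Finset.sum_range]) ⟨j, hj⟩
  have hr0 : l * r 0 = b := by
    have := hg0 0 (by omega)
    simp [hg] at this; linarith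
  have hstep : ∀ j, 2 ≤ j → j < n → r (j - 1) = l * r j := by
    intro j h2 hj
    have := hg0 j hj
    simp only [hg] at this
    rw [if_neg (by omega), if_neg (by omega), if_neg (by omega)] at this
    linarith
  have hpow : ∀ k, k < n → r (n - k) = l ^ k := by
    intro k
    induction k with
    | zero => intro _; simpa using hrn
    | succ k ih =>
      intro hk
      rcases Nat.eq_zero_or_pos k with rfl | hk0
      · simp [hl]
      · rw [show n - (k + 1) = n - k - 1 by omega, hstep (n - k) (by omega) (by omega),
          ih (by omega), pow_succ']
  have hpow' : ∀ j, 1 ≤ j → j ≤ n → r j = l ^ (n - j) := by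
    intro j h1 h2
    rw [← hpow (n - j) (by omega)]
    congr 1; omega
  have hl0 : l < 0 := by
    by_contra hge
    have hlpos : 0 < l := by
      rcases (not_lt.1 hge).eq_or_lt with h0 | h0
      · rw [← h0, zero_mul] at hr0; linarith
      · exact h0
    have hr0pos : 0 < r 0 := by
      by_contra hneg
      have := mul_nonpos_of_nonneg_of_nonpos hlpos.le (not_lt.1 hneg)
      linarith
    have hnn : ∀ j ∈ Finset.range (n + 1), r j • (A ^ j *ᵥ z) ∈ K := by
      intro j hj
      refine K_smul hK ?_ (hyK j)
      rcases Nat.eq_zero_or_pos j with rfl | h1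
      · exact hr0pos.le
      · rw [hpow' j h1 (by have := Finset.mem_range.1 hj; omega)]; positivity
    have := K_sum_zero hK _ _ hnn hrel 0 (by simp)
    simp [hr0pos.ne', hz0] at this
  have hr0neg : r 0 < 0 := by
    by_contra hneg
    have := mul_nonpos_of_nonpos_of_nonneg hl0.le (not_lt.1 hneg)
    linarith
  have hr1neg : r 1 < 0 := by
    rw [hpow' 1 le_rfl (by omega)]
    apply Odd.pow_neg _ hl0
    rw [Nat.odd_sub (by omega)]
    simp [hev]
  have hrne : ∀ j, j ≤ n → r j ≠ 0 := by
    intro j hj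
    rcases Nat.eq_zero_or_pos j with rfl | h1
    · exact hr0neg.ne
    · rw [hpow' j h1 hj]; exact pow_ne_zero _ hl0.ne
  set w := A ^ (n * (n - 1)) *ᵥ z with hw
  have hwK : w ∈ K := hyK _
  have hbig : ∀ j, 2 ≤ j → j ≤ n → Dom K w (A ^ j *ᵥ z) := by
    intro j h2 hj
    have := W3 hK hA.1 (m := n + 1) (by omega) hz hb hc h (n - j) (j - 2) (j - 1)
    convert this using 2
    · congr 1
      exact arith_walk h2 hj
    · congr 1; omega
  set P := ∑ j ∈ (Finset.range (n + 1)).filter (fun j => 0 < r j), r j • (A ^ j *ᵥ z) with hP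
  have hwP : Dom K w P := by
    refine Dom.sum_right hK _ _ hwK ?_ ?_
    · intro j hj
      exact K_smul hK (Finset.mem_filter.1 hj).2.le (hyK j)
    · intro j hj
      obtain ⟨h1, h2⟩ := Finset.mem_filter.1 hj
      refine (hbig j ?_ (by have := Finset.mem_range.1 h1; omega)).smul_right hK hwK h2.le
      by_contra hlt
      have : j = 0 ∨ j = 1 := by omega
      rcases this with rfl | rfl <;> linarith
  have hPN : P = ∑ j ∈ (Finset.range (n + 1)).filter (fun j => ¬ 0 < r j),
      (- r j) • (A ^ j *ᵥ z) := by
    have := Finset.sum_filter_add_sum_filter_not (Finset.range (n + 1)) (fun j => 0 < r j)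
      (fun j => r j • (A ^ j *ᵥ z))
    rw [hrel] at this
    rw [hP, eq_neg_of_add_eq_zero_left this, ← Finset.sum_neg_distrib]
    simp
  refine gen_dom hK hgen hwK ?_
  intro a
  change Dom K w (A ^ (a : ℕ) *ᵥ z)
  have ha : (a : ℕ) ≤ n := by omega
  rcases lt_or_gt_of_ne (hrne a ha) with hneg | hpos
  · refine hwP.trans hK ⟨- r a, by linarith, ?_⟩
    have hamem : (a : ℕ) ∈ (Finset.range (n + 1)).filter (fun j => ¬ 0 < r j) := by
      simp only [Finset.mem_filter, Finset.mem_range]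
      exact ⟨a.2, by linarith⟩
    rw [hPN, ← Finset.add_sum_erase _ _ hamem, add_sub_cancel_left]
    refine K_sum hK _ _ fun j hj => K_smul hK ?_ (hyK j)
    have := (Finset.mem_filter.1 (Finset.mem_of_mem_erase hj)).2
    linarith
  · refine hbig a ?_ ha
    by_contra hlt
    have : (a : ℕ) = 0 ∨ (a : ℕ) = 1 := by omega
    rcases this with h0 | h0 <;> rw [h0] at hpos <;> linarith

theorem expnt_le {N : ℕ} (hN : 0 < N) (h : KPositive K (A ^ N)) : expnt K A ≤ N :=
  Nat.sInf_le ⟨hN, h⟩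

theorem upper {m : ℕ} (hn : 3 ≤ n) (hnm : n < m) (hP : MemP m K) (hA : KPrimitive K A) :
    expnt K A ≤ if Even m then m ^ 2 - 3 * m + 3 else m ^ 2 - 3 * m + 2 := by
  have hK : IsProperCone K := hP.1.1
  obtain ⟨x, hx, hx0⟩ := exists_gen (by omega) hP
  have hxK : ∀ j, x j ∈ K := fun j => hx ▸ gen_mem x j
  obtain ⟨d, rfl⟩ := Nat.exists_eq_add_of_lt hnm
  have hpos : 0 < (n + d + 1 - 1) * (n - 1) := Nat.mul_pos (by omega) (by omega)
  obtain ⟨k, rfl⟩ : ∃ k, n = k + 3 := ⟨n - 3, by omega⟩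
  have hval : (k + 3 + d + 1) ^ 2 - 3 * (k + 3 + d + 1) + 2 = (k + 3 + d) * (k + 2 + d) := by
    have : (k + 3 + d + 1) ^ 2 = (k + 3 + d) * (k + 2 + d) - 2 + 3 * (k + 3 + d + 1) := by
      have h2 : 2 ≤ (k + 3 + d) * (k + 2 + d) := by nlinarith
      zify [h2]; ring
    have h2 : 2 ≤ (k + 3 + d) * (k + 2 + d) := by nlinarith
    omega
  have hle : (k + 3 + d + 1 - 1) * (k + 3 - 1) ≤ (k + 3 + d) * (k + 2 + d) :=
    Nat.mul_le_mul (by omega) (by omega)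
  by_cases hgood : ∀ i, A ^ ((k + 3 + d + 1 - 1) * (k + 3 - 1)) *ᵥ x i ∈ interior K
  · have h1 := expnt_le hpos (gen_pos hK hx hgood)
    split_ifs <;> omega
  · push Not at hgood
    obtain ⟨i, hi⟩ := hgood
    have hfull : expnt K A ≤ (k + 3 + d + 1 - 1) * (k + 3 - 1) + 1 := by
      refine expnt_le (by omega) (gen_pos hK hx ?_)
      intro j
      by_contra hj
      have hj' : A ^ ((k + 3 + d + 1 - 1) * (k + 3 - 1)) *ᵥ x j ∉ interior K := by
        intro h0
        apply hj
        rw [pow_succ', ← Matrix.mulVec_mulVec]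
        exact prim_int hK hA (by omega) h0
      obtain ⟨b, c, hb, hc, h, -⟩ := wielandt hK hA hn (by omega) hx hx0 j hj'
      apply hj
      rw [pow_succ, ← Matrix.mulVec_mulVec]
      refine circuit hK hA (by omega) (by omega) (hA.1 _ (hxK j)) ?_
        (W2 hK (by omega) (hxK j) hb hc h)
      intro h0
      have h3 : (A ^ (k + 3 + d + 1)) *ᵥ x j = 0 := by
        rw [pow_succ, ← Matrix.mulVec_mulVec, h0, Matrix.mulVec_zero]
      rw [h3, h0, smul_zero, add_zero] at h
      rcases smul_eq_zero.1 h.symm with h4 | h4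
      · exact hb.ne' h4
      · exact hx0 j h4
    rcases Nat.eq_zero_or_pos d with rfl | hd
    · by_cases hev : Even (k + 3)
      · exfalso
        obtain ⟨b, c, hb, hc, h, hg⟩ := wielandt hK hA hn (by omega) hx hx0 i hi
        exact hi (odd_case hK hA hn hev (hxK i) (hx0 i) hb hc h hg)
      · have : Even (k + 3 + 0 + 1) := by
          rw [add_zero, Nat.even_add_one]; exact hev
        rw [if_pos this]
        omega
    · have : (k + 3 + d + 1 - 1) * (k + 3 - 1) + 1 ≤ (k + 3 + d) * (k + 2 + d) := by
        obtain ⟨e, rfl⟩ : ∃ e, d = e + 1 := ⟨d - 1, by omega⟩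
        simp only [Nat.add_sub_cancel, show k + 3 - 1 = k + 2 by omega]
        nlinarith
      split_ifs <;> omega

end wdata

section construction
variable {n : ℕ} {K : Set (Fin n → ℝ)} {A : Matrix (Fin n) (Fin n) ℝ}

theorem prim_of (hK : IsProperCone K) {m : ℕ} (hm : 2 ≤ m) {z : Fin n → ℝ} {b c : ℝ}
    (hb : 0 < b) (hc : 0 < c) (h : A ^ m *ᵥ z = b • z + c • (A *ᵥ z))
    (hgen : K = ConeGen (fun a : Fin m => A ^ (a : ℕ) *ᵥ z)) : KPrimitive K A := by
  have hmem : ∀ a, a < m → A ^ a *ᵥ z ∈ K := by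
    intro a ha
    rw [hgen]
    exact gen_mem (fun a : Fin m => A ^ (a : ℕ) *ᵥ z) ⟨a, ha⟩
  have hz : z ∈ K := by simpa using hmem 0 (by omega)
  have hAz : A *ᵥ z ∈ K := by simpa using hmem 1 (by omega)
  have hA : KNonneg K A := by
    intro x hx
    have hx' : x ∈ ConeGen (fun a : Fin m => A ^ (a : ℕ) *ᵥ z) := hgen ▸ hx
    obtain ⟨d, hd, rfl⟩ := hx'
    rw [Matrix.mulVec_sum]
    refine K_sum hK _ _ fun a _ => ?_
    rw [Matrix.mulVec_smul, Matrix.mulVec_mulVec, ← pow_succ']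
    refine K_smul hK (hd a) ?_
    rcases Nat.lt_or_ge ((a : ℕ) + 1) m with h1 | h1
    · exact hmem _ h1
    · rw [show (a : ℕ) + 1 = m by omega, h]
      exact K_add hK (K_smul hK hb.le hz) (K_smul hK hc.le hAz)
  refine ⟨hA, 2 * m * m + m, by positivity, gen_pos hK hgen ?_⟩
  intro i
  refine gen_dom hK hgen (pow_mem hA _ (hmem _ i.2)) ?_
  intro j
  change Dom K (A ^ (2 * m * m + m) *ᵥ (A ^ (i : ℕ) *ᵥ z)) (A ^ (j : ℕ) *ᵥ z)
  have h1 : Dom K (A ^ (m - i) *ᵥ (A ^ (i : ℕ) *ᵥ z)) z := by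
    rw [← pow_add_mulVec, show m - (i : ℕ) + i = m by omega]
    exact W1 hK hA hz hb hc h
  have h2 := W3 hK hA (by omega) hz hb hc h (m + i - j) (m + j - i) (m - 1 + j)
  have h3 : Dom K (A ^ (1 + (m - 1 + j)) *ᵥ z) (A ^ (j : ℕ) *ᵥ z) := by
    rw [show 1 + (m - 1 + (j : ℕ)) = j + m by omega, pow_add_mulVec]
    exact (W1 hK hA hz hb hc h).pow hA j
  have h4 := h1.comp hK hA (h2.trans hK h3)
  convert h4 using 3
  have hi := i.2
  have hj := j.2
  generalize (i : ℕ) = i at *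
  generalize (j : ℕ) = j at *
  clear h4 h3 h2 h1
  zify [show 1 ≤ m by omega, hi.le, show j ≤ m + i by omega, show i ≤ m + j by omega]
  ring

variable {v : Fin n → ℝ} {y : Fin (n + 1) → Fin n → ℝ}

theorem sum_coord (hy1 : ∀ j : Fin n, y j.castSucc = Pi.single j 1) (hy2 : y (Fin.last n) = v)
    (w : Fin (n + 1) → ℝ) (j : Fin n) :
    (∑ a, w a • y a) j = w j.castSucc + w (Fin.last n) * v j := by
  rw [Fin.sum_univ_castSucc]
  simp [hy1, hy2, Finset.sum_apply, Pi.single_apply]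

theorem mem_iff (hy1 : ∀ j : Fin n, y j.castSucc = Pi.single j 1) (hy2 : y (Fin.last n) = v)
    (x : Fin n → ℝ) : x ∈ ConeGen y ↔ ∃ t : ℝ, 0 ≤ t ∧ ∀ j, t * v j ≤ x j := by
  constructor
  · rintro ⟨c, hc, rfl⟩
    refine ⟨c (Fin.last n), hc _, fun j => ?_⟩
    rw [sum_coord hy1 hy2]
    linarith [hc j.castSucc]
  · rintro ⟨t, ht, h⟩
    refine ⟨Fin.snoc (α := fun _ => ℝ) (fun j => x j - t * v j) t, ?_, ?_⟩
    · intro j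
      refine Fin.lastCases ?_ (fun j => ?_) j
      · simpa using ht
      · simpa using h j
    · ext j
      rw [sum_coord hy1 hy2]
      simp

theorem proper_of (hy1 : ∀ j : Fin n, y j.castSucc = Pi.single j 1) (hy2 : y (Fin.last n) = v)
    {p : Fin n} (hp : 0 < v p) : IsProperCone (ConeGen y) := by
  have hm := mem_iff hy1 hy2
  refine ⟨?_, ?_, ?_, ?_, ?_⟩
  · rw [← isSeqClosed_iff_isClosed]
    intro u x hu hux
    have hu' : ∀ k, ∃ t : ℝ, 0 ≤ t ∧ ∀ j, t * v j ≤ u k j := fun k => (hm _).1 (hu k)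
    choose t ht htu using hu'
    have hcoord : ∀ j, Filter.Tendsto (fun k => u k j) Filter.atTop (nhds (x j)) :=
      fun j => (tendsto_pi_nhds.1 hux) j
    obtain ⟨B, hB⟩ := (hcoord p).bddAbove_range
    have hIcc : ∀ k, t k ∈ Set.Icc 0 (B / v p) := by
      intro k
      refine ⟨ht k, ?_⟩
      rw [le_div_iff₀ hp]
      exact (htu k p).trans (hB ⟨k, rfl⟩)
    obtain ⟨s, hs, φ, hφ, hlim⟩ := isCompact_Icc.tendsto_subseq hIcc
    rw [hm]
    refine ⟨s, hs.1, fun j => ?_⟩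
    exact le_of_tendsto_of_tendsto' (hlim.mul_const (v j)) ((hcoord j).comp hφ.tendsto_atTop)
      (fun k => htu (φ k) j)
  · intro x hx x' hx'
    rw [hm] at hx hx' ⊢
    obtain ⟨t, ht, h⟩ := hx
    obtain ⟨t', ht', h'⟩ := hx'
    refine ⟨t + t', by positivity, fun j => ?_⟩
    have := h j
    have := h' j
    simp only [Pi.add_apply]
    linarith
  · intro c hc x hx
    exact gen_smul_mem y hc hx
  · ext x
    simp only [Set.mem_inter_iff, Set.mem_neg, Set.mem_singleton_iff]
    constructor
    · rintro ⟨hx, hx'⟩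
      rw [hm] at hx hx'
      obtain ⟨t, ht, h⟩ := hx
      obtain ⟨t', ht', h'⟩ := hx'
      have h1 : (t + t') * v p ≤ 0 := by
        have := h p
        have := h' p
        simp only [Pi.neg_apply] at this
        linarith
      have h2 : t + t' ≤ 0 := by
        by_contra hcon
        have := mul_pos (not_le.1 hcon) hp
        linarith
      have h3 : t = 0 := by linarith
      have h4 : t' = 0 := by linarith
      subst h3 h4
      ext j
      have h5 := h j
      have h6 := h' j
      simp only [Pi.neg_apply, zero_mul, Pi.zero_apply] at h5 h6 ⊢
      linarith
    · rintro rfl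
      have : (0 : Fin n → ℝ) ∈ ConeGen y := (hm 0).2 ⟨0, le_rfl, by simp⟩
      simpa using this
  · refine ⟨fun _ => 1, ?_⟩
    rw [mem_interior]
    refine ⟨{x | ∀ j, 0 < x j}, ?_, ?_, ?_⟩
    · intro x hx
      rw [hm]
      exact ⟨0, le_rfl, fun j => by simpa using (hx j).le⟩
    · rw [Set.setOf_forall]
      exact isOpen_iInter_of_finite fun j => isOpen_lt continuous_const (continuous_apply j)
    · intro j; exact one_pos

theorem rel_zero (hy1 : ∀ j : Fin n, y j.castSucc = Pi.single j 1) (hy2 : y (Fin.last n) = v)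
    {p q r : Fin n} (hp : 0 < v p) (hq : 0 < v q) (hpq : p ≠ q) (hr : v r < 0)
    (w : Fin (n + 1) → ℝ) (hw : ∑ a, w a • y a = 0) (a0 : Fin (n + 1))
    (hneg : ∀ b, b ≠ a0 → w b ≤ 0) : w = 0 := by
  have hrel : ∀ j : Fin n, w j.castSucc = - (w (Fin.last n) * v j) := by
    intro j
    have := sum_coord hy1 hy2 w j
    rw [hw] at this
    simp only [Pi.zero_apply] at this
    linarith
  have key : ∀ s : Fin n, 0 < v s → s.castSucc ≠ a0 → 0 ≤ w (Fin.last n) := by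
    intro s hs hne
    have := hneg _ hne
    rw [hrel] at this
    by_contra hcon
    have := mul_neg_of_neg_of_pos (not_le.1 hcon) hs
    linarith
  have ht : w (Fin.last n) = 0 := by
    by_cases ha : a0 = Fin.last n
    · apply le_antisymm _ (key p hp (by rw [ha]; exact (Fin.castSucc_lt_last p).ne))
      have := hneg r.castSucc (by rw [ha]; exact (Fin.castSucc_lt_last r).ne)
      rw [hrel] at this
      by_contra hcon
      have := mul_neg_of_pos_of_neg (not_le.1 hcon) hr
      linarith
    · apply le_antisymm (hneg _ (Ne.symm ha))
      by_cases hpa : p.castSucc = a0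
      · apply key q hq
        rw [← hpa]
        intro h
        exact hpq (Fin.castSucc_injective n h).symm
      · exact key p hp hpa
  ext a
  refine Fin.lastCases ?_ (fun j => ?_) a
  · exact ht
  · rw [hrel, ht]; simp

theorem memP_of (hy1 : ∀ j : Fin n, y j.castSucc = Pi.single j 1) (hy2 : y (Fin.last n) = v)
    {p q r : Fin n} (hp : 0 < v p) (hq : 0 < v q) (hpq : p ≠ q) (hr : v r < 0) :
    MemP (n + 1) (ConeGen y) := by
  classical
  have hK := proper_of hy1 hy2 hp
  have hz := rel_zero hy1 hy2 hp hq hpq hr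
  have hsingle : ∀ (a : Fin (n + 1)) (κ : ℝ),
      ∑ b, (Pi.single a κ : Fin (n + 1) → ℝ) b • y b = κ • y a := by
    intro a κ
    rw [Finset.sum_eq_single a]
    · simp
    · intro b _ hb; simp [hb]
    · simp
  have hne : ∀ a, y a ≠ 0 := by
    intro a h0
    have := hz (Pi.single a 1) (by rw [hsingle, h0, smul_zero]) a
      (fun b hb => by simp [hb])
    have := congrFun this a
    simp at this
  have hext : ∀ a, IsExtremeVec (ConeGen y) (y a) := by
    intro a
    refine ⟨gen_mem y a, hne a, ?_⟩
    rintro u ⟨c, hc, rfl⟩ w ⟨d, hd, rfl⟩ huw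
    have h1 := hz (Pi.single a 1 - c - d) (by
      simp only [Pi.sub_apply, sub_smul, Finset.sum_sub_distrib]
      rw [hsingle, one_smul, huw]; abel) a (fun b hb => by
        simp only [Pi.sub_apply, Pi.single_eq_of_ne hb]
        linarith [hc b, hd b])
    have h2 : ∀ b, b ≠ a → c b = 0 ∧ d b = 0 := by
      intro b hb
      have := congrFun h1 b
      simp only [Pi.sub_apply, Pi.single_eq_of_ne hb, Pi.zero_apply] at this
      exact ⟨by linarith [hc b, hd b], by linarith [hc b, hd b]⟩
    refine ⟨⟨c a, hc a, ?_⟩, ⟨d a, hd a, ?_⟩⟩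
    · rw [Finset.sum_eq_single a]
      · intro b _ hb; rw [(h2 b hb).1, zero_smul]
      · simp
    · rw [Finset.sum_eq_single a]
      · intro b _ hb; rw [(h2 b hb).2, zero_smul]
      · simp
  refine ⟨⟨hK, n + 1, y, rfl⟩, ?_⟩
  set ray : Fin (n + 1) → Set (Fin n → ℝ) := fun a => {x | ∃ c : ℝ, 0 ≤ c ∧ x = c • y a} with hray
  have hinj : Function.Injective ray := by
    intro a b hab
    by_contra hne'
    have h1 : y a ∈ ray a := ⟨1, zero_le_one, by simp⟩
    rw [hab] at h1
    obtain ⟨κ, hκ, h1⟩ := h1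
    have h2 := hz (Pi.single a 1 - Pi.single b κ) (by
      simp only [Pi.sub_apply, sub_smul, Finset.sum_sub_distrib]
      rw [hsingle, hsingle, one_smul, h1, sub_self]) a (fun e he => by
        simp only [Pi.sub_apply, Pi.single_eq_of_ne he, Pi.single_apply]
        split_ifs <;> linarith)
    have := congrFun h2 a
    simp [Pi.single_apply, hne'] at this
  have hrange : ExtremeRays (ConeGen y) = Set.range ray := by
    ext R
    constructor
    · rintro ⟨x, ⟨hxK, hx0, hxe⟩, rfl⟩
      obtain ⟨c, hc, hxc⟩ := hxK
      obtain ⟨a, ha⟩ : ∃ a, c a ≠ 0 := by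
        by_contra! hcon
        exact hx0 (by rw [hxc]; exact Finset.sum_eq_zero fun a _ => by rw [hcon a, zero_smul])
      have hca : 0 < c a := lt_of_le_of_ne (hc a) (Ne.symm ha)
      obtain ⟨⟨κ, hκ, h1⟩, -⟩ := hxe (c a • y a) (gen_smul_mem y (hc a) (gen_mem y a))
        (∑ b ∈ Finset.univ.erase a, c b • y b)
        (gen_sum_mem y _ _ fun b _ => gen_smul_mem y (hc b) (gen_mem y b))
        (by rw [hxc]; exact (Finset.add_sum_erase _ (fun b => c b • y b) (Finset.mem_univ a)).symm)
      have hκ0 : 0 < κ := by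
        rcases hκ.eq_or_lt with h0 | h0
        · rw [← h0, zero_smul] at h1
          rcases smul_eq_zero.1 h1 with h2 | h2
          · exact absurd h2 ha
          · exact absurd h2 (hne a)
        · exact h0
      refine ⟨a, ?_⟩
      have hya : y a = ((c a)⁻¹ * κ) • x := by
        rw [mul_smul, ← h1, smul_smul, inv_mul_cancel₀ ha, one_smul]
      have hxa : x = (κ⁻¹ * c a) • y a := by
        rw [mul_smul, h1, smul_smul, inv_mul_cancel₀ hκ0.ne', one_smul]
      ext u
      constructor
      · rintro ⟨e, he, rfl⟩
        exact ⟨e * ((c a)⁻¹ * κ), by positivity, by rw [mul_smul, ← hya]⟩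
      · rintro ⟨e, he, rfl⟩
        exact ⟨e * (κ⁻¹ * c a), by positivity, by rw [mul_smul, ← hxa]⟩
    · rintro ⟨a, rfl⟩
      exact ⟨y a, hext a, rfl⟩
  rw [hrange, ← Nat.card_coe_set_eq, Nat.card_range_of_injective hinj]
  simp

end construction

section lower

theorem zero_even {n : ℕ} (hn : 2 ≤ n) {b c : ℝ} {h : ℕ → ℝ}
    (hrec : ∀ k, h (k + (n + 1)) = b * h k + c * h (k + 1))
    (h0 : ∀ j, 2 ≤ j → j ≤ n → h j = 0) : h (n * (n - 1)) = 0 := by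
  have key : ∀ k, h k ≠ 0 → k = 0 ∨ ∃ p q, k = 1 + p * (n + 1) + q * n := by
    intro k
    induction k using Nat.strong_induction_on with
    | _ k ih =>
      intro hk
      rcases Nat.lt_or_ge k (n + 1) with hlt | hge
      · have : k = 0 ∨ k = 1 := by
          by_contra hcon
          exact hk (h0 k (by omega) (by omega))
        rcases this with rfl | rfl
        · exact Or.inl rfl
        · exact Or.inr ⟨0, 0, by simp⟩
      · right
        obtain ⟨k', rfl⟩ := Nat.exists_eq_add_of_le' hge
        rw [hrec] at hk
        by_cases h1 : h k' = 0
        · have h2 : h (k' + 1) ≠ 0 := by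
            intro h2; apply hk; rw [h1, h2]; ring
          rcases ih (k' + 1) (by omega) h2 with h3 | ⟨p, q, h3⟩
          · omega
          · exact ⟨p, q + 1, by rw [add_mul]; omega⟩
        · rcases ih k' (by omega) h1 with h3 | ⟨p, q, h3⟩
          · exact ⟨0, 1, by omega⟩
          · exact ⟨p + 1, q, by rw [add_mul]; omega⟩
  by_contra hne
  rcases key _ hne with h1 | ⟨p, q, h1⟩
  · have : 0 < n * (n - 1) := Nat.mul_pos (by omega) (by omega)
    omega
  · have h2 : n ∣ p + 1 := by
      have h3 : n ∣ (p + 1) + n * (p + q) := by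
        rw [show (p + 1) + n * (p + q) = n * (n - 1) by rw [h1]; ring]
        exact dvd_mul_right _ _
      exact (Nat.dvd_add_left (dvd_mul_right _ _)).1 h3
    have h3 := Nat.le_of_dvd (by omega) h2
    obtain ⟨e, rfl⟩ : ∃ e, n = e + 1 := ⟨n - 1, by omega⟩
    simp only [Nat.add_sub_cancel] at h1
    have h4 : e * (e + 1 + 1) ≤ p * (e + 1 + 1) := Nat.mul_le_mul_right _ (by omega)
    nlinarith

theorem zero_odd {n : ℕ} (hn : 3 ≤ n) {b c : ℝ} {h : ℕ → ℝ}
    (hrec : ∀ k, h (k + (n + 1)) = b * h k + c * h (k + 1))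
    (h0 : ∀ j, 1 ≤ j → j < n → h j = 0) : h (n * (n - 1) - 1) = 0 := by
  have key : ∀ k, h k ≠ 0 → k = 0 ∨ ∃ p q, k = n + p * (n + 1) + q * n ∨
      k = n + 1 + p * (n + 1) + q * n := by
    intro k
    induction k using Nat.strong_induction_on with
    | _ k ih =>
      intro hk
      rcases Nat.lt_or_ge k (n + 1) with hlt | hge
      · have : k = 0 ∨ k = n := by
          by_contra hcon
          exact hk (h0 k (by omega) (by omega))
        rcases this with rfl | rfl
        · exact Or.inl rfl
        · exact Or.inr ⟨0, 0, by simp⟩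
      · right
        obtain ⟨k', rfl⟩ := Nat.exists_eq_add_of_le' hge
        rw [hrec] at hk
        by_cases h1 : h k' = 0
        · have h2 : h (k' + 1) ≠ 0 := by
            intro h2; apply hk; rw [h1, h2]; ring
          rcases ih (k' + 1) (by omega) h2 with h3 | ⟨p, q, h3⟩
          · omega
          · exact ⟨p, q + 1, by rw [add_mul q]; omega⟩
        · rcases ih k' (by omega) h1 with h3 | ⟨p, q, h3⟩
          · exact ⟨0, 0, by omega⟩
          · exact ⟨p + 1, q, by rw [add_mul p]; omega⟩
  have hbig : 6 ≤ n * (n - 1) := 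
    le_trans (by norm_num) (Nat.mul_le_mul hn (show 2 ≤ n - 1 by omega))
  by_contra hne
  rcases key _ hne with h1 | ⟨p, q, h1 | h1⟩
  · omega
  · have h2 : n ∣ p + 1 := by
      have h3 : n ∣ (p + 1) + n * (p + q + 1) := by
        rw [show (p + 1) + n * (p + q + 1) = n * (n - 1) by
          have : n * (n - 1) = n + p * (n + 1) + q * n + 1 := by omega
          rw [this]; ring]
        exact dvd_mul_right _ _
      exact (Nat.dvd_add_left (dvd_mul_right _ _)).1 h3
    have h3 := Nat.le_of_dvd (by omega) h2
    obtain ⟨e, rfl⟩ : ∃ e, n = e + 1 := ⟨n - 1, by omega⟩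
    simp only [Nat.add_sub_cancel] at h1 hbig
    have h4 : e * (e + 1 + 1) ≤ p * (e + 1 + 1) := Nat.mul_le_mul_right _ (by omega)
    have h5 : (e + 1) * e = e + 1 + p * (e + 1 + 1) + q * (e + 1) + 1 := by omega
    nlinarith
  · have h2 : n ∣ p + 2 := by
      have h3 : n ∣ (p + 2) + n * (p + q + 1) := by
        rw [show (p + 2) + n * (p + q + 1) = n * (n - 1) by
          have : n * (n - 1) = n + 1 + p * (n + 1) + q * n + 1 := by omega
          rw [this]; ring]
        exact dvd_mul_right _ _
      exact (Nat.dvd_add_left (dvd_mul_right _ _)).1 h3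
    have h3 := Nat.le_of_dvd (by omega) h2
    obtain ⟨e, rfl⟩ : ∃ e, n = e + 2 := ⟨n - 2, by omega⟩
    simp only [show e + 2 - 1 = e + 1 by omega] at h1 hbig
    have h4 : e * (e + 2 + 1) ≤ p * (e + 2 + 1) := Nat.mul_le_mul_right _ (by omega)
    have h5 : (e + 2) * (e + 1) = e + 2 + 1 + p * (e + 2 + 1) + q * (e + 2) + 1 := by omega
    nlinarith

/-- Coordinates of the last generator. -/
def vv (n j : ℕ) : ℝ :=
  if j = 0 then (if Even n then 1 else 2) else if Even (j + n) then -1 else 1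

/-- The companion matrix with last column `vv n`. -/
def AA (n : ℕ) : Matrix (Fin n) (Fin n) ℝ :=
  Matrix.of fun i j => if (j : ℕ) + 1 < n then (if (i : ℕ) = j + 1 then 1 else 0) else vv n i

theorem AA_single {n j : ℕ} (hj : j + 1 < n) :
    AA n *ᵥ (Pi.single ⟨j, by omega⟩ 1) = Pi.single ⟨j + 1, hj⟩ 1 := by
  rw [Matrix.mulVec_single_one]
  ext i
  simp [AA, Pi.single_apply, hj, Fin.ext_iff]

theorem AA_last {n : ℕ} (hn : 0 < n) :
    AA n *ᵥ (Pi.single ⟨n - 1, by omega⟩ 1) = fun i : Fin n => vv n i := by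
  rw [Matrix.mulVec_single_one]
  ext i
  simp [AA, show ¬ (n - 1 + 1 < n) by omega]

theorem AA_vv {n : ℕ} (hn : 2 ≤ n) :
    AA n *ᵥ (fun i : Fin n => vv n i) =
      vv n 0 • (Pi.single ⟨0, by omega⟩ 1 : Fin n → ℝ) +
        (3 - vv n 0) • (Pi.single ⟨1, by omega⟩ 1 : Fin n → ℝ) := by
  obtain ⟨k, rfl⟩ : ∃ k, n = k + 1 := ⟨n - 1, by omega⟩
  have hlast : vv (k + 1) k = 1 := by
    rw [vv, if_neg (by omega), if_neg (by
      rw [show k + (k + 1) = 2 * k + 1 by ring]; simp)]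
  ext i
  have h1 : (AA (k + 1) *ᵥ (fun i : Fin (k + 1) => vv (k + 1) i)) i
      = (∑ j : Fin k, if (i : ℕ) = j + 1 then vv (k + 1) j else 0) + vv (k + 1) i := by
    rw [Matrix.mulVec, dotProduct, Fin.sum_univ_castSucc]
    simp [AA, hlast]
  rw [h1]
  obtain ⟨i, hi⟩ := i
  rcases Nat.eq_zero_or_pos i with rfl | hpos
  · simp [Pi.single_apply]
  · have h2 : (∑ j : Fin k, if i = (j : ℕ) + 1 then vv (k + 1) j else 0) = vv (k + 1) (i - 1) := by
      rw [Finset.sum_eq_single ⟨i - 1, by omega⟩]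
      · rw [if_pos (by simp; omega)]
      · intro b _ hb
        rw [if_neg]
        intro h; apply hb; ext; simp; omega
      · simp
    simp only [h2, Pi.add_apply, Pi.smul_apply, Pi.single_apply, Fin.mk.injEq, smul_eq_mul]
    rw [if_neg (by omega)]
    by_cases h1' : i = 1
    · subst h1'
      by_cases he : Even (k + 1)
      · have : ¬ Even (1 + (k + 1)) := by rw [add_comm, Nat.even_add_one]; simpa using he
        simp [vv, he, this]; norm_num
      · have : Even (1 + (k + 1)) := by rw [add_comm, Nat.even_add_one]; exact he
        simp [vv, he, this]; norm_num
    · rw [if_neg h1']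
      have hi0 : i ≠ 0 := by omega
      have hi1 : i - 1 ≠ 0 := by omega
      by_cases he : Even (i + (k + 1))
      · have : ¬ Even (i - 1 + (k + 1)) := by
          intro h
          rw [show i + (k + 1) = i - 1 + (k + 1) + 1 by omega, Nat.even_add_one] at he
          exact he h
        rw [vv, if_neg hi1, if_neg this, vv, if_neg hi0, if_pos he]; norm_num
      · have : Even (i - 1 + (k + 1)) := by
          rw [show i + (k + 1) = i - 1 + (k + 1) + 1 by omega, Nat.even_add_one] at he
          simpa using he
        rw [vv, if_neg hi1, if_pos this, vv, if_neg hi0, if_neg he]; norm_num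

theorem lower_aux {n : ℕ} (hn : 3 ≤ n) :
    ∃ (K : Set (Fin n → ℝ)) (A : Matrix (Fin n) (Fin n) ℝ), MemP (n + 1) K ∧ KPrimitive K A ∧
      (if Even n then n * (n - 1) - 1 else n * (n - 1)) < expnt K A := by
  set A := AA n with hA
  set z : Fin n → ℝ := Pi.single ⟨0, by omega⟩ 1 with hz
  set v : Fin n → ℝ := fun i => vv n i with hv
  have hpow : ∀ j (hj : j < n), A ^ j *ᵥ z = Pi.single ⟨j, hj⟩ 1 := by
    intro j
    induction j with
    | zero => intro _; rw [pow_zero, Matrix.one_mulVec]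
    | succ j ih =>
      intro hj
      rw [pow_succ', ← Matrix.mulVec_mulVec, ih (by omega), hA, AA_single hj]
  have hpown : A ^ n *ᵥ z = v := by
    have h1 : A ^ n = A * A ^ (n - 1) := by rw [← pow_succ', show n - 1 + 1 = n by omega]
    rw [h1, ← Matrix.mulVec_mulVec, hpow (n - 1) (by omega), hA, AA_last (by omega)]
  have hb : 0 < vv n 0 := by simp only [vv, if_true]; split_ifs <;> norm_num
  have hc : 0 < 3 - vv n 0 := by simp only [vv, if_true]; split_ifs <;> norm_num
  have hAz : A *ᵥ z = Pi.single ⟨1, by omega⟩ 1 := by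
    have := hpow 1 (by omega)
    rwa [pow_one] at this
  have hrel : A ^ (n + 1) *ᵥ z = vv n 0 • z + (3 - vv n 0) • (A *ᵥ z) := by
    rw [pow_succ', ← Matrix.mulVec_mulVec, hpown, hA, hv, AA_vv (by omega), ← hA, hAz]
  set y : Fin (n + 1) → Fin n → ℝ := fun a => A ^ (a : ℕ) *ᵥ z with hy
  have hy1 : ∀ j : Fin n, y j.castSucc = Pi.single j 1 := fun j => hpow j j.2
  have hy2 : y (Fin.last n) = v := hpown
  have hmem : MemP (n + 1) (ConeGen y) := by
    by_cases he : Even n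
    · refine memP_of hy1 hy2 (p := ⟨0, by omega⟩) (q := ⟨1, by omega⟩) (r := ⟨2, by omega⟩)
        hb ?_ (by simp) ?_
      · have : ¬ Even (1 + n) := by rw [add_comm, Nat.even_add_one]; simpa using he
        simp [hv, vv, this]
      · have : Even (2 + n) := by simp [Nat.even_add, he]
        simp [hv, vv, this]
    · refine memP_of hy1 hy2 (p := ⟨0, by omega⟩) (q := ⟨2, by omega⟩) (r := ⟨1, by omega⟩)
        hb ?_ (by simp) ?_
      · have : ¬ Even (2 + n) := by simpa [Nat.even_add] using he
        simp [hv, vv, this]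
      · have : Even (1 + n) := by rw [add_comm, Nat.even_add_one]; exact he
        simp [hv, vv, this]
  have hK := hmem.1.1
  have hprim : KPrimitive (ConeGen y) A := prim_of hK (by omega) hb hc hrel rfl
  refine ⟨ConeGen y, A, hmem, hprim, ?_⟩
  have hzK : z ∈ ConeGen y := by
    have := gen_mem y 0
    simpa [hy] using this
  have hz0 : z ≠ 0 := by simp [hz]
  -- general principle: a nonnegative functional vanishing at `A ^ k z`
  have principle : ∀ (f : (Fin n → ℝ) →ₗ[ℝ] ℝ) (k : ℕ), (∀ a, 0 ≤ f (y a)) → 0 < f z →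
      f (A ^ k *ᵥ z) = 0 → k < expnt (ConeGen y) A := by
    intro f k hf hfz hfk
    by_contra hle
    have hspec : 0 < expnt (ConeGen y) A ∧ KPositive (ConeGen y) (A ^ expnt (ConeGen y) A) :=
      Nat.sInf_mem (s := {k : ℕ | 0 < k ∧ KPositive (ConeGen y) (A ^ k)}) hprim.2
    have h1 := hspec.2 z hzK hz0
    obtain ⟨d, hd⟩ := Nat.exists_eq_add_of_le (not_lt.1 hle)
    have h2 := prim_pow_int hK hprim (by omega) h1 d
    have h3 : A ^ k *ᵥ z ∈ interior (ConeGen y) := by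
      rw [hd, add_comm (expnt (ConeGen y) A) d, pow_add_mulVec]; exact h2
    obtain ⟨c, hc, h4⟩ := int_dom h3 z
    obtain ⟨w, hw, h5⟩ := h4
    have h6 : 0 ≤ f (A ^ k *ᵥ z - c • z) := by
      rw [h5, map_sum]
      refine Finset.sum_nonneg fun a _ => ?_
      rw [map_smul]
      exact mul_nonneg (hw a) (hf a)
    rw [map_sub, hfk, map_smul, smul_eq_mul] at h6
    have := mul_pos hc hfz
    linarith
  have hrec : ∀ (f : (Fin n → ℝ) →ₗ[ℝ] ℝ) (k : ℕ), f (A ^ (k + (n + 1)) *ᵥ z) =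
      vv n 0 * f (A ^ k *ᵥ z) + (3 - vv n 0) * f (A ^ (k + 1) *ᵥ z) := by
    intro f k
    rw [pow_add_mulVec, hrel, Matrix.mulVec_add, Matrix.mulVec_smul, Matrix.mulVec_smul, map_add,
      map_smul, map_smul, pow_succ, ← Matrix.mulVec_mulVec]
    rfl
  by_cases he : Even n
  · rw [if_pos he]
    let f : (Fin n → ℝ) →ₗ[ℝ] ℝ := LinearMap.proj ⟨0, by omega⟩
    refine principle f _ ?_ (by simp [f, hz]) ?_
    · intro a
      refine Fin.lastCases ?_ (fun j => ?_) a
      · rw [hy2]; exact hb.le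
      · rw [hy1]
        simp only [f, LinearMap.proj_apply, Pi.single_apply]
        split_ifs <;> norm_num
    · refine zero_odd (h := fun k => f (A ^ k *ᵥ z)) hn (hrec f) ?_
      intro j h1 hj
      simp only [hpow j hj, f, LinearMap.proj_apply, Pi.single_apply, Fin.mk.injEq]
      rw [if_neg (by omega)]
  · rw [if_neg he]
    let f : (Fin n → ℝ) →ₗ[ℝ] ℝ :=
      LinearMap.proj ⟨0, by omega⟩ + (2 : ℝ) • LinearMap.proj ⟨1, by omega⟩
    have hfv : f v = 0 := by
      have : Even (1 + n) := by rw [add_comm, Nat.even_add_one]; exact he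
      simp [f, hv, vv, he, this]
    refine principle f _ ?_ (by simp [f, hz]) ?_
    · intro a
      refine Fin.lastCases ?_ (fun j => ?_) a
      · rw [hy2, hfv]
      · rw [hy1]
        simp only [f, LinearMap.add_apply, LinearMap.smul_apply, LinearMap.proj_apply,
          Pi.single_apply, smul_eq_mul]
        split_ifs <;> norm_num
    · refine zero_even (h := fun k => f (A ^ k *ᵥ z)) (by omega) (hrec f) ?_
      intro j h1 hj
      rcases hj.eq_or_lt with rfl | hj
      · simp only [hpown, hfv]
      · simp only [hpow j hj, f, LinearMap.add_apply, LinearMap.smul_apply, LinearMap.proj_apply,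
          Pi.single_apply, Fin.mk.injEq, smul_eq_mul]
        rw [if_neg (by omega), if_neg (by omega)]; norm_num

end lower

end MaxExp

/-- For `m ≥ 4`, the maximum of `γ(K)` over all non-simplicial polyhedral cones with `m`
extreme rays (i.e. `K ∈ P(m,n)` with `3 ≤ n < m`) is `m² - 3m + 3` if `m` is even and
`m² - 3m + 2` if `m` is odd. -/
theorem stmt_5 (m : ℕ) (hm : 4 ≤ m) :
    (∀ (n : ℕ) (K : Set (Fin n → ℝ)) (A : Matrix (Fin n) (Fin n) ℝ),
      3 ≤ n → n < m → MemP m K → KPrimitive K A →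
      expnt K A ≤ if Even m then m ^ 2 - 3 * m + 3 else m ^ 2 - 3 * m + 2) ∧
    (∃ (n : ℕ) (K : Set (Fin n → ℝ)) (A : Matrix (Fin n) (Fin n) ℝ),
      3 ≤ n ∧ n < m ∧ MemP m K ∧ KPrimitive K A ∧
      expnt K A = if Even m then m ^ 2 - 3 * m + 3 else m ^ 2 - 3 * m + 2) := by
  refine ⟨fun n K A hn hnm hP hA => MaxExp.upper hn hnm hP hA, ?_⟩
  obtain ⟨n, rfl⟩ : ∃ n, m = n + 1 := ⟨m - 1, by omega⟩
  have hn : 3 ≤ n := by omega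
  obtain ⟨K, A, hP, hA, hlt⟩ := MaxExp.lower_aux hn
  refine ⟨n, K, A, hn, by omega, hP, hA, ?_⟩
  have hup := MaxExp.upper hn (by omega) hP hA
  have hval : (n + 1) ^ 2 - 3 * (n + 1) + 2 = n * (n - 1) := by
    obtain ⟨k, rfl⟩ : ∃ k, n = k + 3 := ⟨n - 3, by omega⟩
    have h1 : (k + 3 + 1) ^ 2 = (k * k + 5 * k + 4) + 3 * (k + 3 + 1) := by ring
    rw [h1, Nat.add_sub_cancel, show k + 3 - 1 = k + 2 by omega]
    ring
  have hbig : 6 ≤ n * (n - 1) := 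
    le_trans (by norm_num) (Nat.mul_le_mul hn (show 2 ≤ n - 1 by omega))
  by_cases he : Even n
  · have he' : ¬ Even (n + 1) := by rw [Nat.even_add_one]; simpa using he
    rw [if_neg he'] at hup ⊢
    rw [if_pos he] at hlt
    omega
  · have he' : Even (n + 1) := by rw [Nat.even_add_one]; exact he
    rw [if_pos he'] at hup ⊢
    rw [if_neg he] at hlt
    omega
end
end

section
/- For every positive integer m ≥ 3: (a) every K ∈ P(m,3) and every K-primitive matrix A satisfy γ(A) ≤ 2m − 1; and (b) there exist K ∈ P(m,3) and a K-primitive matrix A with γ(A) = 2m − 1. Hence the maximum of γ(K) over K ∈ P(m,3) equals 2m − 1. -/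
open Matrix Set Real

noncomputable section

namespace Expo

abbrev V3 := Fin 3 → ℝ

/-- `u` lies in the face generated by `v`. -/
def dom (K : Set V3) (u v : V3) : Prop := ∃ c : ℝ, 0 < c ∧ v - c • u ∈ K

section basic
variable {K : Set V3} (hK : IsProperCone K)

theorem add_mem_K (hK : IsProperCone K) {x y : V3} (hx : x ∈ K) (hy : y ∈ K) : x + y ∈ K :=
  hK.2.1 x hx y hy

theorem smul_mem_K (hK : IsProperCone K) {c : ℝ} {x : V3} (hc : 0 ≤ c) (hx : x ∈ K) :
    c • x ∈ K := hK.2.2.1 c hc x hx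

theorem zero_mem_K (hK : IsProperCone K) : (0 : V3) ∈ K := by
  obtain ⟨x, hx⟩ := hK.2.2.2.2
  simpa using smul_mem_K hK (le_refl (0:ℝ)) (interior_subset hx)

theorem pointed (hK : IsProperCone K) {x : V3} (hx : x ∈ K) (hx' : -x ∈ K) : x = 0 := by
  have : x ∈ K ∩ (-K) := ⟨hx, by simpa using hx'⟩
  rw [hK.2.2.2.1] at this
  simpa using this

theorem sum_mem_K (hK : IsProperCone K) {ι : Type*} (s : Finset ι) (f : ι → V3)
    (h : ∀ i ∈ s, f i ∈ K) : ∑ i ∈ s, f i ∈ K := by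
  classical
  induction s using Finset.induction_on with
  | empty => simpa using zero_mem_K hK
  | insert a s ha ih =>
    rw [Finset.sum_insert ha]
    exact add_mem_K hK (h a (by simp)) (ih (fun i hi => h i (by simp [hi])))

/-- If a sum of members of a pointed cone is zero, each is zero. -/
theorem sum_zero (hK : IsProperCone K) {ι : Type*} (s : Finset ι) (f : ι → V3)
    (h : ∀ i ∈ s, f i ∈ K) (h0 : ∑ i ∈ s, f i = 0) : ∀ i ∈ s, f i = 0 := by
  classical
  intro i hi
  refine pointed hK (h i hi) ?_
  have h1 := Finset.add_sum_erase s f hi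
  have h2 : - f i = ∑ j ∈ s.erase i, f j := by
    rw [h0] at h1
    exact neg_eq_of_add_eq_zero_right h1
  rw [h2]
  exact sum_mem_K hK _ _ (fun j hj => h j (Finset.mem_of_mem_erase hj))

theorem int_add (hK : IsProperCone K) {u v : V3} (hu : u ∈ interior K) (hv : v ∈ K) :
    u + v ∈ interior K := by
  have ho : IsOpen ((fun x : V3 => x - v) ⁻¹' interior K) :=
    isOpen_interior.preimage (by fun_prop)
  have hs : ((fun x : V3 => x - v) ⁻¹' interior K) ⊆ K := by
    intro x hx
    have := add_mem_K hK (interior_subset hx) hv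
    simpa using this
  exact interior_maximal hs ho (by simpa using hu)

theorem int_smul (hK : IsProperCone K) {c : ℝ} {u : V3} (hc : 0 < c) (hu : u ∈ interior K) :
    c • u ∈ interior K := by
  have ho : IsOpen ((fun x : V3 => c⁻¹ • x) ⁻¹' interior K) :=
    isOpen_interior.preimage (by fun_prop)
  have hs : ((fun x : V3 => c⁻¹ • x) ⁻¹' interior K) ⊆ K := by
    intro x hx
    have := smul_mem_K hK hc.le (interior_subset hx)
    simpa [smul_smul, hc.ne'] using this
  exact interior_maximal hs ho (by simpa [smul_smul, hc.ne'] using hu)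

theorem int_dom {v : V3} (hv : v ∈ interior K) (u : V3) : dom K u v := by
  have hcont : Filter.Tendsto (fun c : ℝ => v - c • u) (nhdsWithin 0 (Set.Ioi 0)) (nhds v) := by
    have h : Continuous (fun c : ℝ => v - c • u) := by fun_prop
    have h2 := h.tendsto 0
    simp only [zero_smul, sub_zero] at h2
    exact h2.mono_left nhdsWithin_le_nhds
  have h1 : ∀ᶠ c in nhdsWithin (0:ℝ) (Set.Ioi 0), v - c • u ∈ K :=
    hcont.eventually (mem_interior_iff_mem_nhds.1 hv)
  obtain ⟨c, hc, hc0⟩ := (h1.and self_mem_nhdsWithin).exists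
  exact ⟨c, hc0, hc⟩

theorem dom_int (hK : IsProperCone K) {u v : V3} (hu : u ∈ interior K) (h : dom K u v) :
    v ∈ interior K := by
  obtain ⟨c, hc, h⟩ := h
  have := int_add hK (int_smul hK hc hu) h
  simpa using this

theorem dom_refl (hK : IsProperCone K) (u : V3) : dom K u u :=
  ⟨1, one_pos, by simpa using zero_mem_K hK⟩

theorem dom_trans (hK : IsProperCone K) {u v w : V3} (h1 : dom K u v) (h2 : dom K v w) :
    dom K u w := by
  obtain ⟨c, hc, h1⟩ := h1
  obtain ⟨d, hd, h2⟩ := h2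
  refine ⟨d * c, mul_pos hd hc, ?_⟩
  have := add_mem_K hK h2 (smul_mem_K hK hd.le h1)
  simpa [smul_sub, smul_smul] using this

theorem dom_map {A : Matrix (Fin 3) (Fin 3) ℝ} (hA : KNonneg K A) {u v : V3}
    (h : dom K u v) : dom K (A.mulVec u) (A.mulVec v) := by
  obtain ⟨c, hc, h⟩ := h
  refine ⟨c, hc, ?_⟩
  have := hA _ h
  simpa [Matrix.mulVec_sub, Matrix.mulVec_smul] using this

theorem nonneg_pow {A : Matrix (Fin 3) (Fin 3) ℝ} (hA : KNonneg K A) (n : ℕ) :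
    KNonneg K (A ^ n) := by
  induction n with
  | zero => intro x hx; simpa using hx
  | succ n ih =>
    intro x hx
    rw [pow_succ, ← Matrix.mulVec_mulVec]
    exact ih _ (hA x hx)

theorem pow_add_mulVec (A : Matrix (Fin 3) (Fin 3) ℝ) (a b : ℕ) (x : V3) :
    (A ^ (a + b)).mulVec x = (A ^ b).mulVec ((A ^ a).mulVec x) := by
  rw [Matrix.mulVec_mulVec, ← pow_add, add_comm]

theorem exists_ne : ∃ v : V3, v ≠ 0 := ⟨1, one_ne_zero⟩

theorem int_map (hK : IsProperCone K) {A : Matrix (Fin 3) (Fin 3) ℝ} (hA : KPrimitive K A)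
    {u : V3} (hu : u ∈ interior K) : A.mulVec u ∈ interior K := by
  obtain ⟨hn, k, hk, hp⟩ := hA
  obtain ⟨k, rfl⟩ : ∃ j, k = j + 1 := ⟨k - 1, by omega⟩
  by_cases hu0 : u = 0
  · subst hu0
    simpa using hu
  have h1 := hp u (interior_subset hu) hu0
  rw [pow_add_mulVec, pow_one] at h1
  exact dom_int hK h1 (dom_map hn (int_dom hu _))

theorem int_map_pow (hK : IsProperCone K) {A : Matrix (Fin 3) (Fin 3) ℝ} (hA : KPrimitive K A)
    (n : ℕ) {u : V3} (hu : u ∈ interior K) : (A ^ n).mulVec u ∈ interior K := by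
  induction n with
  | zero => simpa using hu
  | succ n ih =>
    rw [pow_add_mulVec, pow_one]
    exact int_map hK hA ih

theorem not_int_of_ext (hK : IsProperCone K) {x : V3} (hx : IsExtremeVec K x) :
    x ∉ interior K := by
  intro hi
  have key : ∀ v : V3, ∃ b : ℝ, v = b • x := by
    intro v
    obtain ⟨c, hc, h1⟩ := int_dom hi v
    obtain ⟨d, hd, h2⟩ := int_dom hi (-v)
    have hcd : 0 < c + d := by positivity
    have h3 := hx.2.2 ((d / (c + d)) • (x - c • v)) (smul_mem_K hK (by positivity) h1)
      ((c / (c + d)) • (x - d • -v)) (smul_mem_K hK (by positivity) h2) (by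
        ext i
        simp
        field_simp
        ring)
    obtain ⟨⟨a, -, ha⟩, -⟩ := h3
    refine ⟨(d / (c + d) - a) * ((c + d) / (c * d)), ?_⟩
    ext i
    have := congrFun ha i
    simp at this ⊢
    field_simp at this ⊢
    linarith
  obtain ⟨a, ha⟩ := key ![1, 0, 0]
  obtain ⟨b, hb⟩ := key ![0, 1, 0]
  have h1 := congrFun ha 0
  have h2 := congrFun ha 1
  have h3 := congrFun hb 1
  simp at h1 h2 h3
  rcases h2 with h | h
  · simp [h] at h1
  · simp [h] at h3

/-- Supporting functional. -/
theorem support (hK : IsProperCone K) {x : V3} (hx : x ∈ K) (hi : x ∉ interior K) :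
    ∃ f : V3 →ₗ[ℝ] ℝ, (∀ y ∈ K, 0 ≤ f y) ∧ (∀ y ∈ interior K, 0 < f y) ∧ f x = 0 := by
  have hconv : Convex ℝ K := by
    intro y hy z hz a b ha hb _
    exact add_mem_K hK (smul_mem_K hK ha hy) (smul_mem_K hK hb hz)
  obtain ⟨f, hf⟩ := geometric_hahn_banach_open_point hconv.interior isOpen_interior hi
  obtain ⟨u, hu⟩ := hK.2.2.2.2
  have hfK : ∀ y ∈ K, f y ≤ 0 := by
    intro y hy
    by_contra hpos
    push Not at hpos
    obtain ⟨n, hn⟩ := exists_nat_gt ((f x - f u) / f y)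
    have h := hf (u + (n : ℝ) • y) (int_add hK hu (smul_mem_K hK (by positivity) hy))
    rw [div_lt_iff₀ hpos] at hn
    simp at h
    linarith
  have hfx : f x = 0 := by
    apply le_antisymm (hfK x hx)
    by_contra hneg
    push Not at hneg
    have hu' : f u < f x := hf u hu
    have h := hf ((f x / (2 * f u)) • u)
      (int_smul hK (div_pos_of_neg_of_neg hneg (by linarith)) hu)
    have hne : f u ≠ 0 := by linarith
    simp only [map_smul, smul_eq_mul] at h
    have h2 : f x / (2 * f u) * f u = f x / 2 := by field_simp
    rw [h2] at h
    linarith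
  refine ⟨-(f : V3 →ₗ[ℝ] ℝ), ?_, ?_, ?_⟩
  · intro y hy
    simpa using hfK y hy
  · intro y hy
    have := hf y hy
    rw [hfx] at this
    simpa using this
  · simpa using hfx

theorem f_dom {f : V3 →ₗ[ℝ] ℝ} (hf : ∀ y ∈ K, 0 ≤ f y) {u v : V3}
    (hu : u ∈ K) (h : dom K u v) (hv : f v = 0) : f u = 0 := by
  obtain ⟨c, hc, h⟩ := h
  have h1 := hf _ h
  have h2 := hf _ hu
  simp [hv] at h1
  nlinarith

theorem three_dep (f : V3 →ₗ[ℝ] ℝ) {u : V3} (hu : f u ≠ 0) (x y z : V3)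
    (hx : f x = 0) (hy : f y = 0) (hz : f z = 0) :
    ∃ a b c : ℝ, (a ≠ 0 ∨ b ≠ 0 ∨ c ≠ 0) ∧ a • x + b • y + c • z = 0 := by
  have hf : ∀ v : V3, f v = ∑ i, v i * f (Pi.single i 1) := by
    intro v
    conv_lhs => rw [pi_eq_sum_univ' v]
    simp [map_sum, Pi.single]
  set w : V3 := fun i => f (Pi.single i 1) with hw
  have hw0 : w ≠ 0 := by
    intro h
    apply hu
    rw [hf]
    have : ∀ i, f (Pi.single i 1) = 0 := fun i => congrFun h i
    simp [this]
  have h1 : ∃ v, v ≠ 0 ∧ (Matrix.of ![x, y, z]).mulVec v = 0 := by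
    refine ⟨w, hw0, ?_⟩
    rw [hf] at hx hy hz
    ext i
    fin_cases i
    · simpa [Matrix.mulVec, dotProduct] using hx
    · simpa [Matrix.mulVec, dotProduct] using hy
    · simpa [Matrix.mulVec, dotProduct] using hz
  rw [Matrix.exists_mulVec_eq_zero_iff, ← Matrix.exists_vecMul_eq_zero_iff] at h1
  obtain ⟨v, hv, h⟩ := h1
  refine ⟨v 0, v 1, v 2, ?_, ?_⟩
  · by_contra hc
    push Not at hc
    apply hv
    ext i
    fin_cases i
    · exact hc.1
    · exact hc.2.1
    · exact hc.2.2
  · ext i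
    have := congrFun h i
    simp [Matrix.vecMul, dotProduct, Fin.sum_univ_three] at this ⊢
    linarith

theorem sq_int (hK : IsProperCone K) {B : Matrix (Fin 3) (Fin 3) ℝ} (hB : KNonneg K B)
    {x : V3} (hx : x ∈ K) (hx0 : x ≠ 0) (hd : dom K x (B.mulVec x)) {k : ℕ}
    (hk : (B ^ k).mulVec x ∈ interior K) : (B ^ 2).mulVec x ∈ interior K := by
  by_contra hni
  obtain ⟨f, hf, hfi, hf2⟩ := support hK (nonneg_pow hB 2 x hx) hni
  have hB2 : (B ^ 2).mulVec x = B.mulVec (B.mulVec x) := by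
    rw [pow_two, Matrix.mulVec_mulVec]
  have hf1 : f (B.mulVec x) = 0 := by
    refine f_dom hf (hB x hx) ?_ hf2
    rw [hB2]
    exact dom_map hB hd
  have hf0 : f x = 0 := f_dom hf hx hd hf1
  have hfk := hfi _ hk
  have hpow : ∀ n, (B ^ (n + 1)).mulVec x = (B ^ n).mulVec (B.mulVec x) := by
    intro n
    rw [Matrix.mulVec_mulVec, pow_succ]
  obtain ⟨a, b, c, hne, hrel⟩ := three_dep f hfk.ne' x (B.mulVec x) ((B ^ 2).mulVec x) hf0 hf1 hf2
  have hrel' : ∀ n, a * f ((B ^ n).mulVec x) + b * f ((B ^ (n + 1)).mulVec x)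
      + c * f ((B ^ (n + 2)).mulVec x) = 0 := by
    intro n
    have h := congrArg (fun v => f ((B ^ n).mulVec v)) hrel
    simp only [Matrix.mulVec_add, Matrix.mulVec_smul, map_add, map_smul, smul_eq_mul,
      Matrix.mulVec_zero, map_zero] at h
    rw [hpow, ← h]
    congr 3
    rw [Matrix.mulVec_mulVec, ← pow_add]
  have hall : ∀ n, f ((B ^ n).mulVec x) = 0 ∧ f ((B ^ (n + 1)).mulVec x) = 0 := by
    intro n
    induction n with
    | zero => exact ⟨by simpa using hf0, by simpa using hf1⟩
    | succ n ih =>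
      refine ⟨ih.2, ?_⟩
      by_cases hc : c = 0
      · by_cases hb : b = 0
        · subst hc hb
          have ha : a ≠ 0 := by simpa using hne
          simp [ha, hx0] at hrel
        · have h := hrel' (n + 1)
          rw [ih.2, hc] at h
          simpa [hb] using h
      · have h := hrel' n
        rw [ih.1, ih.2] at h
        simpa [hc] using h
  exact hfk.ne' (hall k).1

end basic

/-- Combinatorial core: from every vertex one reaches a closed walk economically. -/
theorem comb {p : ℕ} (W : ℕ → Fin p → Fin p → Prop)
    (h0 : ∀ i, W 0 i i)
    (hc : ∀ a b i j k, W a i j → W b j k → W (a + b) i k)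
    (h1 : ∀ i, ∃ j, W 1 i j)
    (hnot : ¬ ∃ f : Fin p → Fin p, ∀ i j, W 1 i j → j = f i) (i : Fin p) :
    ∃ l s j, 0 < s ∧ l + 2 * s ≤ 2 * p - 1 ∧ W l i j ∧ W s j j := by
  have hp : 0 < p := i.pos
  choose f hf using h1
  have hw : ∀ n j, W n j (f^[n] j) := by
    intro n
    induction n with
    | zero => intro j; exact h0 j
    | succ n ih =>
      intro j
      rw [Function.iterate_succ_apply']
      exact hc n 1 _ _ _ (ih j) (hf _)
  have hw' : ∀ a b, a ≤ b → W (b - a) (f^[a] i) (f^[b] i) := by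
    intro a b hab
    have := hw (b - a) (f^[a] i)
    rwa [← Function.iterate_add_apply, Nat.sub_add_cancel hab] at this
  by_cases hinj : ∃ a b, a < b ∧ b < p ∧ f^[a] i = f^[b] i
  · obtain ⟨a, b, hab, hb, he⟩ := hinj
    refine ⟨a, b - a, f^[a] i, by omega, by omega, hw a i, ?_⟩
    have := hw' a b hab.le
    rwa [← he] at this
  have hi : Function.Injective (fun k : Fin p => f^[k.1] i) := by
    intro a b hab
    by_contra hne
    rcases lt_or_gt_of_ne (fun h => hne (Fin.ext h)) with h | h
    · exact hinj ⟨a, b, h, b.2, hab⟩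
    · exact hinj ⟨b, a, h, a.2, hab.symm⟩
  have hs : Function.Surjective (fun k : Fin p => f^[k.1] i) := Finite.surjective_of_injective hi
  obtain ⟨⟨a, ha⟩, hae⟩ := hs (f^[p] i)
  simp only at hae
  by_cases ha0 : 0 < a
  · refine ⟨a, p - a, f^[a] i, by omega, by omega, hw a i, ?_⟩
    have := hw' a p ha.le
    rwa [← hae] at this
  have ha0' : a = 0 := by omega
  subst ha0'
  simp only [Function.iterate_zero, id] at hae
  have hx : ∃ u v, W 1 u v ∧ v ≠ f u := by
    by_contra hcon
    push Not at hcon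
    exact hnot ⟨f, hcon⟩
  obtain ⟨u, v, huv, hne⟩ := hx
  obtain ⟨⟨a, ha⟩, rfl⟩ := hs u
  obtain ⟨⟨b, hb⟩, rfl⟩ := hs v
  simp only at huv hne
  rw [← Function.iterate_succ_apply' f a i] at hne
  rcases Nat.lt_or_ge a b with hab | hab
  · have hb2 : b ≠ a + 1 := by
      rintro rfl
      exact hne rfl
    refine ⟨0, a + 1 + (p - b), i, by omega, by omega, h0 i, ?_⟩
    refine hc _ _ _ _ _ (hc _ _ _ _ _ (hw a i) huv) ?_
    have := hw' b p hb.le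
    rwa [← hae] at this
  · refine ⟨b, (a - b) + 1, f^[b] i, by omega, ?_, hw b i, hc _ _ _ _ _ (hw' b a hab) huv⟩
    have : ¬ (a = p - 1 ∧ b = 0) := by
      rintro ⟨rfl, rfl⟩
      apply hne
      simp only [Nat.succ_eq_add_one, Nat.sub_add_cancel hp, ← hae, Function.iterate_zero, id]
    omega

theorem gen_mem {p : ℕ} (g : Fin p → V3) (i : Fin p) : g i ∈ ConeGen g := by
  classical
  refine ⟨fun j => if j = i then 1 else 0, fun j => by dsimp only; split_ifs <;> norm_num, ?_⟩
  simp [ite_smul]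

theorem pos_of_gens {K : Set V3} (hK : IsProperCone K) {p : ℕ} {g : Fin p → V3}
    (hg : K = ConeGen g) {B : Matrix (Fin 3) (Fin 3) ℝ} (hB : KNonneg K B)
    (h : ∀ i, B.mulVec (g i) ∈ interior K) : KPositive K B := by
  intro x hx hx0
  have hx' := hx
  rw [hg] at hx'
  obtain ⟨c, hc, rfl⟩ := hx'
  have hgm : ∀ i, g i ∈ K := fun i => by rw [hg]; exact gen_mem g i
  have : ∃ i, c i ≠ 0 := by
    by_contra hcon
    push Not at hcon
    simp [hcon] at hx0
  obtain ⟨i, hi⟩ := this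
  have hci : 0 < c i := lt_of_le_of_ne (hc i) (Ne.symm hi)
  refine dom_int hK (h i) (dom_map hB ⟨c i, hci, ?_⟩)
  rw [← Finset.add_sum_erase Finset.univ (fun j => c j • g j) (Finset.mem_univ i), add_sub_cancel_left]
  exact sum_mem_K hK _ _ (fun j _ => smul_mem_K hK (hc j) (hgm j))

theorem upper {K : Set V3} (hK : IsProperCone K) {p : ℕ} {g : Fin p → V3}
    (hg : K = ConeGen g) (hext : ∀ i, IsExtremeVec K (g i))
    {A : Matrix (Fin 3) (Fin 3) ℝ} (hA : KPrimitive K A) :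
    0 < p ∧ expnt K A ≤ 2 * p - 1 := by
  have hgm : ∀ i, g i ∈ K := fun i => (hext i).1
  have hg0 : ∀ i, g i ≠ 0 := fun i => (hext i).2.1
  have hp : 0 < p := by
    rcases Nat.eq_zero_or_pos p with h | h
    · subst h
      exfalso
      obtain ⟨u, hu⟩ := hK.2.2.2.2
      have hz : ∀ x ∈ K, x = 0 := by
        intro x hx
        rw [hg] at hx
        obtain ⟨c, -, rfl⟩ := hx
        simp
      obtain ⟨v, hv⟩ := exists_ne
      obtain ⟨c, hc, h⟩ := int_dom hu v
      have h1 := hz _ h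
      rw [hz u (interior_subset hu)] at h1
      simp [hc.ne', hv] at h1
    · exact h
  refine ⟨hp, ?_⟩
  obtain ⟨hn, k, hk, hpos⟩ := id hA
  refine Nat.sInf_le ⟨by omega, ?_⟩
  refine pos_of_gens hK hg (nonneg_pow hn _) ?_
  intro i
  -- expansions of `A g i`
  have hexp : ∀ i, ∃ c : Fin p → ℝ, (∀ j, 0 ≤ c j) ∧ A.mulVec (g i) = ∑ j, c j • g j := by
    intro i
    have := hn _ (hgm i)
    rw [hg] at this
    exact this
  have hAne : ∀ i, A.mulVec (g i) ≠ 0 := by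
    intro i h
    have h1 := hpos _ (hgm i) (hg0 i)
    obtain ⟨j, rfl⟩ : ∃ j, k = 1 + j := ⟨k - 1, by omega⟩
    rw [pow_add_mulVec, pow_one, h, Matrix.mulVec_zero] at h1
    have := int_add hK h1 (hgm i)
    rw [zero_add] at this
    exact not_int_of_ext hK (hext i) this
  have hedge : ∀ (i : Fin p) (c : Fin p → ℝ), (∀ j, 0 ≤ c j) → A.mulVec (g i) = ∑ j, c j • g j →
      ∀ j, c j ≠ 0 → dom K (g j) (A.mulVec (g i)) := by
    intro i c hc he j hj
    refine ⟨c j, lt_of_le_of_ne (hc j) (Ne.symm hj), ?_⟩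
    rw [he, ← Finset.add_sum_erase Finset.univ (fun j => c j • g j) (Finset.mem_univ j),
      add_sub_cancel_left]
    exact sum_mem_K hK _ _ (fun j _ => smul_mem_K hK (hc j) (hgm j))
  obtain ⟨l, s, j, hs, hls, hl, hsj⟩ := comb (p := p)
    (fun n i j => dom K (g j) ((A ^ n).mulVec (g i)))
    (fun i => by simpa using dom_refl hK (g i))
    (fun a b i j k h1 h2 => by
      rw [pow_add_mulVec]
      exact dom_trans hK h2 (dom_map (nonneg_pow hn b) h1))
    (fun i => by
      obtain ⟨c, hc, he⟩ := hexp i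
      have : ∃ j, c j ≠ 0 := by
        by_contra hcon
        push Not at hcon
        apply hAne i
        rw [he]
        simp [hcon]
      obtain ⟨j, hj⟩ := this
      refine ⟨j, ?_⟩
      rw [pow_one]
      exact hedge i c hc he j hj)
    (by
      rintro ⟨f, hf⟩
      simp only [pow_one] at hf
      have hAf : ∀ i, ∃ d : ℝ, 0 ≤ d ∧ A.mulVec (g i) = d • g (f i) := by
        intro i
        obtain ⟨c, hc, he⟩ := hexp i
        refine ⟨c (f i), hc _, ?_⟩
        rw [he]
        refine Finset.sum_eq_single (f i) ?_ (by simp)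
        intro j _ hj
        have : c j = 0 := by
          by_contra hcj
          exact hj (hf i j (hedge i c hc he j hcj))
        simp [this]
      have hAn : ∀ n, ∃ d : ℝ, ∃ j, 0 ≤ d ∧ (A ^ n).mulVec (g i) = d • g j := by
        intro n
        induction n with
        | zero => exact ⟨1, i, zero_le_one, by simp⟩
        | succ n ih =>
          obtain ⟨d, j, hd, h⟩ := ih
          obtain ⟨d', hd', h'⟩ := hAf j
          refine ⟨d * d', f j, by positivity, ?_⟩
          rw [pow_add_mulVec, pow_one, h, Matrix.mulVec_smul, h', smul_smul]
      obtain ⟨d, j, hd, h⟩ := hAn k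
      have h1 := hpos _ (hgm i) (hg0 i)
      rw [h] at h1
      apply not_int_of_ext hK (hext j)
      rcases hd.eq_or_lt with h0 | h0
      · rw [← h0, zero_smul] at h1
        simpa using int_add hK h1 (hgm j)
      · have := int_smul hK (inv_pos.2 h0) h1
        simpa [smul_smul, h0.ne'] using this) i
  have hsq : ((A ^ s) ^ 2).mulVec (g j) ∈ interior K := by
    refine sq_int hK (nonneg_pow hn s) (hgm j) (hg0 j) hsj (k := k) ?_
    rw [← pow_mul]
    have hsk : s * k = k + (s - 1) * k := by
      obtain ⟨t, rfl⟩ : ∃ t, s = t + 1 := ⟨s - 1, by omega⟩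
      simp
      ring
    rw [hsk, pow_add_mulVec]
    exact int_map_pow hK hA _ (hpos _ (hgm j) (hg0 j))
  rw [← pow_mul] at hsq
  have h3 : (A ^ (l + s * 2)).mulVec (g i) ∈ interior K := by
    rw [pow_add_mulVec]
    exact dom_int hK hsq (dom_map (nonneg_pow hn _) hl)
  have h4 : 2 * p - 1 = (l + s * 2) + (2 * p - 1 - (l + s * 2)) := by omega
  rw [h4, pow_add_mulVec]
  exact int_map_pow hK hA _ h3

/-- Removal of a redundant generator. -/
theorem remove {k : ℕ} (y : Fin (k + 1) → V3) (i : Fin (k + 1)) (c : Fin k → ℝ)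
    (hc : ∀ j, 0 ≤ c j) (h : y i = ∑ j, c j • y (i.succAbove j)) :
    ConeGen y = ConeGen (fun j => y (i.succAbove j)) := by
  ext x
  constructor
  · rintro ⟨d, hd, rfl⟩
    refine ⟨fun j => d i * c j + d (i.succAbove j), fun j => add_nonneg (mul_nonneg (hd _) (hc _)) (hd _), ?_⟩
    rw [Fin.sum_univ_succAbove _ i, h, Finset.smul_sum, ← Finset.sum_add_distrib]
    refine Finset.sum_congr rfl fun j _ => ?_
    rw [add_smul, smul_smul]
  · rintro ⟨d, hd, rfl⟩
    refine ⟨i.insertNth 0 d, ?_, ?_⟩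
    · intro j
      refine Fin.succAboveCases i ?_ ?_ j
      · simp
      · intro j
        simpa using hd j
    · rw [Fin.sum_univ_succAbove _ i]
      simp

theorem min_gens {K : Set V3} (hP : IsPolyhedralCone K) :
    ∃ (p : ℕ) (g : Fin p → V3), K = ConeGen g ∧ (∀ i, IsExtremeVec K (g i)) ∧
      ∀ i j (c : ℝ), 0 ≤ c → g i = c • g j → i = j := by
  classical
  obtain ⟨hK, hex⟩ := hP
  obtain ⟨p, ⟨g, hg⟩, hmin⟩ : ∃ p, (∃ g : Fin p → V3, K = ConeGen g) ∧
      ∀ q (y : Fin q → V3), q < p → K ≠ ConeGen y :=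
    ⟨Nat.find hex, Nat.find_spec hex, fun q y hq he => Nat.find_min hex hq ⟨y, he⟩⟩
  have hgm : ∀ i, g i ∈ K := fun i => by rw [hg]; exact gen_mem g i
  refine ⟨p, g, hg, ?_, ?_⟩
  · intro i
    obtain ⟨k, rfl⟩ : ∃ k, p = k + 1 := ⟨p - 1, by have := i.pos; omega⟩
    have hnr : ∀ c : Fin k → ℝ, (∀ j, 0 ≤ c j) → g i ≠ ∑ j, c j • g (i.succAbove j) := by
      intro c hc h
      exact hmin k _ (Nat.lt_succ_self k) (hg.trans (remove g i c hc h))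
    refine ⟨hgm i, ?_, ?_⟩
    · intro h
      apply hnr (fun _ => 0) (fun _ => le_refl _)
      simp [h]
    · intro u hu v hv huv
      rw [hg] at hu hv
      obtain ⟨a, ha, hua⟩ := hu
      obtain ⟨b, hb, hvb⟩ := hv
      rw [Fin.sum_univ_succAbove _ i] at hua hvb
      have hsum : g i = (a i + b i) • g i +
          ∑ j, (a (i.succAbove j) + b (i.succAbove j)) • g (i.succAbove j) := by
        conv_lhs => rw [huv, hua, hvb]
        simp only [add_smul, Finset.sum_add_distrib]
        abel
      have hab : 1 ≤ a i + b i := by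
        by_contra hlt
        push Not at hlt
        have hpos : 0 < 1 - (a i + b i) := by linarith
        apply hnr (fun j => (1 - (a i + b i))⁻¹ * (a (i.succAbove j) + b (i.succAbove j)))
          (fun j => mul_nonneg (inv_nonneg.2 hpos.le) (add_nonneg (ha _) (hb _)))
        have h2 : (1 - (a i + b i)) • g i =
            ∑ j, (a (i.succAbove j) + b (i.succAbove j)) • g (i.succAbove j) := by
          rw [sub_smul, one_smul, sub_eq_iff_eq_add, add_comm]
          exact hsum
        simp only [← smul_smul]
        rw [← Finset.smul_sum, ← h2, smul_smul, inv_mul_cancel₀ hpos.ne', one_smul]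
      have hz : (a i + b i - 1) • g i +
          ∑ j, (a (i.succAbove j) + b (i.succAbove j)) • g (i.succAbove j) = 0 := by
        rw [sub_smul, one_smul, sub_add_eq_add_sub, sub_eq_zero]
        exact hsum.symm
      have hSm : ∀ j ∈ Finset.univ,
          (a (i.succAbove j) + b (i.succAbove j)) • g (i.succAbove j) ∈ K :=
        fun j _ => smul_mem_K hK (add_nonneg (ha _) (hb _)) (hgm _)
      have hS0 : ∑ j, (a (i.succAbove j) + b (i.succAbove j)) • g (i.succAbove j) = 0 := by
        refine pointed hK (sum_mem_K hK _ _ hSm) ?_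
        rw [← eq_neg_iff_add_eq_zero] at hz
        rw [← hz]
        exact smul_mem_K hK (by linarith) (hgm i)
      have hj := sum_zero hK _ _ hSm hS0
      have hj2 : ∀ j, a (i.succAbove j) • g (i.succAbove j) = 0 ∧
          b (i.succAbove j) • g (i.succAbove j) = 0 := by
        intro j
        have h := hj j (Finset.mem_univ j)
        rw [add_smul] at h
        have h1 : a (i.succAbove j) • g (i.succAbove j) = 0 := by
          refine pointed hK (smul_mem_K hK (ha _) (hgm _)) ?_
          rw [neg_eq_of_add_eq_zero_right h]
          exact smul_mem_K hK (hb _) (hgm _)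
        refine ⟨h1, ?_⟩
        rwa [h1, zero_add] at h
      refine ⟨⟨a i, ha i, ?_⟩, ⟨b i, hb i, ?_⟩⟩
      · rw [hua, Finset.sum_eq_zero (fun j _ => (hj2 j).1), add_zero]
      · rw [hvb, Finset.sum_eq_zero (fun j _ => (hj2 j).2), add_zero]
  · intro i j c hc h
    by_contra hne
    obtain ⟨k, rfl⟩ : ∃ k, p = k + 1 := ⟨p - 1, by have := i.pos; omega⟩
    obtain ⟨j', rfl⟩ := Fin.exists_succAbove_eq (Ne.symm hne)
    refine hmin k _ (Nat.lt_succ_self k) (hg.trans (remove g i (fun t => if t = j' then c else 0)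
      (fun t => by split_ifs <;> simp [hc]) ?_))
    rw [h]
    simp [ite_smul]

/-- The ray spanned by a vector. -/
def ray (x : V3) : Set V3 := {y | ∃ c : ℝ, 0 ≤ c ∧ y = c • x}

theorem rays_sub {K : Set V3} (hK : IsProperCone K) {M : ℕ} {y : Fin M → V3}
    (hy : K = ConeGen y) : ExtremeRays K ⊆ Set.range (fun i => ray (y i)) := by
  rintro R ⟨x, hx, rfl⟩
  have hx' := hx.1
  rw [hy] at hx'
  obtain ⟨c, hc, he⟩ := hx'
  have hym : ∀ i, y i ∈ K := fun i => by rw [hy]; exact gen_mem y i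
  have : ∃ j, c j • y j ≠ 0 := by
    by_contra hcon
    push Not at hcon
    exact hx.2.1 (by rw [he]; simp [hcon])
  obtain ⟨j, hj⟩ := this
  have hcj : 0 < c j := lt_of_le_of_ne (hc j) (fun h => hj (by simp [← h]))
  obtain ⟨⟨a, ha, hya⟩, -⟩ := hx.2.2 (c j • y j) (smul_mem_K hK (hc j) (hym j))
    (∑ i ∈ Finset.univ.erase j, c i • y i)
    (sum_mem_K hK _ _ fun i _ => smul_mem_K hK (hc i) (hym i))
    (by rw [Finset.add_sum_erase Finset.univ (fun j => c j • y j) (Finset.mem_univ j)]; exact he)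
  have ha0 : 0 < a := lt_of_le_of_ne ha (fun h => hj (by rw [hya, ← h, zero_smul]))
  refine ⟨j, ?_⟩
  have hyj : y j = ((c j)⁻¹ * a) • x := by
    rw [← smul_smul, ← hya, smul_smul, inv_mul_cancel₀ hcj.ne', one_smul]
  have hxj : x = (a⁻¹ * c j) • y j := by
    rw [← smul_smul, hya, smul_smul, inv_mul_cancel₀ ha0.ne', one_smul]
  ext v
  constructor
  · rintro ⟨d, hd, rfl⟩
    exact ⟨d * ((c j)⁻¹ * a), by positivity, by rw [hyj, smul_smul]⟩
  · rintro ⟨d, hd, rfl⟩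
    refine ⟨d * (a⁻¹ * c j), by positivity, ?_⟩
    rw [← smul_smul, ← hxj]

theorem rays_fin {K : Set V3} (hK : IsProperCone K) {M : ℕ} {y : Fin M → V3}
    (hy : K = ConeGen y) : (ExtremeRays K).Finite ∧ (ExtremeRays K).ncard ≤ M := by
  have h := rays_sub hK hy
  have hf := Set.finite_range (fun i => ray (y i))
  refine ⟨hf.subset h, (Set.ncard_le_ncard h hf).trans ?_⟩
  rw [← Set.image_univ]
  refine (Set.ncard_image_le Set.finite_univ).trans ?_
  simp [Set.ncard_univ]

theorem main_upper {K : Set V3} (hP : IsPolyhedralCone K)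
    {A : Matrix (Fin 3) (Fin 3) ℝ} (hA : KPrimitive K A) :
    0 < (ExtremeRays K).ncard ∧ expnt K A ≤ 2 * (ExtremeRays K).ncard - 1 := by
  obtain ⟨p, g, hg, hext, hinj⟩ := min_gens hP
  obtain ⟨hp, hle⟩ := upper hP.1 hg hext hA
  have hfin := (rays_fin hP.1 hg).1
  have hsub : Set.range (fun i => ray (g i)) ⊆ ExtremeRays K := by
    rintro R ⟨i, rfl⟩
    exact ⟨g i, hext i, rfl⟩
  have hi : Function.Injective (fun i => ray (g i)) := by
    intro i j h
    have h1 : g i ∈ ray (g j) := by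
      have : ray (g i) = ray (g j) := h
      rw [← this]
      exact ⟨1, zero_le_one, by simp⟩
    obtain ⟨c, hc, h2⟩ := h1
    exact hinj i j c hc h2
  have hcard := Set.ncard_le_ncard hsub hfin
  rw [← Set.image_univ, Set.ncard_image_of_injective _ hi, Set.ncard_univ, Nat.card_fin] at hcard
  omega

theorem closed_gen {M : ℕ} (y : Fin M → V3) (hy : ∀ j, 0 < y j 0) : IsClosed (ConeGen y) := by
  apply IsSeqClosed.isClosed
  intro u x hu hx
  choose c hc hcu using hu
  have hx0 : Filter.Tendsto (fun n => u n 0) Filter.atTop (nhds (x 0)) :=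
    (continuous_apply 0).continuousAt.tendsto.comp hx
  obtain ⟨B, hB⟩ := hx0.bddAbove_range
  have hbound : ∀ n, c n ∈ Set.Icc (0 : Fin M → ℝ) (fun j => B / y j 0) := by
    intro n
    refine ⟨fun j => hc n j, fun j => ?_⟩
    rw [le_div_iff₀ (hy j)]
    have h1 : u n 0 ≤ B := hB ⟨n, rfl⟩
    refine le_trans ?_ h1
    rw [hcu n, Finset.sum_apply]
    exact Finset.single_le_sum (f := fun j => (c n j • y j) 0)
      (fun j _ => mul_nonneg (hc n j) (hy j).le) (Finset.mem_univ j)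
  obtain ⟨d, hd, φ, hφ, hlim⟩ := isCompact_Icc.tendsto_subseq hbound
  refine ⟨d, fun j => hd.1 j, ?_⟩
  have h1 : Filter.Tendsto (fun n => u (φ n)) Filter.atTop (nhds x) :=
    hx.comp hφ.tendsto_atTop
  have h2 : Filter.Tendsto (fun n => u (φ n)) Filter.atTop (nhds (∑ j, d j • y j)) := by
    have hcont : Continuous (fun e : Fin M → ℝ => ∑ j, e j • y j) := by fun_prop
    have := (hcont.tendsto d).comp hlim
    refine this.congr fun n => ?_
    simp [hcu]
  exact tendsto_nhds_unique h1 h2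

theorem interior_of_three {K : Set V3} (hadd : ∀ x ∈ K, ∀ y ∈ K, x + y ∈ K)
    (hsmul : ∀ (c : ℝ), 0 ≤ c → ∀ x ∈ K, c • x ∈ K) {p q r : V3} (hp : p ∈ K) (hq : q ∈ K)
    (hr : r ∈ K) (hdet : (Matrix.of ![p, q, r]).det ≠ 0) {a b c : ℝ} (ha : 0 < a) (hb : 0 < b)
    (hc : 0 < c) : a • p + b • q + c • r ∈ interior K := by
  set N : Matrix (Fin 3) (Fin 3) ℝ := Matrix.of ![p, q, r] with hN
  have hu : IsUnit N.det := isUnit_iff_ne_zero.2 hdet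
  have hcomb : ∀ e : V3, e ᵥ* N = e 0 • p + e 1 • q + e 2 • r := by
    intro e
    ext i
    simp [hN, Matrix.vecMul, dotProduct, Fin.sum_univ_three]
  have ho : IsOpen {v : V3 | ∀ i, 0 < (v ᵥ* N⁻¹) i} := by
    rw [Set.ofPred_forall]
    refine isOpen_iInter_of_finite fun i => ?_
    refine isOpen_lt continuous_const ?_
    exact (continuous_apply i).comp (Continuous.matrix_vecMul continuous_id continuous_const)
  refine interior_maximal ?_ ho ?_
  · intro v hv
    have h1 : v = (v ᵥ* N⁻¹) ᵥ* N := by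
      rw [Matrix.vecMul_vecMul, Matrix.nonsing_inv_mul _ hu, Matrix.vecMul_one]
    rw [h1, hcomb]
    exact hadd _ (hadd _ (hsmul _ (hv 0).le _ hp) _ (hsmul _ (hv 1).le _ hq)) _
      (hsmul _ (hv 2).le _ hr)
  · have h2 : a • p + b • q + c • r = ![a, b, c] ᵥ* N := by
      rw [hcomb]
      simp
    intro i
    rw [h2, Matrix.vecMul_vecMul, Matrix.mul_nonsing_inv _ hu, Matrix.vecMul_one]
    fin_cases i <;> simp [ha, hb, hc]

/-- The orbit points. -/
def X (r t : ℝ) (k : ℕ) : V3 := ![r ^ k, Real.cos (k * t), Real.sin (k * t)]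

/-- The matrix of the extremal example. -/
def Mx (r t : ℝ) : Matrix (Fin 3) (Fin 3) ℝ :=
  !![r, 0, 0; 0, Real.cos t, -Real.sin t; 0, Real.sin t, Real.cos t]

theorem Mx_X (r t : ℝ) (k : ℕ) : (Mx r t).mulVec (X r t k) = X r t (k + 1) := by
  have h : ((k + 1 : ℕ) : ℝ) * t = k * t + t := by push_cast; ring
  ext i
  fin_cases i
  · simp [Mx, X, Matrix.mulVec, dotProduct, Fin.sum_univ_three]; ring
  · simp only [X, h, Real.cos_add]
    simp [Mx, Matrix.mulVec, dotProduct, Fin.sum_univ_three]; ring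
  · simp only [X, h, Real.sin_add]
    simp [Mx, Matrix.mulVec, dotProduct, Fin.sum_univ_three]; ring

theorem Mx_pow_X (r t : ℝ) (n k : ℕ) : ((Mx r t) ^ n).mulVec (X r t k) = X r t (k + n) := by
  induction n with
  | zero => simp
  | succ n ih => rw [pow_add_mulVec, pow_one, ih, Mx_X, add_assoc]

/-- Angle, multiplier and Perron root of the example. -/
theorem params (m : ℕ) (hm : 3 ≤ m) : ∃ t a r : ℝ, 0 < a ∧ 0 < r ∧ 0 < Real.sin t ∧ 0 < t ∧
    Real.pi ≤ ((m : ℝ) - 1) * t ∧ ((m : ℝ) - 1) * t ≤ 2 * Real.pi ∧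
    Real.cos (m * t) = a * (1 + Real.cos t) ∧ Real.sin (m * t) = a * Real.sin t ∧
    r ^ m = a * (1 + r) := by
  have hm' : (3 : ℝ) ≤ m := by exact_mod_cast hm
  have hden : (0 : ℝ) < 2 * m - 1 := by linarith
  set h : ℝ := 2 * Real.pi / (2 * m - 1) with hh
  have hmul : h * (2 * m - 1) = 2 * Real.pi := by rw [hh]; field_simp
  have hpi := Real.pi_pos
  have h0 : 0 < h := by positivity
  have h5 : h * 5 ≤ 2 * Real.pi := by nlinarith
  have hcos : 0 < Real.cos h := Real.cos_pos_of_mem_Ioo ⟨by linarith, by linarith⟩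
  have hsin : 0 < Real.sin h := Real.sin_pos_of_pos_of_lt_pi h0 (by linarith)
  have hs2 : Real.sin (2 * h) = 2 * Real.sin h * Real.cos h := Real.sin_two_mul h
  have hc2 : Real.cos (2 * h) = 2 * Real.cos h ^ 2 - 1 := Real.cos_two_mul h
  have hmt : (m : ℝ) * (2 * h) = h + 2 * Real.pi := by linarith
  have ha : 0 < 1 / (2 * Real.cos h) := by positivity
  obtain ⟨r, hr, hreq⟩ : ∃ r : ℝ, 0 < r ∧ r ^ m = 1 / (2 * Real.cos h) * (1 + r) := by
    set a := 1 / (2 * Real.cos h)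
    have hcont : ContinuousOn (fun x : ℝ => x ^ m - a * (1 + x)) (Set.Icc 0 (1 + 2 * a)) := by
      fun_prop
    have hB : (1 + 2 * a) ^ 2 ≤ (1 + 2 * a) ^ m :=
      pow_le_pow_right₀ (by linarith) (by omega)
    have hmem : (0 : ℝ) ∈ Set.Icc ((fun x : ℝ => x ^ m - a * (1 + x)) 0)
        ((fun x : ℝ => x ^ m - a * (1 + x)) (1 + 2 * a)) := by
      constructor
      · have : m ≠ 0 := by omega
        simp [this, ha.le]
      · simp only
        nlinarith
    obtain ⟨r, hr, hr0⟩ := intermediate_value_Icc (by linarith) hcont hmem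
    simp only at hr0
    refine ⟨r, lt_of_le_of_ne hr.1 ?_, by linarith⟩
    rintro rfl
    have : m ≠ 0 := by omega
    simp [this] at hr0
    linarith
  refine ⟨2 * h, 1 / (2 * Real.cos h), r, ha, hr, by rw [hs2]; positivity, by positivity,
    by nlinarith, by nlinarith, ?_, ?_, hreq⟩
  · rw [hmt, Real.cos_add_two_pi, hc2]
    field_simp
    ring
  · rw [hmt, Real.sin_add_two_pi, hs2]
    field_simp

/-- Auxiliary sequence of determinants. -/
def Hq (r t : ℝ) (q : ℕ) : ℝ :=
  r * Real.sin t - r ^ q * Real.sin (q * t) + r ^ (q + 1) * Real.sin (((q : ℝ) - 1) * t)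

theorem Hq_step (r t : ℝ) (q : ℕ) : Hq r t (q + 1) =
    Hq r t q + r ^ q * (1 + r ^ 2 - 2 * r * Real.cos t) * Real.sin (q * t) := by
  have h1 : ((q + 1 : ℕ) : ℝ) * t = q * t + t := by push_cast; ring
  have h2 : (((q + 1 : ℕ) : ℝ) - 1) * t = q * t := by push_cast; ring
  have h3 : ((q : ℝ) - 1) * t = q * t - t := by ring
  simp only [Hq, h1, h2, h3, Real.sin_add, Real.sin_sub]
  ring

theorem Hq_zero (r t : ℝ) : Hq r t 0 = 0 := by
  simp [Hq]

section trig
variable {m : ℕ} {t a r : ℝ}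

theorem C_pos (hs : 0 < Real.sin t) : 0 < 1 + r ^ 2 - 2 * r * Real.cos t := by
  have := Real.sin_sq_add_cos_sq t
  nlinarith [sq_nonneg (r - Real.cos t), pow_pos hs 2]

theorem a_sq (hc : Real.cos (m * t) = a * (1 + Real.cos t))
    (hsn : Real.sin (m * t) = a * Real.sin t) : 2 * a ^ 2 * (1 + Real.cos t) = 1 := by
  have h1 := Real.sin_sq_add_cos_sq (m * t)
  have h2 := Real.sin_sq_add_cos_sq t
  rw [hc, hsn] at h1
  linear_combination h1 - a ^ 2 * h2

theorem sin_m1 (hc : Real.cos (m * t) = a * (1 + Real.cos t))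
    (hsn : Real.sin (m * t) = a * Real.sin t) :
    Real.sin (((m : ℝ) - 1) * t) = - (a * Real.sin t) := by
  rw [sub_mul, one_mul, Real.sin_sub, hc, hsn]
  ring

theorem cos_m1 (hc : Real.cos (m * t) = a * (1 + Real.cos t))
    (hsn : Real.sin (m * t) = a * Real.sin t) :
    Real.cos (((m : ℝ) - 1) * t) = a * (1 + Real.cos t) := by
  have h2 := Real.sin_sq_add_cos_sq t
  rw [sub_mul, one_mul, Real.cos_sub, hc, hsn]
  linear_combination a * h2

theorem sin_m2 (hc : Real.cos (m * t) = a * (1 + Real.cos t))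
    (hsn : Real.sin (m * t) = a * Real.sin t) :
    Real.sin (((m : ℝ) - 1 - 1) * t) = - (a * Real.sin t * (1 + 2 * Real.cos t)) := by
  rw [sub_mul, one_mul, Real.sin_sub, cos_m1 hc hsn, sin_m1 hc hsn]
  ring

theorem Hq_last (hm : 3 ≤ m) (hr : 0 < r) (hs : 0 < Real.sin t)
    (hc : Real.cos (m * t) = a * (1 + Real.cos t))
    (hsn : Real.sin (m * t) = a * Real.sin t) (hrm : r ^ m = a * (1 + r)) :
    0 ≤ Hq r t (m - 1) := by
  obtain ⟨k, rfl⟩ : ∃ k, m = k + 1 := ⟨m - 1, by omega⟩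
  have h1 := sin_m1 hc hsn
  have h2 := sin_m2 hc hsn
  have h3 := a_sq hc hsn
  have hC := C_pos (r := r) hs
  have hk : (((k + 1 : ℕ) : ℝ) - 1) = k := by push_cast; ring
  rw [hk] at h1 h2
  simp only [Nat.add_sub_cancel, Hq, h1, h2]
  have h1c : 0 < 1 + Real.cos t := by
    have ha2 := sq_nonneg a
    by_contra hcon
    push Not at hcon
    nlinarith
  have hfin : 2 * (1 + Real.cos t) * r * (r * Real.sin t - r ^ k * -(a * Real.sin t) +
      r ^ (k + 1) * -(a * Real.sin t * (1 + 2 * Real.cos t))) =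
      Real.sin t * (1 + r ^ 2 - 2 * r * Real.cos t) := by
    have : r ^ k * r = a * (1 + r) := by rw [← hrm, pow_succ]
    rw [pow_succ]
    linear_combination (2 * (1 + Real.cos t) * a * Real.sin t * (1 - r * (1 + 2 * Real.cos t)))
      * this + Real.sin t * ((1 + r) * (1 - r * (1 + 2 * Real.cos t))) * h3
  have hpos : 0 < 2 * (1 + Real.cos t) * r := by positivity
  have hR : 0 < Real.sin t * (1 + r ^ 2 - 2 * r * Real.cos t) := mul_pos hs hC
  rw [← hfin] at hR
  exact (pos_of_mul_pos_right hR hpos.le).le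

theorem Hq_nonneg (hm : 3 ≤ m) (hr : 0 < r) (hs : 0 < Real.sin t) (ht : 0 < t)
    (hub : ((m : ℝ) - 1) * t ≤ 2 * Real.pi)
    (hc : Real.cos (m * t) = a * (1 + Real.cos t))
    (hsn : Real.sin (m * t) = a * Real.sin t) (hrm : r ^ m = a * (1 + r)) :
    ∀ q, q ≤ m - 1 → 0 ≤ Hq r t q := by
  have hC := C_pos (r := r) hs
  intro q hq
  rcases le_or_gt ((q : ℝ) * t) Real.pi with h | h
  · induction q with
    | zero => rw [Hq_zero]
    | succ q ih =>
      push_cast at h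
      have h' : (q : ℝ) * t ≤ Real.pi := by nlinarith
      rw [Hq_step]
      have := Real.sin_nonneg_of_nonneg_of_le_pi (by positivity) h'
      have := ih (by omega) h'
      positivity
  · have key : ∀ d, q + d ≤ m - 1 → Hq r t (q + d) ≤ Hq r t q := by
      intro d
      induction d with
      | zero => intro _; exact le_refl _
      | succ d ih =>
        intro hd
        have h1 := ih (by omega)
        rw [← add_assoc, Hq_step]
        have h2 : ((q + d : ℕ) : ℝ) * t ≤ 2 * Real.pi := by
          refine le_trans ?_ hub
          gcongr
          have : ((q + d + 1 : ℕ) : ℝ) ≤ m := by exact_mod_cast (by omega)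
          push_cast at this ⊢
          linarith
        have h3 : Real.pi ≤ ((q + d : ℕ) : ℝ) * t := by
          push_cast
          nlinarith [mul_nonneg (Nat.cast_nonneg (α := ℝ) d) ht.le]
        have h4 : Real.sin (((q + d : ℕ) : ℝ) * t) ≤ 0 := by
          have := Real.sin_nonneg_of_nonneg_of_le_pi (x := ((q + d : ℕ) : ℝ) * t - Real.pi)
            (by linarith) (by linarith)
          rw [Real.sin_sub_pi] at this
          linarith
        have h5 : 0 < r ^ (q + d) * (1 + r ^ 2 - 2 * r * Real.cos t) := by positivity
        nlinarith
    have h1 := key (m - 1 - q) (by omega)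
    rw [show q + (m - 1 - q) = m - 1 by omega] at h1
    exact (Hq_last hm hr hs hc hsn hrm).trans h1

end trig

/-- Functional vanishing on two consecutive orbit points. -/
def fac (r t : ℝ) (n : ℕ) (v : V3) : ℝ :=
  v 0 * Real.sin t
    + v 1 * (Real.sin (n * t) * r ^ (n + 1) - r ^ n * Real.sin ((n + 1 : ℕ) * t))
    + v 2 * (r ^ n * Real.cos ((n + 1 : ℕ) * t) - r ^ (n + 1) * Real.cos (n * t))

theorem fac_X (r t : ℝ) (n j q : ℕ) (h : j + q = n + 1) :
    r * fac r t n (X r t j) = r ^ j * Hq r t q := by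
  have hn : (n : ℝ) * t = j * t + q * t - t := by
    have : (j : ℝ) + q = n + 1 := by exact_mod_cast h
    linear_combination -t * this
  have hn1 : ((n + 1 : ℕ) : ℝ) * t = j * t + q * t := by
    rw [← h]; push_cast; ring
  have hq : ((q : ℝ) - 1) * t = q * t - t := by ring
  have hpow : r ^ n * r = r ^ j * r ^ q := by rw [← pow_succ, ← h, pow_add]
  have h2 := Real.sin_sq_add_cos_sq (j * t)
  simp only [fac, X, Hq, hn, hn1, hq, Real.sin_add, Real.cos_add, Real.sin_sub, Real.cos_sub,
    pow_succ]
  simp only [Matrix.cons_val_zero, Matrix.cons_val_one, Matrix.cons_val]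
  generalize Real.sin (j * t) = sj at *
  generalize Real.cos (j * t) = cj at *
  generalize Real.sin (q * t) = sq at *
  generalize Real.cos (q * t) = cq at *
  generalize Real.sin t = s at *
  generalize Real.cos t = c at *
  linear_combination (r * (sq * c - cq * s) - sq) * (cj ^ 2 + sj ^ 2) * hpow
    + (r * (sq * c - cq * s) - sq) * (r ^ j * r ^ q) * h2

theorem fac_lin (r t : ℝ) (n : ℕ) (a b : ℝ) (u v : V3) :
    fac r t n (a • u + b • v) = a * fac r t n u + b * fac r t n v := by
  simp [fac]; ring

theorem lower (m : ℕ) (hm : 3 ≤ m) : ∃ (K : Set V3) (A : Matrix (Fin 3) (Fin 3) ℝ),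
    IsPolyhedralCone K ∧ (ExtremeRays K).ncard ≤ m ∧ KPrimitive K A ∧
    expnt K A = 2 * m - 1 := by
  obtain ⟨t, a, r, ha, hr, hs, ht, hlb, hub, hc, hsn, hrm⟩ := params m hm
  set x := X r t with hxdef
  set A := Mx r t with hAdef
  set K : Set V3 := ConeGen (fun j : Fin m => x j) with hKdef
  have hAx : ∀ n k, (A ^ n).mulVec (x k) = x (k + n) := Mx_pow_X r t
  have hxm : x m = a • x 0 + a • x 1 := by
    ext i
    fin_cases i
    · simp [hxdef, X, hrm]; ring
    · simp [hxdef, X, hc]; ring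
    · simp [hxdef, X, hsn]
  have hxmk : ∀ k, x (m + k) = a • x k + a • x (k + 1) := by
    intro k
    rw [← hAx k m, hxm, Matrix.mulVec_add, Matrix.mulVec_smul, Matrix.mulVec_smul, hAx, hAx]
    simp [add_comm]
  have hadd : ∀ u ∈ K, ∀ v ∈ K, u + v ∈ K := by
    rintro u ⟨c, hc, rfl⟩ v ⟨d, hd, rfl⟩
    refine ⟨fun j => c j + d j, fun j => add_nonneg (hc j) (hd j), ?_⟩
    rw [← Finset.sum_add_distrib]
    exact Finset.sum_congr rfl fun j _ => (add_smul _ _ _).symm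
  have hsmul : ∀ (c : ℝ), 0 ≤ c → ∀ u ∈ K, c • u ∈ K := by
    rintro c hc u ⟨d, hd, rfl⟩
    refine ⟨fun j => c * d j, fun j => mul_nonneg hc (hd j), ?_⟩
    rw [Finset.smul_sum]
    exact Finset.sum_congr rfl fun j _ => smul_smul _ _ _
  have hx0 : ∀ k, 0 < x k 0 := fun k => by
    simp only [hxdef, X, Matrix.cons_val_zero]
    positivity
  have hxne : ∀ k, x k ≠ 0 := fun k h => by
    have := hx0 k
    rw [h] at this
    simp at this
  have hxK : ∀ k, x k ∈ K := by
    intro k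
    induction k using Nat.strong_induction_on with
    | _ k ih =>
      rcases Nat.lt_or_ge k m with h | h
      · exact gen_mem (fun j : Fin m => x j) ⟨k, h⟩
      · obtain ⟨j, rfl⟩ := Nat.exists_eq_add_of_le h
        rw [hxmk]
        exact hadd _ (hsmul _ ha.le _ (ih j (by omega))) _
          (hsmul _ ha.le _ (ih (j + 1) (by omega)))
  have hint : x (2 * m - 1) ∈ interior K := by
    have h1 : x (2 * m - 1) = a • x (m - 1) + (a * a) • x 0 + (a * a) • x 1 := by
      rw [show 2 * m - 1 = m + (m - 1) by omega, hxmk, show m - 1 + 1 = m by omega, hxm]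
      simp only [smul_add, smul_smul, add_assoc]
    rw [h1]
    refine interior_of_three hadd hsmul (hxK _) (hxK _) (hxK _) ?_ ha (by positivity)
      (by positivity)
    have hs1 := sin_m1 hc hsn
    have hc1 := cos_m1 hc hsn
    have hC := C_pos (r := r) hs
    obtain ⟨k, rfl⟩ : ∃ k, m = k + 1 := ⟨m - 1, by omega⟩
    have hk : (((k + 1 : ℕ) : ℝ) - 1) = k := by push_cast; ring
    rw [hk] at hs1 hc1
    rw [pow_succ] at hrm
    have hdet : r * (Matrix.of ![x (k + 1 - 1), x 0, x 1]).det =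
        a * Real.sin t * (1 + r ^ 2 - 2 * r * Real.cos t) := by
      rw [Matrix.det_fin_three]
      simp [hxdef, X, hs1, hc1]
      linear_combination Real.sin t * hrm
    intro h0
    rw [h0, mul_zero] at hdet
    have : 0 < a * Real.sin t * (1 + r ^ 2 - 2 * r * Real.cos t) := by positivity
    linarith
  have hK : IsProperCone K := by
    refine ⟨closed_gen _ (fun j => hx0 j), hadd, hsmul, ?_, ⟨_, hint⟩⟩
    have h0 : ∀ u ∈ K, 0 ≤ u 0 ∧ (u 0 = 0 → u = 0) := by
      rintro u ⟨c, hc, rfl⟩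
      rw [Finset.sum_apply]
      have hnn : ∀ j ∈ Finset.univ, 0 ≤ (c j • x j) 0 :=
        fun j _ => mul_nonneg (hc j) (hx0 j).le
      refine ⟨Finset.sum_nonneg hnn, fun h => ?_⟩
      rw [Finset.sum_eq_zero_iff_of_nonneg hnn] at h
      refine Finset.sum_eq_zero fun j hj => ?_
      have h1 : c j * x j 0 = 0 := h j hj
      have h2 : c j = 0 := by
        rcases mul_eq_zero.1 h1 with h | h
        · exact h
        · exact absurd h (hx0 j).ne'
      simp [h2]
    ext u
    simp only [Set.mem_inter_iff, Set.mem_neg, Set.mem_singleton_iff]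
    constructor
    · rintro ⟨h1, h2⟩
      have h3 := (h0 _ h2).1
      simp only [Pi.neg_apply] at h3
      exact (h0 u h1).2 (le_antisymm (by linarith) (h0 u h1).1)
    · rintro rfl
      have : (0 : V3) ∈ K := by simpa using hsmul 0 le_rfl _ (hxK 0)
      simpa using this
  have hn : KNonneg K A := by
    rintro u ⟨c, hc, rfl⟩
    rw [Matrix.mulVec_sum]
    refine sum_mem_K hK _ _ fun j _ => ?_
    rw [Matrix.mulVec_smul]
    have : A.mulVec (x j) = x (j + 1) := Mx_X r t j
    rw [this]
    exact hsmul _ (hc j) _ (hxK _)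
  have hintk : ∀ k, x (2 * m - 1 + k) ∈ interior K := by
    intro k
    induction k with
    | zero => exact hint
    | succ k ih =>
      have h1 := dom_map hn (int_dom ih (x (2 * m - 2 + k)))
      have h2 : ∀ j, A.mulVec (x j) = x (j + 1) := Mx_X r t
      rw [h2, h2, show 2 * m - 2 + k + 1 = 2 * m - 1 + k by omega] at h1
      exact dom_int hK ih h1
  have hpos : KPositive K (A ^ (2 * m - 1)) := by
    refine pos_of_gens hK hKdef (nonneg_pow hn _) fun i => ?_
    rw [hAx, add_comm]
    exact hintk _
  have hfacK : ∀ u ∈ K, 0 ≤ fac r t (m - 2) u := by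
    rintro u ⟨c, hc', rfl⟩
    have hsum : fac r t (m - 2) (∑ j : Fin m, c j • x j) =
        ∑ j : Fin m, c j * fac r t (m - 2) (x j) := by
      simp only [fac, Finset.sum_apply, Pi.smul_apply, smul_eq_mul, Finset.sum_mul,
        ← Finset.sum_add_distrib]
      exact Finset.sum_congr rfl fun j _ => by ring
    rw [hsum]
    refine Finset.sum_nonneg fun j _ => mul_nonneg (hc' j) ?_
    have h1 := fac_X r t (m - 2) j (m - 1 - j) (by omega)
    have h2 := Hq_nonneg hm hr hs ht hub hc hsn hrm (m - 1 - j) (by omega)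
    have h3 : 0 ≤ r * fac r t (m - 2) (x j) := by
      rw [h1]
      positivity
    exact nonneg_of_mul_nonneg_right h3 hr
  have hfac0 : fac r t (m - 2) (x (2 * m - 2)) = 0 := by
    rw [show 2 * m - 2 = m + (m - 2) by omega, hxmk, fac_lin]
    have h1 := fac_X r t (m - 2) (m - 2) 1 (by omega)
    have h2 := fac_X r t (m - 2) (m - 2 + 1) 0 (by omega)
    have hH1 : Hq r t 1 = 0 := by simp [Hq]
    rw [Hq_zero, mul_zero] at h2
    rw [hH1, mul_zero] at h1
    have h1' : fac r t (m - 2) (x (m - 2)) = 0 := (mul_eq_zero.1 h1).resolve_left hr.ne'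
    have h2' : fac r t (m - 2) (x (m - 2 + 1)) = 0 := (mul_eq_zero.1 h2).resolve_left hr.ne'
    rw [h1', h2']
    ring
  have hnint : x (2 * m - 2) ∉ interior K := by
    intro hi
    obtain ⟨c, hc0, h⟩ := int_dom hi ![1, 0, 0]
    have h1 := hfacK _ h
    have h2 : x (2 * m - 2) - c • ![1, 0, 0] = (1 : ℝ) • x (2 * m - 2) + (-c) • ![1, 0, 0] := by
      rw [one_smul, neg_smul, sub_eq_add_neg]
    rw [h2, fac_lin, hfac0] at h1
    have h3 : fac r t (m - 2) ![1, 0, 0] = Real.sin t := by simp [fac]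
    rw [h3] at h1
    nlinarith
  refine ⟨K, A, ⟨hK, m, _, hKdef⟩, (rays_fin hK hKdef).2, ⟨hn, _, by omega, hpos⟩, ?_⟩
  have hmem : (2 * m - 1) ∈ {k : ℕ | 0 < k ∧ KPositive K (A ^ k)} := ⟨by omega, hpos⟩
  apply le_antisymm (Nat.sInf_le hmem)
  refine le_csInf ⟨_, hmem⟩ ?_
  rintro k ⟨_, hk⟩
  by_contra hlt
  push Not at hlt
  apply hnint
  have := hk (x (2 * m - 2 - k)) (hxK _) (hxne _)
  rwa [hAx, show 2 * m - 2 - k + k = 2 * m - 2 by omega] at this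

end Expo

/-- For `m ≥ 3`, the maximum of `γ(K)` over `K ∈ P(m,3)` is `2m - 1`:
every `K`-primitive matrix has exponent at most `2m - 1`, and the bound is attained. -/
theorem stmt_6 (m : ℕ) (hm : 3 ≤ m) :
    (∀ (K : Set (Fin 3 → ℝ)) (A : Matrix (Fin 3) (Fin 3) ℝ),
      MemP m K → KPrimitive K A → expnt K A ≤ 2 * m - 1) ∧
    (∃ (K : Set (Fin 3 → ℝ)) (A : Matrix (Fin 3) (Fin 3) ℝ),
      MemP m K ∧ KPrimitive K A ∧ expnt K A = 2 * m - 1) := by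
  constructor
  · intro K A hP hA
    have h := (Expo.main_upper hP.1 hA).2
    rwa [hP.2] at h
  · obtain ⟨K, A, hP, hle, hA, he⟩ := Expo.lower m hm
    have h := Expo.main_upper hP hA
    exact ⟨K, A, ⟨hP, by omega⟩, hA, he⟩
end
end

section
/- Let m ≥ 3 be an integer and let θ ∈ (2π/m, 2π/(m−1)). Then the vectors x_1(θ), …, x_m(θ) are pairwise non-proportional and are precisely, up to positive scalar multiples, the extreme vectors of the cone K_θ they generate; K_θ ∈ P(m,3); the matrix A_θ is K_θ-nonnegative and K_θ-primitive; and γ(A_θ) = 2m − 1. -/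
open Matrix Set Real

noncomputable section

/-- The polynomial `g_θ(t) = (sin((m-1)θ)/sin θ)·t^m - (sin(mθ)/sin θ)·t^{m-1} + 1`. -/
def gpoly (m : ℕ) (θ t : ℝ) : ℝ :=
  (Real.sin (((m : ℝ) - 1) * θ) / Real.sin θ) * t ^ m
    - (Real.sin ((m : ℝ) * θ) / Real.sin θ) * t ^ (m - 1) + 1

/-- The vector `x_{j+1}(θ) = (r^j cos(jθ), r^j sin(jθ), 1)ᵀ` (indexed from `j = 0`). -/
def xvec (r θ : ℝ) (j : ℕ) : Fin 3 → ℝ :=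
  ![r ^ j * Real.cos ((j : ℝ) * θ), r ^ j * Real.sin ((j : ℝ) * θ), 1]

/-- The cone `K_θ` generated by `x_1(θ), …, x_m(θ)` (with `r` the positive root of `g_θ`). -/
def Ktheta (m : ℕ) (r θ : ℝ) : Set (Fin 3 → ℝ) :=
  ConeGen (fun j : Fin m => xvec r θ j.val)

/-- The matrix `A_θ = r·[[cos θ, -sin θ],[sin θ, cos θ]] ⊕ [1]`. -/
def Atheta (r θ : ℝ) : Matrix (Fin 3) (Fin 3) ℝ :=
  !![r * Real.cos θ, -(r * Real.sin θ), 0;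
     r * Real.sin θ,    r * Real.cos θ, 0;
     0, 0, 1]


/-- explicit 3x3 determinant -/
def det3 (u v w : Fin 3 → ℝ) : ℝ :=
  u 0 * (v 1 * w 2 - v 2 * w 1) - u 1 * (v 0 * w 2 - v 2 * w 0) + u 2 * (v 0 * w 1 - v 1 * w 0)

theorem det3_add (u v x y : Fin 3 → ℝ) : det3 u v (x + y) = det3 u v x + det3 u v y := by
  simp only [det3, Pi.add_apply]; ring

theorem det3_smul (u v x : Fin 3 → ℝ) (c : ℝ) : det3 u v (c • x) = c * det3 u v x := by
  simp only [det3, Pi.smul_apply, smul_eq_mul]; ring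

theorem det3_sum {ι : Type*} (s : Finset ι) (u v : Fin 3 → ℝ) (c : ι → ℝ) (x : ι → Fin 3 → ℝ) :
    det3 u v (∑ j ∈ s, c j • x j) = ∑ j ∈ s, c j * det3 u v (x j) := by
  classical
  induction s using Finset.induction_on with
  | empty => simp [det3]
  | insert a s ha ih => rw [Finset.sum_insert ha, Finset.sum_insert ha, det3_add, det3_smul, ih]

theorem det3_cont (u v : Fin 3 → ℝ) : Continuous (fun x => det3 u v x) := by
  unfold det3; fun_prop

theorem det3_cyc (u v w : Fin 3 → ℝ) : det3 u v w = det3 v w u := by unfold det3; ring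

theorem det3_left (u v : Fin 3 → ℝ) : det3 u v u = 0 := by unfold det3; ring

theorem det3_right (u v : Fin 3 → ℝ) : det3 u v v = 0 := by unfold det3; ring

theorem det3_neg (u v w : Fin 3 → ℝ) : det3 u v w = - det3 v u w := by unfold det3; ring

theorem cramer3 (u v w x : Fin 3 → ℝ) :
    det3 u v w • x = det3 v w x • u + det3 w u x • v + det3 u v x • w := by
  funext i
  fin_cases i <;> simp [det3] <;> ring

theorem pluck (o a b c d : Fin 3 → ℝ) :
    det3 o a b * det3 o c d - det3 o a c * det3 o b d + det3 o a d * det3 o b c = 0 := by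
  unfold det3; ring

theorem det3_shift (r θ : ℝ) (i j k : ℕ) :
    det3 (xvec r θ (i + 1)) (xvec r θ (j + 1)) (xvec r θ (k + 1)) =
      r ^ 2 * det3 (xvec r θ i) (xvec r θ j) (xvec r θ k) := by
  have h := Real.sin_sq_add_cos_sq θ
  have h' : Real.sin θ ^ 2 = 1 - Real.cos θ ^ 2 := by linarith
  simp only [det3, xvec, Nat.cast_add, Nat.cast_one, add_mul, one_mul, Real.sin_add, Real.cos_add]
  simp
  ring_nf
  simp only [h']
  ring

theorem det3_shifts (r θ : ℝ) (n i j k : ℕ) :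
    det3 (xvec r θ (i + n)) (xvec r θ (j + n)) (xvec r θ (k + n)) =
      (r ^ 2) ^ n * det3 (xvec r θ i) (xvec r θ j) (xvec r θ k) := by
  induction n with
  | zero => simp
  | succ n ih =>
    rw [← add_assoc, ← add_assoc, ← add_assoc, det3_shift, ih]; ring

theorem P_step (r θ : ℝ) (k : ℕ) :
    det3 (xvec r θ 0) (xvec r θ 1) (xvec r θ (k + 1)) =
      det3 (xvec r θ 0) (xvec r θ 1) (xvec r θ k) +
        r ^ k * Real.sin (k * θ) * (r ^ 2 + 1 - 2 * r * Real.cos θ) := by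
  have h := Real.sin_sq_add_cos_sq θ
  have h' : Real.sin θ ^ 2 = 1 - Real.cos θ ^ 2 := by linarith
  simp only [det3, xvec, Nat.cast_add, Nat.cast_one, add_mul, one_mul, Real.sin_add, Real.cos_add]
  simp
  ring_nf
  simp only [h']
  ring

theorem Q_step (r θ : ℝ) (k : ℕ) :
    det3 (xvec r θ (k + 1)) (xvec r θ (k + 2)) (xvec r θ 0) =
      r ^ 2 * det3 (xvec r θ k) (xvec r θ (k + 1)) (xvec r θ 0) +
        r ^ (k + 1) * Real.sin ((k + 1 : ℕ) * θ) * (r ^ 2 + 1 - 2 * r * Real.cos θ) := by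
  have h := Real.sin_sq_add_cos_sq θ
  have h' : Real.sin θ ^ 2 = 1 - Real.cos θ ^ 2 := by linarith
  have h3 : Real.sin θ ^ 3 = Real.sin θ * (1 - Real.cos θ ^ 2) := by rw [← h']; ring
  have e : k + 2 = (k + 1) + 1 := rfl
  rw [e]
  simp only [det3, xvec, Nat.cast_add, Nat.cast_one, add_mul, one_mul, Real.sin_add, Real.cos_add]
  simp
  ring_nf
  simp only [h', h3]
  ring

theorem A_x (r θ : ℝ) (k : ℕ) : (Atheta r θ).mulVec (xvec r θ k) = xvec r θ (k + 1) := by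
  funext i
  fin_cases i <;>
    simp [Atheta, xvec, Matrix.mulVec, dotProduct, Fin.sum_univ_three, add_mul, Real.sin_add,
      Real.cos_add] <;> ring

theorem Apow_x (r θ : ℝ) (n k : ℕ) :
    ((Atheta r θ) ^ n).mulVec (xvec r θ k) = xvec r θ (k + n) := by
  induction n with
  | zero => simp
  | succ n ih => rw [pow_succ', ← Matrix.mulVec_mulVec, ih, A_x]; rfl

theorem xvec_two (r θ : ℝ) (k : ℕ) : xvec r θ k 2 = 1 := by simp [xvec]

/-- All the trigonometric data. -/
theorem trig (m : ℕ) (hm : 3 ≤ m) (θ : ℝ)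
    (hθ : θ ∈ Set.Ioo (2 * π / (m : ℝ)) (2 * π / ((m : ℝ) - 1))) :
    0 < θ ∧ θ < π ∧ 2 * π < m * θ ∧ ((m : ℝ) - 1) * θ < 2 * π := by
  obtain ⟨h1, h2⟩ := hθ
  have hm' : (3 : ℝ) ≤ m := by exact_mod_cast hm
  have hp := Real.pi_pos
  rw [div_lt_iff₀ (by linarith)] at h1
  rw [lt_div_iff₀ (by linarith)] at h2
  have h0 : 0 < θ := by
    by_contra h
    push Not at h
    nlinarith
  refine ⟨h0, ?_, by linarith, by linarith⟩
  nlinarith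

theorem rel (m : ℕ) (hm : 3 ≤ m) (θ : ℝ)
    (hθ : θ ∈ Set.Ioo (2 * π / (m : ℝ)) (2 * π / ((m : ℝ) - 1)))
    (r : ℝ) (hr0 : 0 < r) (hroot : gpoly m θ r = 0) :
    ∃ a b : ℝ, 0 < a ∧ 0 < b ∧
      ∀ n, xvec r θ (n + m) = a • xvec r θ n + b • xvec r θ (n + 1) := by
  obtain ⟨h0, h1, h2, h3⟩ := trig m hm θ hθ
  have hs : 0 < Real.sin θ := Real.sin_pos_of_pos_of_lt_pi h0 h1
  have hS : 0 < Real.sin (m * θ) := by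
    rw [← Real.sin_sub_two_pi]
    apply Real.sin_pos_of_pos_of_lt_pi <;> linarith
  have hT : Real.sin (((m : ℝ) - 1) * θ) < 0 := by
    rw [← Real.sin_sub_two_pi]
    apply Real.sin_neg_of_neg_of_neg_pi_lt <;> linarith
  refine ⟨-(r ^ m * Real.sin (((m : ℝ) - 1) * θ) / Real.sin θ),
    r ^ (m - 1) * Real.sin (m * θ) / Real.sin θ, ?_, by positivity, ?_⟩
  · rw [neg_pos]
    exact div_neg_of_neg_of_pos (mul_neg_of_pos_of_neg (by positivity) hT) hs
  have base : xvec r θ (0 + m) = (-(r ^ m * Real.sin (((m : ℝ) - 1) * θ) / Real.sin θ)) • xvec r θ 0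
      + (r ^ (m - 1) * Real.sin (m * θ) / Real.sin θ) • xvec r θ (0 + 1) := by
    unfold gpoly at hroot
    have e : r ^ m = r ^ (m - 1) * r := by rw [← pow_succ]; congr 1; omega
    have e2 : Real.sin (((m : ℝ) - 1) * θ) =
        Real.sin (m * θ) * Real.cos θ - Real.cos (m * θ) * Real.sin θ := by
      rw [sub_mul, one_mul, Real.sin_sub]
    funext i
    fin_cases i
    · simp [xvec, e2, e]
      field_simp
      ring
    · simp [xvec, e]
      field_simp
    · simp [xvec]
      field_simp at hroot ⊢
      linarith
  intro n
  have h := congrArg (fun v => ((Atheta r θ) ^ n).mulVec v) base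
  simp only [Matrix.mulVec_add, Matrix.mulVec_smul, Apow_x] at h
  rw [add_comm n m, add_comm n 1]
  simpa using h

theorem P_pos (m : ℕ) (hm : 3 ≤ m) (θ : ℝ)
    (hθ : θ ∈ Set.Ioo (2 * π / (m : ℝ)) (2 * π / ((m : ℝ) - 1)))
    (r : ℝ) (hr0 : 0 < r) (hroot : gpoly m θ r = 0) (k : ℕ) (hk : 2 ≤ k) (hkm : k < m) :
    0 < det3 (xvec r θ 0) (xvec r θ 1) (xvec r θ k) := by
  obtain ⟨h0, h1, h2, h3⟩ := trig m hm θ hθ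
  obtain ⟨a, b, ha, hb, hab⟩ := rel m hm θ hθ r hr0 hroot
  have hs : 0 < Real.sin θ := Real.sin_pos_of_pos_of_lt_pi h0 h1
  have hc : 0 < r ^ 2 + 1 - 2 * r * Real.cos θ := by
    nlinarith [Real.sin_sq_add_cos_sq θ, sq_nonneg (r - Real.cos θ)]
  rcases le_or_gt ((k : ℝ) * θ) π with hkp | hkp
  · have key : ∀ n : ℕ, ((n + 2 : ℕ) : ℝ) * θ ≤ π →
        0 < det3 (xvec r θ 0) (xvec r θ 1) (xvec r θ (n + 2)) := by
      intro n
      induction n with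
      | zero =>
        intro _
        have := P_step r θ 1
        rw [det3_right] at this
        simp only [Nat.cast_one, one_mul, zero_add] at this
        rw [zero_add, this]
        positivity
      | succ n ih =>
        intro hn
        push_cast at hn ih
        have i1 := ih (by linarith)
        rw [show n + 1 + 2 = (n + 2) + 1 by ring, P_step]
        have : 0 ≤ Real.sin ((n + 2 : ℕ) * θ) := by
          apply Real.sin_nonneg_of_nonneg_of_le_pi
          · positivity
          · push_cast; linarith
        positivity
    obtain ⟨n, rfl⟩ : ∃ n, k = n + 2 := ⟨k - 2, by omega⟩
    exact key n hkp
  · have Pm : det3 (xvec r θ 0) (xvec r θ 1) (xvec r θ m) = 0 := by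
      have := hab 0
      rw [zero_add] at this
      rw [this, det3_add, det3_smul, det3_smul, det3_left, det3_right]; simp
    have key : ∀ d : ℕ, ∀ k : ℕ, k + (d + 1) = m → π < (k : ℝ) * θ →
        0 < det3 (xvec r θ 0) (xvec r θ 1) (xvec r θ k) := by
      intro d
      induction d with
      | zero =>
        intro k hk hp
        have hk' : (k : ℝ) + 1 = m := by exact_mod_cast hk
        have st := P_step r θ k
        rw [show k + 1 = m by omega, Pm] at st
        have : Real.sin (k * θ) < 0 := by
          rw [← Real.sin_sub_two_pi]
          apply Real.sin_neg_of_neg_of_neg_pi_lt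
          · nlinarith
          · linarith
        have := mul_pos (mul_pos (pow_pos hr0 k) (neg_pos.2 this)) hc
        linarith
      | succ d ih =>
        intro k hk hp
        have hk' : (k : ℝ) + (d + 1 + 1) = m := by exact_mod_cast hk
        have i1 := ih (k + 1) (by omega) (by push_cast; linarith)
        have st := P_step r θ k
        have : Real.sin (k * θ) < 0 := by
          rw [← Real.sin_sub_two_pi]
          have : 0 ≤ (d : ℝ) * θ := by positivity
          apply Real.sin_neg_of_neg_of_neg_pi_lt
          · nlinarith
          · linarith
        have := mul_pos (mul_pos (pow_pos hr0 k) (neg_pos.2 this)) hc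
        linarith
    exact key (m - k - 1) k (by omega) hkp

theorem Q_pos (m : ℕ) (hm : 3 ≤ m) (θ : ℝ)
    (hθ : θ ∈ Set.Ioo (2 * π / (m : ℝ)) (2 * π / ((m : ℝ) - 1)))
    (r : ℝ) (hr0 : 0 < r) (hroot : gpoly m θ r = 0) (k : ℕ) (hk : 1 ≤ k) (hkm : k + 1 < m) :
    0 < det3 (xvec r θ k) (xvec r θ (k + 1)) (xvec r θ 0) := by
  obtain ⟨h0, h1, h2, h3⟩ := trig m hm θ hθ
  have hs : 0 < Real.sin θ := Real.sin_pos_of_pos_of_lt_pi h0 h1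
  have hc : 0 < r ^ 2 + 1 - 2 * r * Real.cos θ := by
    nlinarith [Real.sin_sq_add_cos_sq θ, sq_nonneg (r - Real.cos θ)]
  rcases le_or_gt ((k : ℝ) * θ) π with hkp | hkp
  · have key : ∀ n : ℕ, ((n + 1 : ℕ) : ℝ) * θ ≤ π →
        0 < det3 (xvec r θ (n + 1)) (xvec r θ (n + 2)) (xvec r θ 0) := by
      intro n
      induction n with
      | zero =>
        intro _
        have := Q_step r θ 0
        rw [det3_left] at this
        simp only [Nat.cast_one, one_mul, zero_add] at this
        rw [zero_add, zero_add, this]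
        positivity
      | succ n ih =>
        intro hn
        rw [Q_step]
        have : 0 ≤ Real.sin ((n + 1 + 1 : ℕ) * θ) := by
          apply Real.sin_nonneg_of_nonneg_of_le_pi
          · positivity
          · exact hn
        push_cast at hn ih
        have i1 := ih (by linarith)
        positivity
    obtain ⟨n, rfl⟩ : ∃ n, k = n + 1 := ⟨k - 1, by omega⟩
    exact key n hkp
  · have Qm : 0 < det3 (xvec r θ (m - 2)) (xvec r θ (m - 1)) (xvec r θ 0) := by
      obtain ⟨a, b, ha, hb, hab⟩ := rel m hm θ hθ r hr0 hroot
      have e := det3_shift r θ (m - 2) (m - 1) 0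
      rw [show m - 2 + 1 = m - 1 by omega, show m - 1 + 1 = m by omega] at e
      have e0 := hab 0
      simp only [zero_add] at e0
      rw [zero_add, ← det3_cyc, e0, det3_add, det3_smul, det3_smul, det3_left, det3_cyc, det3_cyc,
        det3_neg, ← det3_cyc, ← det3_neg] at e
      have p := P_pos m hm θ hθ r hr0 hroot (m - 1) (by omega) (by omega)
      have r2 : 0 < r ^ 2 := by positivity
      have : 0 < r ^ 2 * det3 (xvec r θ (m - 2)) (xvec r θ (m - 1)) (xvec r θ 0) := by
        rw [← e]
        have := mul_pos ha p
        simp only [det3] at this ⊢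
        linarith
      exact (mul_pos_iff_of_pos_left r2).1 this
    have key : ∀ d : ℕ, ∀ k : ℕ, k + (d + 2) = m → π < (k : ℝ) * θ →
        0 < det3 (xvec r θ k) (xvec r θ (k + 1)) (xvec r θ 0) := by
      intro d
      induction d with
      | zero =>
        intro k hk hp
        rwa [show k = m - 2 by omega, show m - 2 + 1 = m - 1 by omega]
      | succ d ih =>
        intro k hk hp
        have hk' : (k : ℝ) + (d + 1 + 2) = m := by exact_mod_cast hk
        have i1 := ih (k + 1) (by omega) (by push_cast; linarith)
        have st := Q_step r θ k
        have : Real.sin ((k + 1 : ℕ) * θ) < 0 := by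
          rw [← Real.sin_sub_two_pi]
          have : 0 ≤ (d : ℝ) * θ := by positivity
          push_cast
          apply Real.sin_neg_of_neg_of_neg_pi_lt
          · nlinarith
          · linarith
        have := mul_pos (mul_pos (pow_pos hr0 (k + 1)) (neg_pos.2 this)) hc
        have r2 : 0 < r ^ 2 := by positivity
        rw [show k + 1 + 1 = k + 2 by ring] at i1
        refine (mul_pos_iff_of_pos_left r2).1 ?_
        linarith
    exact key (m - k - 2) k (by omega) hkp

theorem O_pos (m : ℕ) (hm : 3 ≤ m) (θ : ℝ)
    (hθ : θ ∈ Set.Ioo (2 * π / (m : ℝ)) (2 * π / ((m : ℝ) - 1)))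
    (r : ℝ) (hr0 : 0 < r) (hroot : gpoly m θ r = 0) (i j k : ℕ) (hij : i < j) (hjk : j < k)
    (hkm : k < m) :
    0 < det3 (xvec r θ i) (xvec r θ j) (xvec r θ k) := by
  have key : ∀ l j : ℕ, 1 ≤ j → j < l → l < m →
      0 < det3 (xvec r θ 0) (xvec r θ j) (xvec r θ l) := by
    intro l
    induction l with
    | zero => intro j _ h; omega
    | succ l ih =>
      intro j hj hjl hl
      rcases Nat.lt_succ_iff_lt_or_eq.1 hjl with h | h
      · rcases Nat.lt_or_ge 1 j with hj1 | hj1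
        · have i1 := ih j hj h (by omega)
          have e := pluck (xvec r θ 0) (xvec r θ 1) (xvec r θ j) (xvec r θ l) (xvec r θ (l + 1))
          have p1 := P_pos m hm θ hθ r hr0 hroot j (by omega) (by omega)
          have p2 := P_pos m hm θ hθ r hr0 hroot l (by omega) (by omega)
          have p3 := P_pos m hm θ hθ r hr0 hroot (l + 1) (by omega) (by omega)
          have q := Q_pos m hm θ hθ r hr0 hroot l (by omega) (by omega)
          rw [← det3_cyc] at q
          refine (mul_pos_iff_of_pos_left p2).1 ?_
          have := mul_pos p1 q
          have := mul_pos p3 i1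
          linarith
        · rw [show j = 1 by omega]
          exact P_pos m hm θ hθ r hr0 hroot (l + 1) (by omega) (by omega)
      · subst h
        rw [det3_cyc]
        exact Q_pos m hm θ hθ r hr0 hroot j (by omega) (by omega)
  have e := det3_shifts r θ i 0 (j - i) (k - i)
  rw [zero_add, show j - i + i = j by omega, show k - i + i = k by omega] at e
  rw [e]
  have := key (k - i) (j - i) (by omega) (by omega) (by omega)
  positivity

section cone
variable {m : ℕ} {r θ : ℝ}

theorem K_add {x y : Fin 3 → ℝ} (hx : x ∈ Ktheta m r θ) (hy : y ∈ Ktheta m r θ) :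
    x + y ∈ Ktheta m r θ := by
  obtain ⟨c, hc, rfl⟩ := hx
  obtain ⟨d, hd, rfl⟩ := hy
  refine ⟨fun j => c j + d j, fun j => add_nonneg (hc j) (hd j), ?_⟩
  simp [add_smul, Finset.sum_add_distrib]

theorem K_smul {x : Fin 3 → ℝ} {a : ℝ} (ha : 0 ≤ a) (hx : x ∈ Ktheta m r θ) :
    a • x ∈ Ktheta m r θ := by
  obtain ⟨c, hc, rfl⟩ := hx
  refine ⟨fun j => a * c j, fun j => mul_nonneg ha (hc j), ?_⟩
  simp [Finset.smul_sum, mul_smul]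

theorem K_gen (k : ℕ) (hk : k < m) : xvec r θ k ∈ Ktheta m r θ := by
  refine ⟨Pi.single ⟨k, hk⟩ 1, fun j => ?_, ?_⟩
  · by_cases h : j = ⟨k, hk⟩
    · subst h; simp
    · simp [h]
  · simp [Pi.single_apply]

theorem K_zero : (0 : Fin 3 → ℝ) ∈ Ktheta m r θ := ⟨0, by simp, by simp⟩

theorem K_sum {ι : Type*} (s : Finset ι) (f : ι → Fin 3 → ℝ)
    (h : ∀ i ∈ s, f i ∈ Ktheta m r θ) : ∑ i ∈ s, f i ∈ Ktheta m r θ := by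
  classical
  induction s using Finset.induction_on with
  | empty => simpa using K_zero
  | insert a s ha ih =>
    rw [Finset.sum_insert ha]
    exact K_add (h a (by simp)) (ih fun i hi => h i (by simp [hi]))

theorem int_add {x y : Fin 3 → ℝ} (hx : x ∈ interior (Ktheta m r θ)) (hy : y ∈ Ktheta m r θ) :
    x + y ∈ interior (Ktheta m r θ) := by
  have ho : IsOpen ((fun z => z - y) ⁻¹' interior (Ktheta m r θ)) :=
    isOpen_interior.preimage (by fun_prop)
  refine interior_maximal ?_ ho (by simpa using hx)
  intro z hz
  have := K_add (interior_subset hz) hy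
  simpa using this

theorem K_of_nn {u v w x : Fin 3 → ℝ} (hu : u ∈ Ktheta m r θ) (hv : v ∈ Ktheta m r θ)
    (hw : w ∈ Ktheta m r θ) (hD : 0 < det3 u v w) (h1 : 0 ≤ det3 v w x) (h2 : 0 ≤ det3 w u x)
    (h3 : 0 ≤ det3 u v x) : x ∈ Ktheta m r θ := by
  have e := cramer3 u v w x
  have : x = (det3 u v w)⁻¹ • (det3 v w x • u + det3 w u x • v + det3 u v x • w) := by
    rw [← e, smul_smul, inv_mul_cancel₀ hD.ne', one_smul]
  rw [this]
  exact K_smul (by positivity) (K_add (K_add (K_smul h1 hu) (K_smul h2 hv)) (K_smul h3 hw))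

theorem int_tri {u v w : Fin 3 → ℝ} (hu : u ∈ Ktheta m r θ) (hv : v ∈ Ktheta m r θ)
    (hw : w ∈ Ktheta m r θ) (hD : 0 < det3 u v w) {a b c : ℝ} (ha : 0 < a) (hb : 0 < b)
    (hc : 0 < c) : a • u + b • v + c • w ∈ interior (Ktheta m r θ) := by
  have ho : IsOpen {x | 0 < det3 v w x ∧ 0 < det3 w u x ∧ 0 < det3 u v x} :=
    (isOpen_lt continuous_const (det3_cont v w)).inter
      ((isOpen_lt continuous_const (det3_cont w u)).inter
        (isOpen_lt continuous_const (det3_cont u v)))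
  refine interior_maximal ?_ ho ?_
  · rintro x ⟨h1, h2, h3⟩
    exact K_of_nn hu hv hw hD h1.le h2.le h3.le
  · have d1 : det3 v w u = det3 u v w := (det3_cyc u v w).symm
    have d2 : det3 w u v = det3 u v w := det3_cyc w u v
    refine ⟨?_, ?_, ?_⟩ <;>
      simp only [det3_add, det3_smul, det3_left, det3_right, d1, d2] <;> simp <;> positivity

theorem K_two {c : Fin m → ℝ} : (∑ j, c j • xvec r θ j.val) 2 = ∑ j, c j := by
  simp [Finset.sum_apply, xvec_two]

/-- orientation hypothesis -/
def Ori (m : ℕ) (r θ : ℝ) : Prop := ∀ i j k : ℕ, i < j → j < k → k < m →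
    0 < det3 (xvec r θ i) (xvec r θ j) (xvec r θ k)

theorem face_nonneg (h : Ori m r θ) (j : ℕ) (hj : j + 1 < m) (k : ℕ) (hk : k < m) :
    0 ≤ det3 (xvec r θ j) (xvec r θ (j + 1)) (xvec r θ k) := by
  rcases lt_trichotomy k j with h1 | h1 | h1
  · rw [← det3_cyc]; exact (h _ _ _ h1 (by omega) hj).le
  · rw [h1, det3_left]
  · rcases Nat.eq_or_lt_of_le (Nat.succ_le_of_lt h1) with h2 | h2
    · rw [← h2]; exact (det3_right _ _).ge
    · exact (h _ _ _ (by omega) h2 hk).le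

theorem face_pos (h : Ori m r θ) (j : ℕ) (hj : j + 1 < m) (k : ℕ) (hk : k < m) (h1 : k ≠ j)
    (h2 : k ≠ j + 1) :
    0 < det3 (xvec r θ j) (xvec r θ (j + 1)) (xvec r θ k) := by
  rcases lt_or_gt_of_ne h1 with h1 | h1
  · rw [← det3_cyc]; exact h _ _ _ h1 (by omega) hj
  · exact h _ _ _ (by omega) (by omega) hk

theorem last_nonneg (h : Ori m r θ) (k : ℕ) (hk : k < m) :
    0 ≤ det3 (xvec r θ (m - 1)) (xvec r θ 0) (xvec r θ k) := by
  rcases Nat.eq_zero_or_pos k with h1 | h1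
  · rw [h1, det3_right]
  · rcases Nat.eq_or_lt_of_le (Nat.le_sub_one_of_lt hk) with h2 | h2
    · rw [h2, det3_left]
    · rw [det3_cyc]; exact (h _ _ _ h1 h2 (by omega)).le

theorem last_pos (h : Ori m r θ) (k : ℕ) (hk : k < m - 1) (h1 : 0 < k) :
    0 < det3 (xvec r θ (m - 1)) (xvec r θ 0) (xvec r θ k) := by
  rw [det3_cyc]; exact h _ _ _ h1 hk (by omega)

theorem func_nonneg {u v x : Fin 3 → ℝ}
    (h : ∀ k < m, 0 ≤ det3 u v (xvec r θ k)) (hx : x ∈ Ktheta m r θ) : 0 ≤ det3 u v x := by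
  obtain ⟨c, hc, rfl⟩ := hx
  rw [det3_sum]
  exact Finset.sum_nonneg fun j _ => mul_nonneg (hc j) (h j j.2)

theorem K_eq (hm : 3 ≤ m) (h : Ori m r θ) : Ktheta m r θ =
    {x | (∀ j : Fin (m - 1), 0 ≤ det3 (xvec r θ j) (xvec r θ (j + 1)) x) ∧
      0 ≤ det3 (xvec r θ (m - 1)) (xvec r θ 0) x} := by
  ext x
  constructor
  · intro hx
    refine ⟨fun j => func_nonneg (fun k hk => face_nonneg h j (by omega) k hk) hx,
      func_nonneg (fun k hk => last_nonneg h k hk) hx⟩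
  · rintro ⟨h1, h2⟩
    have ex : ∃ j, 1 ≤ j ∧ j + 1 < m ∧ 0 ≤ det3 (xvec r θ 0) (xvec r θ j) x ∧
        det3 (xvec r θ 0) (xvec r θ (j + 1)) x ≤ 0 := by
      by_contra hcon
      push Not at hcon
      have : ∀ j, j + 2 < m → 0 ≤ det3 (xvec r θ 0) (xvec r θ (j + 1)) x := by
        intro j
        induction j with
        | zero => intro _; exact h1 ⟨0, by omega⟩
        | succ j ih => intro hj; exact (hcon (j + 1) (by omega) (by omega) (ih (by omega))).le
      have h3 := hcon (m - 2) (by omega) (by omega) (by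
        have := this (m - 3) (by omega)
        rwa [show m - 3 + 1 = m - 2 by omega] at this)
      rw [show m - 2 + 1 = m - 1 by omega, det3_neg] at h3
      linarith
    obtain ⟨j, hj1, hjm, ha, hb⟩ := ex
    refine K_of_nn (K_gen 0 (by omega)) (K_gen j (by omega)) (K_gen (j + 1) hjm)
      (h 0 j (j + 1) (by omega) (by omega) hjm) (h1 ⟨j, by omega⟩) ?_ ha
    rw [det3_neg]; linarith

theorem K_closed (hm : 3 ≤ m) (h : Ori m r θ) : IsClosed (Ktheta m r θ) := by
  rw [K_eq hm h]
  apply IsClosed.inter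
  · have : {x | ∀ j : Fin (m - 1), 0 ≤ det3 (xvec r θ j) (xvec r θ (j + 1)) x} =
        ⋂ j : Fin (m - 1), {x | 0 ≤ det3 (xvec r θ j) (xvec r θ (j + 1)) x} := by
      ext x; simp
    show IsClosed {x | ∀ j : Fin (m - 1), 0 ≤ det3 (xvec r θ j) (xvec r θ (j + 1)) x}
    rw [this]
    exact isClosed_iInter fun j => isClosed_le continuous_const (det3_cont _ _)
  · exact isClosed_le continuous_const (det3_cont _ _)

theorem K_proper (hm : 3 ≤ m) (h : Ori m r θ) : IsProperCone (Ktheta m r θ) := by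
  refine ⟨K_closed hm h, fun x hx y hy => K_add hx hy, fun c hc x hx => K_smul hc hx, ?_, ?_⟩
  · ext x
    simp only [Set.mem_inter_iff, Set.mem_neg, Set.mem_singleton_iff]
    constructor
    · rintro ⟨⟨c, hc, hx⟩, ⟨d, hd, hy⟩⟩
      have e1 := congrFun hx 2
      have e2 := congrFun hy 2
      rw [K_two] at e1 e2
      have s1 : 0 ≤ ∑ j, c j := Finset.sum_nonneg fun j _ => hc j
      have s2 : 0 ≤ ∑ j, d j := Finset.sum_nonneg fun j _ => hd j
      simp only [Pi.neg_apply] at e2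
      have s0 : ∑ j, c j = 0 := by linarith
      rw [Finset.sum_eq_zero_iff_of_nonneg fun j _ => hc j] at s0
      rw [hx]
      exact Finset.sum_eq_zero fun j hj => by rw [s0 j hj, zero_smul]
    · rintro rfl
      simp [K_zero]
  · exact ⟨_, int_tri (K_gen 0 (by omega)) (K_gen 1 (by omega)) (K_gen 2 (by omega))
      (h 0 1 2 (by omega) (by omega) (by omega)) one_pos one_pos one_pos⟩

/-- A supporting functional exposing exactly the `i`-th ray. -/
theorem expose (hm : 3 ≤ m) (h : Ori m r θ) (i : Fin m) : ∃ u v u' v' : Fin 3 → ℝ,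
    det3 u v (xvec r θ i) + det3 u' v' (xvec r θ i) = 0 ∧
    ∀ k : Fin m, k ≠ i → 0 < det3 u v (xvec r θ k) + det3 u' v' (xvec r θ k) := by
  obtain ⟨i, hi⟩ := i
  rcases Nat.eq_zero_or_pos i with h0 | h0
  · subst h0
    refine ⟨xvec r θ (m - 1), xvec r θ 0, xvec r θ 0, xvec r θ (0 + 1), ?_, ?_⟩
    · simp [det3_left, det3_right]
    · rintro ⟨k, hk⟩ hne
      have hne : k ≠ 0 := by simpa using hne
      rcases eq_or_ne k 1 with h1 | h1
      · exact add_pos_of_pos_of_nonneg (last_pos h k (by omega) (by omega))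
          (face_nonneg h 0 (by omega) k hk)
      · exact add_pos_of_nonneg_of_pos (last_nonneg h k hk)
          (face_pos h 0 (by omega) k hk hne h1)
  · obtain ⟨i, rfl⟩ : ∃ n, i = n + 1 := ⟨i - 1, by omega⟩
    rcases Nat.lt_or_ge (i + 2) m with h1 | h1
    · refine ⟨xvec r θ i, xvec r θ (i + 1), xvec r θ (i + 1), xvec r θ (i + 1 + 1), ?_, ?_⟩
      · simp [det3_left, det3_right]
      · rintro ⟨k, hk⟩ hne
        have hne : k ≠ i + 1 := by simpa using hne
        rcases eq_or_ne k i with h2 | h2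
        · exact add_pos_of_nonneg_of_pos (face_nonneg h i (by omega) k hk)
            (face_pos h (i + 1) (by omega) k hk hne (by omega))
        · exact add_pos_of_pos_of_nonneg (face_pos h i (by omega) k hk h2 hne)
            (face_nonneg h (i + 1) (by omega) k hk)
    · have hmi : m - 1 = i + 1 := by omega
      refine ⟨xvec r θ i, xvec r θ (i + 1), xvec r θ (m - 1), xvec r θ 0, ?_, ?_⟩
      · simp [hmi, det3_left, det3_right]
      · rintro ⟨k, hk⟩ hne
        have hne : k ≠ i + 1 := by simpa using hne
        rcases eq_or_ne k i with h2 | h2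
        · exact add_pos_of_nonneg_of_pos (face_nonneg h i (by omega) k hk)
            (last_pos h k (by omega) (by omega))
        · exact add_pos_of_pos_of_nonneg (face_pos h i (by omega) k hk h2 hne)
            (last_nonneg h k hk)

theorem nonprop (hm : 3 ≤ m) (h : Ori m r θ) (i j : Fin m) (hij : i ≠ j) (c : ℝ) :
    xvec r θ j.val ≠ c • xvec r θ i.val := by
  intro e
  obtain ⟨u, v, u', v', h0, h1⟩ := expose hm h i
  have := h1 j hij.symm
  rw [e, det3_smul, det3_smul, ← mul_add, h0] at this
  simp at this

theorem x_ne (k : ℕ) : xvec r θ k ≠ 0 := by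
  intro e
  have := congrFun e 2
  rw [xvec_two] at this
  simp at this

theorem extreme_iff (hm : 3 ≤ m) (h : Ori m r θ) (x : Fin 3 → ℝ) :
    IsExtremeVec (Ktheta m r θ) x ↔ ∃ (j : Fin m) (c : ℝ), 0 < c ∧ x = c • xvec r θ j.val := by
  constructor
  · rintro ⟨⟨c, hc, hx⟩, hx0, hext⟩
    have : ∃ j, c j ≠ 0 := by
      by_contra hcon
      push Not at hcon
      exact hx0 (by rw [hx]; exact Finset.sum_eq_zero fun j _ => by rw [hcon j, zero_smul])
    obtain ⟨j, hj⟩ := this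
    have hj' : 0 < c j := lt_of_le_of_ne (hc j) hj.symm
    have spl : x = c j • xvec r θ j.val + ∑ k ∈ Finset.univ.erase j, c k • xvec r θ k.val := by
      rw [hx, Finset.add_sum_erase _ (fun k => c k • xvec r θ k.val) (Finset.mem_univ j)]
    obtain ⟨⟨a, ha, hax⟩, -⟩ := hext _ (K_smul hj'.le (K_gen j j.2)) _
      (K_sum _ _ fun k _ => K_smul (hc k) (K_gen k k.2)) spl
    have ha0 : a ≠ 0 := by
      rintro rfl
      rw [zero_smul] at hax
      rcases smul_eq_zero.1 hax with h | h
      · exact hj h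
      · exact x_ne _ h
    refine ⟨j, a⁻¹ * c j, by positivity, ?_⟩
    rw [mul_smul, hax, smul_smul, inv_mul_cancel₀ ha0, one_smul]
  · rintro ⟨j, c, hc, rfl⟩
    refine ⟨K_smul hc.le (K_gen j j.2), smul_ne_zero hc.ne' (x_ne _), ?_⟩
    obtain ⟨u, v, u', v', h0, h1⟩ := expose hm h j
    have hnn : ∀ y ∈ Ktheta m r θ, 0 ≤ det3 u v y + det3 u' v' y := by
      rintro y ⟨d, hd, rfl⟩
      rw [det3_sum, det3_sum, ← Finset.sum_add_distrib]
      refine Finset.sum_nonneg fun k _ => ?_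
      rw [← mul_add]
      refine mul_nonneg (hd k) ?_
      by_cases hk : k = j
      · rw [hk, h0]
      · exact (h1 k hk).le
    have hz : ∀ y ∈ Ktheta m r θ, det3 u v y + det3 u' v' y = 0 →
        ∃ a : ℝ, 0 ≤ a ∧ y = a • c • xvec r θ j.val := by
      rintro y ⟨d, hd, rfl⟩ hy
      rw [det3_sum, det3_sum, ← Finset.sum_add_distrib] at hy
      rw [Finset.sum_eq_zero_iff_of_nonneg] at hy
      · refine ⟨d j / c, div_nonneg (hd j) hc.le, ?_⟩
        rw [smul_smul, div_mul_cancel₀ _ hc.ne']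
        apply Finset.sum_eq_single j
        · intro k _ hk
          have := hy k (Finset.mem_univ k)
          rw [← mul_add] at this
          rcases mul_eq_zero.1 this with h | h
          · rw [h, zero_smul]
          · exact absurd h (h1 k hk).ne'
        · simp
      · intro k _
        rw [← mul_add]
        refine mul_nonneg (hd k) ?_
        by_cases hk : k = j
        · rw [hk, h0]
        · exact (h1 k hk).le
    intro y hy z hz' e
    have e1 : det3 u v (y + z) + det3 u' v' (y + z) = 0 := by
      rw [← e, det3_smul, det3_smul, ← mul_add, h0, mul_zero]
    rw [det3_add, det3_add] at e1
    have n1 := hnn y hy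
    have n2 := hnn z hz'
    exact ⟨hz y hy (by linarith), hz z hz' (by linarith)⟩

theorem rays_card (hm : 3 ≤ m) (h : Ori m r θ) : (ExtremeRays (Ktheta m r θ)).ncard = m := by
  let f : Fin m → Set (Fin 3 → ℝ) := fun j => {y | ∃ c : ℝ, 0 ≤ c ∧ y = c • xvec r θ j.val}
  have hf : Function.Injective f := by
    intro i j hij
    by_contra hne
    have : xvec r θ j.val ∈ f i := by
      rw [hij]; exact ⟨1, zero_le_one, by simp⟩
    obtain ⟨c, _, e⟩ := this
    exact nonprop hm h i j hne c e
  have : ExtremeRays (Ktheta m r θ) = f '' Set.univ := by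
    ext R
    simp only [ExtremeRays, Set.mem_ofPred_eq, Set.image_univ, Set.mem_range]
    constructor
    · rintro ⟨x, hx, rfl⟩
      obtain ⟨j, c, hc, rfl⟩ := (extreme_iff hm h x).1 hx
      refine ⟨j, ?_⟩
      ext y
      constructor
      · rintro ⟨a, ha, rfl⟩
        exact ⟨a / c, by positivity, by rw [smul_smul, div_mul_cancel₀ _ hc.ne']⟩
      · rintro ⟨a, ha, rfl⟩
        exact ⟨a * c, by positivity, by rw [smul_smul]⟩
    · rintro ⟨j, rfl⟩
      exact ⟨xvec r θ j.val, (extreme_iff hm h _).2 ⟨j, 1, one_pos, by simp⟩, rfl⟩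
  rw [this, Set.ncard_image_of_injective _ hf, Set.ncard_univ]
  simp

theorem not_int {u v p y : Fin 3 → ℝ} (hnn : ∀ x ∈ Ktheta m r θ, 0 ≤ det3 u v x)
    (hp : 0 < det3 u v p) (hy : det3 u v y = 0) : y ∉ interior (Ktheta m r θ) := by
  intro hi
  have hc : Continuous (fun t : ℝ => y - t • p) := by fun_prop
  have ho : IsOpen ((fun t : ℝ => y - t • p) ⁻¹' interior (Ktheta m r θ)) :=
    isOpen_interior.preimage hc
  obtain ⟨e, he, hb⟩ := Metric.isOpen_iff.1 ho 0 (by simpa using hi)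
  have hmem : e / 2 ∈ Metric.ball (0 : ℝ) e := by
    rw [Metric.mem_ball, Real.dist_eq, sub_zero, abs_of_pos (by positivity)]; linarith
  have := hnn _ (interior_subset (hb hmem))
  have e2 : y - (e / 2) • p = y + (-(e / 2)) • p := by rw [neg_smul, sub_eq_add_neg]
  simp only [e2] at this
  rw [det3_add, det3_smul, hy] at this
  nlinarith

theorem mulVec_sum' (A : Matrix (Fin 3) (Fin 3) ℝ) (c : Fin m → ℝ) (f : Fin m → Fin 3 → ℝ) :
    A.mulVec (∑ j, c j • f j) = ∑ j, c j • A.mulVec (f j) := by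
  have := map_sum (Matrix.mulVecLin A) (fun j => c j • f j) Finset.univ
  simp only [Matrix.mulVecLin_apply] at this
  rw [this]
  simp only [Matrix.mulVec_smul]

theorem pos_of (k : ℕ) (hk : ∀ j < m, xvec r θ (j + k) ∈ interior (Ktheta m r θ)) :
    KPositive (Ktheta m r θ) ((Atheta r θ) ^ k) := by
  rintro x ⟨c, hc, rfl⟩ hx0
  have : ∃ j, c j ≠ 0 := by
    by_contra hcon
    push Not at hcon
    exact hx0 (Finset.sum_eq_zero fun j _ => by rw [hcon j, zero_smul])
  obtain ⟨j, hj⟩ := this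
  have hj' : 0 < c j := lt_of_le_of_ne (hc j) hj.symm
  rw [mulVec_sum', ← Finset.add_sum_erase _ _ (Finset.mem_univ j)]
  simp only [Apow_x]
  apply int_add
  · have ho : IsOpen ((fun z : Fin 3 → ℝ => (c j)⁻¹ • z) ⁻¹' interior (Ktheta m r θ)) :=
      isOpen_interior.preimage (by fun_prop)
    refine interior_maximal ?_ ho ?_
    · intro z hz
      have := K_smul hj'.le (interior_subset hz)
      simpa [smul_smul, mul_inv_cancel₀ hj] using this
    · simpa [smul_smul, inv_mul_cancel₀ hj] using hk j j.2
  · exact K_sum _ _ fun i _ => K_smul (hc i) (interior_subset (hk i i.2))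

theorem nonneg_of (hk : ∀ j < m, xvec r θ (j + 1) ∈ Ktheta m r θ) :
    KNonneg (Ktheta m r θ) (Atheta r θ) := by
  rintro x ⟨c, hc, rfl⟩
  rw [mulVec_sum']
  simp only [A_x]
  exact K_sum _ _ fun i _ => K_smul (hc i) (hk i i.2)

theorem main_exp (hm : 3 ≤ m) (h : Ori m r θ) {a b : ℝ} (ha : 0 < a) (hb : 0 < b)
    (hab : ∀ n, xvec r θ (n + m) = a • xvec r θ n + b • xvec r θ (n + 1)) :
    KPositive (Ktheta m r θ) ((Atheta r θ) ^ (2 * m - 1)) := by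
  have K0 : xvec r θ 0 ∈ Ktheta m r θ := K_gen 0 (by omega)
  have K1 : xvec r θ 1 ∈ Ktheta m r θ := K_gen 1 (by omega)
  have e0 := hab 0
  simp only [zero_add] at e0
  apply pos_of
  intro j hj
  rcases Nat.eq_zero_or_pos j with h0 | h0
  · have e := hab (m - 1)
    rw [show m - 1 + m = j + (2 * m - 1) by omega, show m - 1 + 1 = m by omega, e0] at e
    have : xvec r θ (j + (2 * m - 1)) =
        (b * a) • xvec r θ 0 + (b * b) • xvec r θ 1 + a • xvec r θ (m - 1) := by
      rw [e]; module
    rw [this]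
    exact int_tri K0 K1 (K_gen _ (by omega)) (h _ _ _ (by omega) (by omega) (by omega))
      (by positivity) (by positivity) ha
  · have e : xvec r θ (j + (2 * m - 1)) = (a * a) • xvec r θ (j - 1) + (2 * a * b) • xvec r θ j
        + (b * b) • xvec r θ (j + 1) := by
      have e1 := hab (j - 1 + m)
      rw [show j - 1 + m + 1 = j + m by omega, hab (j - 1), hab j,
        show j - 1 + 1 = j by omega, show j - 1 + m + m = j + (2 * m - 1) by omega] at e1
      rw [e1]; module
    rcases Nat.lt_or_ge (j + 1) m with h1 | h1
    · rw [e]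
      exact int_tri (K_gen _ (by omega)) (K_gen _ (by omega)) (K_gen _ (by omega))
        (h _ _ _ (by omega) (by omega) (by omega))
        (by positivity) (by positivity) (by positivity)
    · rw [show j + 1 = m by omega, e0] at e
      have : xvec r θ (j + (2 * m - 1)) = ((b * b * a) • xvec r θ 0 + (a * a) • xvec r θ (j - 1)
          + (2 * a * b) • xvec r θ j) + (b * b * b) • xvec r θ 1 := by
        rw [e]; module
      rw [this]
      refine int_add (int_tri K0 (K_gen _ (by omega)) (K_gen _ (by omega))
        (h _ _ _ (by omega) (by omega) (by omega))
        (by positivity) (by positivity) (by positivity)) (K_smul (by positivity) K1)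

theorem main_low (hm : 3 ≤ m) (h : Ori m r θ) {a b : ℝ}
    (hab : ∀ n, xvec r θ (n + m) = a • xvec r θ n + b • xvec r θ (n + 1)) (k : ℕ)
    (hk : k < 2 * m - 1) : ¬ KPositive (Ktheta m r θ) ((Atheta r θ) ^ k) := by
  intro hp
  have hi := hp _ (K_gen 0 (by omega)) (x_ne 0)
  rw [Apow_x, zero_add] at hi
  have : ∃ j, j + 1 < m ∧ det3 (xvec r θ j) (xvec r θ (j + 1)) (xvec r θ k) = 0 := by
    rcases Nat.lt_or_ge (k + 1) m with h1 | h1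
    · exact ⟨k, h1, det3_left _ _⟩
    rcases Nat.lt_or_ge k m with h2 | h2
    · refine ⟨k - 1, by omega, ?_⟩
      rw [show k - 1 + 1 = k by omega, det3_right]
    · refine ⟨k - m, by omega, ?_⟩
      have e := hab (k - m)
      rw [show k - m + m = k by omega] at e
      rw [e, det3_add, det3_smul, det3_smul, det3_left, det3_right]; simp
  obtain ⟨j, hj, hz⟩ := this
  obtain ⟨p, hp1, hp2, hp3⟩ : ∃ p, p < m ∧ p ≠ j ∧ p ≠ j + 1 := by
    rcases Nat.eq_zero_or_pos j with h0 | h0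
    · exact ⟨2, by omega, by omega, by omega⟩
    · exact ⟨0, by omega, by omega, by omega⟩
  exact not_int (fun x hx => func_nonneg (fun k hk => face_nonneg h j hj k hk) hx)
    (face_pos h j hj p hp1 hp2 hp3) hz hi

end cone

/-- For `m ≥ 3` and `θ ∈ (2π/m, 2π/(m-1))`, with `r = r_θ` the unique positive real root of
`g_θ`: the vectors `x_1(θ), …, x_m(θ)` are pairwise non-proportional and are, up to positive
multiples, exactly the extreme vectors of `K_θ`; `K_θ ∈ P(m,3)`; `A_θ` is `K_θ`-nonnegative
and `K_θ`-primitive, and `γ(A_θ) = 2m - 1`. -/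
theorem stmt_7 (m : ℕ) (hm : 3 ≤ m) (θ : ℝ)
    (hθ : θ ∈ Set.Ioo (2 * π / (m : ℝ)) (2 * π / ((m : ℝ) - 1)))
    (r : ℝ) (hr0 : 0 < r) (hroot : gpoly m θ r = 0)
    (huniq : ∀ s : ℝ, 0 < s → gpoly m θ s = 0 → s = r) :
    (∀ i j : Fin m, i ≠ j → ∀ c : ℝ, xvec r θ j.val ≠ c • xvec r θ i.val) ∧
    (∀ x : Fin 3 → ℝ, IsExtremeVec (Ktheta m r θ) x ↔
      ∃ (j : Fin m) (c : ℝ), 0 < c ∧ x = c • xvec r θ j.val) ∧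
    MemP m (Ktheta m r θ) ∧
    KNonneg (Ktheta m r θ) (Atheta r θ) ∧
    KPrimitive (Ktheta m r θ) (Atheta r θ) ∧
    expnt (Ktheta m r θ) (Atheta r θ) = 2 * m - 1 := by
  have h : Ori m r θ := fun i j k hij hjk hk => O_pos m hm θ hθ r hr0 hroot i j k hij hjk hk
  obtain ⟨a, b, ha, hb, hab⟩ := rel m hm θ hθ r hr0 hroot
  have e0 := hab 0
  simp only [zero_add] at e0
  have hnn : KNonneg (Ktheta m r θ) (Atheta r θ) := by
    apply nonneg_of
    intro j hj
    rcases Nat.lt_or_ge (j + 1) m with h1 | h1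
    · exact K_gen _ h1
    · rw [show j + 1 = m by omega, e0]
      exact K_add (K_smul ha.le (K_gen 0 (by omega))) (K_smul hb.le (K_gen 1 (by omega)))
  have hpos := main_exp hm h ha hb hab
  refine ⟨fun i j hij c => nonprop hm h i j hij c, extreme_iff hm h,
    ⟨⟨K_proper hm h, m, _, rfl⟩, rays_card hm h⟩, hnn, ⟨hnn, 2 * m - 1, by omega, hpos⟩, ?_⟩
  have hmem : 2 * m - 1 ∈ {k : ℕ | 0 < k ∧ KPositive (Ktheta m r θ) ((Atheta r θ) ^ k)} :=
    ⟨by omega, hpos⟩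
  refine le_antisymm (Nat.sInf_le hmem) ?_
  refine le_csInf ⟨_, hmem⟩ ?_
  rintro k ⟨_, hk⟩
  by_contra hlt
  exact main_low hm h hab k (by omega) hk
end
end
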